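/- arXiv:1812.03435 — 2 statements merged into one kernel-verified Lean document; each statement's English description precedes it below -/
import Mathlib

section
/- Let S be a simple N-module. The following conditions are equivalent: (1) there exists t ∈ ℤ_+ such that the actions of L_i and G_{i−1/2} on S are locally finite for all i ≥ t; (2) there exists t ∈ ℤ_+ such that the actions of L_i and G_{i−1/2} on S are locally nilpotent for all i ≥ t; (3) there exists t ∈ ℤ_+ such that S is a locally finite m^(t)-module; (4) there exists t ∈ ℤ_+ such that S is a locally nilpotent m^(t)-module; (5) S is a highest weight module, or there exist ℓ ∈ ℂ, t ∈ ℤ_+ and a simple b-module V such that the action of L_t on V is injective, L_i V = 0 for all i > t, and S ≅ Ind_ℓ(V). -/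
/-- A module over the Neveu–Schwarz algebra. `L m` is the action of `L_m`,
`G j` is the action of `G_{j - 1/2”}`, `C` is the action of the central element `c`. -/
structure NSRep : Type 1 where
  carrier : Type
  [isAddCommGroup : AddCommGroup carrier]
  [isModule : Module ℂ carrier]
  L : ℤ → carrier →ₗ[ℂ] carrier
  G : ℤ → carrier →ₗ[ℂ] carrier
  C : carrier →ₗ[ℂ] carrier
  commC_L : ∀ (m : ℤ) (v : carrier), C (L m v) = L m (C v)
  commC_G : ∀ (j : ℤ) (v : carrier), C (G j v) = G j (C v)
  rel_LL : ∀ (m n : ℤ) (v : carrier),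
    L m (L n v) - L n (L m v)
      = ((m : ℂ) - n) • L (m + n) v
        + (if m + n = 0 then ((m : ℂ) ^ 3 - m) / 12 else 0) • C v
  rel_LG : ∀ (m j : ℤ) (v : carrier),
    L m (G j v) - G j (L m v) = (((m : ℂ) - 2 * j + 1) / 2) • G (m + j) v
  rel_GG : ∀ (j k : ℤ) (v : carrier),
    G j (G k v) + G k (G j v)
      = (2 : ℂ) • L (j + k - 1) v
        + (if j + k = 1 then ((j : ℂ) ^ 2 - j) / 3 else 0) • C v

attribute [instance] NSRep.isAddCommGroup NSRep.isModule

def NSRep.Invariant (M : NSRep) (p : Submodule ℂ M.carrier) : Prop :=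
  (∀ (m : ℤ), ∀ v ∈ p, M.L m v ∈ p) ∧ (∀ (j : ℤ), ∀ v ∈ p, M.G j v ∈ p) ∧
    (∀ v ∈ p, M.C v ∈ p)

def NSRep.IsSimple (M : NSRep) : Prop :=
  (∃ v : M.carrier, v ≠ 0) ∧
    ∀ p : Submodule ℂ M.carrier, M.Invariant p → p = ⊥ ∨ p = ⊤

def NSRep.IsRestricted (M : NSRep) : Prop :=
  ∀ v : M.carrier, ∃ N : ℤ, ∀ i : ℤ, N ≤ i → M.L i v = 0 ∧ M.G i v = 0

def NSRep.HasCentralCharge (M : NSRep) (ℓ : ℂ) : Prop :=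
  ∀ v : M.carrier, M.C v = ℓ • v

/-- A module over the subalgebra `b = ⊕_{i ≥ 0} ℂ L_i ⊕ ⊕_{i ≥ 1} ℂ G_{i-1/2}`.
`L i` is the action of `L_i` and `G j` is the action of `G_{j + 1/2}`. -/
structure BRep : Type 1 where
  carrier : Type
  [isAddCommGroup : AddCommGroup carrier]
  [isModule : Module ℂ carrier]
  L : ℕ → carrier →ₗ[ℂ] carrier
  G : ℕ → carrier →ₗ[ℂ] carrier
  rel_LL : ∀ (m n : ℕ) (v : carrier),
    L m (L n v) - L n (L m v) = ((m : ℂ) - n) • L (m + n) v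
  rel_LG : ∀ (m j : ℕ) (v : carrier),
    L m (G j v) - G j (L m v) = (((m : ℂ) - 2 * j - 1) / 2) • G (m + j) v
  rel_GG : ∀ (j k : ℕ) (v : carrier),
    G j (G k v) + G k (G j v) = (2 : ℂ) • L (j + k + 1) v

attribute [instance] BRep.isAddCommGroup BRep.isModule

def BRep.Invariant (V : BRep) (p : Submodule ℂ V.carrier) : Prop :=
  (∀ (i : ℕ), ∀ v ∈ p, V.L i v ∈ p) ∧ (∀ (j : ℕ), ∀ v ∈ p, V.G j v ∈ p)

def BRep.IsSimple (V : BRep) : Prop :=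
  (∃ v : V.carrier, v ≠ 0) ∧
    ∀ p : Submodule ℂ V.carrier, V.Invariant p → p = ⊥ ∨ p = ⊤

/-- `ι` is a homomorphism of `b`-modules from the `b`-module `V` to the restriction
of the Neveu–Schwarz module `M` to `b` (under which `BRep.G j = G_{j+1/2}`
corresponds to `NSRep.G (j+1)`). -/
def IsBLinear (V : BRep) (M : NSRep) (ι : V.carrier →ₗ[ℂ] M.carrier) : Prop :=
  (∀ (i : ℕ) (v : V.carrier), ι (V.L i v) = M.L (i : ℤ) (ι v)) ∧
    (∀ (j : ℕ) (v : V.carrier), ι (V.G j v) = M.G ((j : ℤ) + 1) (ι v))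

def IsNSHom (M W : NSRep) (F : M.carrier →ₗ[ℂ] W.carrier) : Prop :=
  (∀ (m : ℤ) (v : M.carrier), F (M.L m v) = W.L m (F v)) ∧
    (∀ (j : ℤ) (v : M.carrier), F (M.G j v) = W.G j (F v)) ∧
    (∀ v : M.carrier, F (M.C v) = W.C (F v))

/-- `M`, together with the `b`-module map `ι : V → M`, is the induced module
`Ind_ℓ(V) = U(N) ⊗_{U(b)} V / (c - ℓ)`, characterized by its universal property. -/
def IsInduced (ℓ : ℂ) (V : BRep) (M : NSRep) (ι : V.carrier →ₗ[ℂ] M.carrier) : Prop :=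
  IsBLinear V M ι ∧ M.HasCentralCharge ℓ ∧
    ∀ W : NSRep, W.HasCentralCharge ℓ →
      ∀ f : V.carrier →ₗ[ℂ] W.carrier, IsBLinear V W f →
        ∃! F : M.carrier →ₗ[ℂ] W.carrier, IsNSHom M W F ∧ F.comp ι = f

/-- The module `M` is generated by the vector `v`. -/
def NSRep.GeneratedBy (M : NSRep) (v : M.carrier) : Prop :=
  ∀ p : Submodule ℂ M.carrier, M.Invariant p → v ∈ p → p = ⊤

/-- `M` is a highest weight module over the Neveu–Schwarz algebra: it is generated by a
nonzero vector `v` with `L_0 v = h v`, `c v = ℓ v` and `N_+ v = 0` (recall `N_+` is spanned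
by the `L_n`, `n > 0`, and the `G_{j - 1/2}`, `j ≥ 1`). -/
def NSRep.IsHighestWeight (M : NSRep) : Prop :=
  ∃ (v : M.carrier) (h ℓ : ℂ), v ≠ 0 ∧ M.L 0 v = h • v ∧ M.C v = ℓ • v ∧
    (∀ n : ℤ, 0 < n → M.L n v = 0) ∧ (∀ j : ℤ, 1 ≤ j → M.G j v = 0) ∧
    M.GeneratedBy v

/-- The action of `f` is locally nilpotent: every `v` is killed by some positive power. -/
def LocallyNilpotentEnd {α : Type} [AddCommGroup α] [Module ℂ α] (f : α →ₗ[ℂ] α) : Prop :=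
  ∀ v : α, ∃ n : ℕ, 0 < n ∧ ((f : Module.End ℂ α) ^ n) v = 0

/-- The action of `f` is locally finite: for every `v`, the span of `{fⁿ v : n ∈ ℤ_+}` is
finite dimensional. -/
def LocallyFiniteEnd {α : Type} [AddCommGroup α] [Module ℂ α] (f : α →ₗ[ℂ] α) : Prop :=
  ∀ v : α, FiniteDimensional ℂ
    (Submodule.span ℂ {w : α | ∃ n : ℕ, 0 < n ∧ w = ((f : Module.End ℂ α) ^ n) v})

/-- The set of operators on `M` by which the subalgebra
`m^{(t)} = ⊕_{m>t} ℂ L_m ⊕ ⊕_{m>t} ℂ G_{m-1/2}` acts. -/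
def NSRep.mOps (M : NSRep) (t : ℕ) : Set (M.carrier →ₗ[ℂ] M.carrier) :=
  {f | ∃ m : ℤ, (t : ℤ) < m ∧ (f = M.L m ∨ f = M.G m)}

/-- `S` is a locally finite `m^{(t)}`-module: for every `v`, the span of all vectors obtained
by applying a nonempty finite sequence of operators from `m^{(t)}` to `v` (that is,
`∑_{n ∈ ℤ_+} (m^{(t)})ⁿ v`) is finite dimensional. -/
def NSRep.MLocallyFinite (M : NSRep) (t : ℕ) : Prop :=
  ∀ v : M.carrier, FiniteDimensional ℂ (Submodule.span ℂ
    {w : M.carrier | ∃ ops : List (M.carrier →ₗ[ℂ] M.carrier), ops ≠ [] ∧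
      (∀ f ∈ ops, f ∈ M.mOps t) ∧ w = ops.foldr (fun f x => f x) v})

/-- `S` is a locally nilpotent `m^{(t)}`-module: for every `v` there is `n ∈ ℤ_+` such that
every product of `n` operators from `m^{(t)}` kills `v`. -/
def NSRep.MLocallyNilpotent (M : NSRep) (t : ℕ) : Prop :=
  ∀ v : M.carrier, ∃ n : ℕ, 0 < n ∧
    ∀ ops : List (M.carrier →ₗ[ℂ] M.carrier), ops.length = n →
      (∀ f ∈ ops, f ∈ M.mOps t) → ops.foldr (fun f x => f x) v = 0



/-- Uniform generators: `e (2m) = L_m`, `e (2j-1) = G_{j-1/2}`. -/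
noncomputable def NSRep.e (M : NSRep) (k : ℤ) : M.carrier →ₗ[ℂ] M.carrier :=
  if k % 2 = 0 then M.L (k / 2) else M.G ((k + 1) / 2)

theorem NSRep.e_even (M : NSRep) (m : ℤ) : M.e (2 * m) = M.L m := by
  unfold NSRep.e
  rw [if_pos (by omega)]
  congr 1
  omega

theorem NSRep.e_odd (M : NSRep) (j : ℤ) : M.e (2 * j - 1) = M.G j := by
  unfold NSRep.e
  rw [if_neg (by omega)]
  congr 1
  omega

theorem NSRep.e_C (M : NSRep) (k : ℤ) (v : M.carrier) : M.C (M.e k v) = M.e k (M.C v) := by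
  unfold NSRep.e
  split_ifs
  · exact M.commC_L _ _
  · exact M.commC_G _ _

noncomputable def sgn2 (k l : ℤ) : ℂ := if k % 2 = 0 ∨ l % 2 = 0 then 1 else -1

theorem NSRep.e_rel (M : NSRep) (k l : ℤ) : ∃ a b : ℂ, (k + l ≠ 0 → b = 0) ∧
    (l < 0 → 0 < k → (k + l) % 2 = 0 → 0 ≤ k + l → a ≠ 0) ∧
    (k = 0 → a = - (l : ℂ) / 2) ∧
    (k % 2 = 0 → l % 2 = 0 → a = ((k : ℂ) - l) / 2) ∧
    (k % 2 = 0 → l % 2 = 1 → a = ((k : ℂ) - 2 * l) / 4) ∧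
    ∀ v, M.e k (M.e l v) = sgn2 k l • M.e l (M.e k v) + a • M.e (k + l) v + b • M.C v := by
  rcases Int.even_or_odd' k with ⟨m, hm | hm⟩ <;> rcases Int.even_or_odd' l with ⟨n, hn | hn⟩
  · subst hm hn
    refine ⟨(m : ℂ) - n, if m + n = 0 then ((m : ℂ) ^ 3 - m) / 12 else 0, ?_, ?_, ?_, ?_, ?_, ?_⟩
    · intro h; rw [if_neg (by omega)]
    · intro h1 h2 _ _ h3
      have : m = n := by exact_mod_cast sub_eq_zero.mp h3
      omega
    · intro h
      have : m = 0 := by omega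
      subst this; push_cast; ring
    · intros; push_cast; ring
    · intros; omega
    · intro v
      have h := M.rel_LL m n v
      rw [M.e_even, M.e_even, ← mul_add, M.e_even, sgn2, if_pos (by omega), one_smul, add_assoc, ← h]
      abel
  · obtain ⟨j, rfl⟩ : ∃ j, n = j - 1 := ⟨n + 1, by ring⟩
    have hl : l = 2 * j - 1 := by omega
    clear hn
    subst hm hl
    refine ⟨((m : ℂ) - 2 * j + 1) / 2, 0, ?_, ?_, ?_, ?_, ?_, ?_⟩
    · intro h; rfl
    · intros; omega
    · intro h
      have : m = 0 := by omega
      subst this; push_cast; ring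
    · intros; omega
    · intros; push_cast; ring
    · intro v
      have h := M.rel_LG m j v
      rw [show 2 * m + (2 * j - 1) = 2 * (m + j) - 1 by ring, M.e_even, M.e_odd, M.e_odd, sgn2,
        if_pos (by omega), one_smul, ← h]
      simp
  · obtain ⟨j, rfl⟩ : ∃ j, m = j - 1 := ⟨m + 1, by ring⟩
    have hl : k = 2 * j - 1 := by omega
    clear hm
    subst hn hl
    refine ⟨-(((n : ℂ) - 2 * j + 1) / 2), 0, ?_, ?_, ?_, ?_, ?_, ?_⟩
    · intro h; rfl
    · intros; omega
    · intros; omega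
    · intros; omega
    · intros; omega
    · intro v
      have h := M.rel_LG n j v
      rw [show (2 * j - 1) + 2 * n = 2 * (n + j) - 1 by ring, M.e_even, M.e_odd, M.e_odd, sgn2,
        if_pos (by omega), one_smul, neg_smul, ← h]
      simp
  · obtain ⟨j, rfl⟩ : ∃ j, m = j - 1 := ⟨m + 1, by ring⟩
    have hl : k = 2 * j - 1 := by omega
    obtain ⟨i, rfl⟩ : ∃ i, n = i - 1 := ⟨n + 1, by ring⟩
    have hl : l = 2 * i - 1 := by omega
    clear hm hn
    subst k l
    refine ⟨2, if j + i = 1 then ((j : ℂ) ^ 2 - j) / 3 else 0, ?_, ?_, ?_, ?_, ?_, ?_⟩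
    · intro h; rw [if_neg (by omega)]
    · intros; norm_num
    · intros; omega
    · intros; omega
    · intros; omega
    · intro v
      have h := M.rel_GG j i v
      rw [show (2 * j - 1) + (2 * i - 1) = 2 * (j + i - 1) by ring, M.e_even, M.e_odd, M.e_odd, sgn2,
        if_neg (by omega), add_assoc, ← h]
      simp

/-- abstract one pair lemma -/
theorem pair_lemma {Q : Type*} [AddCommGroup Q] [Module ℂ Q] (x D z : Q →ₗ[ℂ] Q) (c ε : ℂ)
    (hc : c ≠ 0) (hε : ε = 1 ∨ (ε = -1 ∧ ∀ w, x (x w) = 0))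
    (hDx : ∀ w, D (x w) = ε • x (D w) + c • z w)
    (hzx : ∀ w, z (x w) = x (z w)) (hDz : ∀ w, D (z w) = z (D w))
    (U : Submodule ℂ Q) (hzU : ∀ w ∈ U, z w ∈ U) (hinj : ∀ w ∈ U, z w = 0 → w = 0)
    (hDU : ∀ w ∈ U, D w = 0) (P : ℕ → Submodule ℂ Q) (hP0 : P 0 = U)
    (hPs : ∀ n, P (n + 1) = U ⊔ (P n).map x) :
    (∀ n, ∀ w ∈ P n, z w = 0 → w = 0) ∧ (∀ n, ∀ w ∈ P n, D w = 0 → w ∈ U) := by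
  have mem : ∀ n w, w ∈ P (n + 1) ↔ ∃ u ∈ U, ∃ w' ∈ P n, w = u + x w' := by
    intro n w
    rw [hPs, Submodule.mem_sup]
    constructor
    · rintro ⟨u, hu, y, ⟨w', hw', rfl⟩, rfl⟩
      exact ⟨u, hu, w', hw', rfl⟩
    · rintro ⟨u, hu, w', hw', rfl⟩
      exact ⟨u, hu, _, ⟨w', hw', rfl⟩, rfl⟩
  have hUP : ∀ n, U ≤ P n := by
    intro n
    cases n with
    | zero => rw [hP0]
    | succ n => rw [hPs]; exact le_sup_left
  have mono : ∀ n, P n ≤ P (n + 1) := by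
    intro n
    induction n with
    | zero => rw [hP0]; exact hUP 1
    | succ n ih =>
      intro w hw
      obtain ⟨u, hu, w', hw', rfl⟩ := (mem _ _).1 hw
      exact (mem _ _).2 ⟨u, hu, w', ih hw', rfl⟩
  have zP : ∀ n, ∀ w ∈ P n, z w ∈ P n := by
    intro n
    induction n with
    | zero => rw [hP0]; exact hzU
    | succ n ih =>
      intro w hw
      obtain ⟨u, hu, w', hw', rfl⟩ := (mem _ _).1 hw
      exact (mem _ _).2 ⟨z u, hzU _ hu, z w', ih _ hw', by rw [map_add, hzx]⟩
  rcases hε with rfl | ⟨rfl, hsq⟩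
  · simp only [one_smul] at hDx
    have DP : ∀ n, (∀ w ∈ P (n + 1), D w ∈ P n) := by
      intro n
      induction n with
      | zero =>
        intro w hw
        obtain ⟨u, hu, w', hw', rfl⟩ := (mem _ _).1 hw
        rw [hP0] at hw' ⊢
        rw [map_add, hDU _ hu, hDx, hDU _ hw', map_zero, zero_add, zero_add]
        exact U.smul_mem _ (hzU _ hw')
      | succ n ih =>
        intro w hw
        obtain ⟨u, hu, w', hw', rfl⟩ := (mem _ _).1 hw
        rw [map_add, hDU _ hu, hDx, zero_add]
        refine Submodule.add_mem _ ?_ (Submodule.smul_mem _ _ (zP _ _ hw'))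
        exact (mem _ _).2 ⟨0, U.zero_mem, D w', ih _ hw', by rw [zero_add]⟩
    have key : ∀ n, (∀ w ∈ P n, D w = 0 → w ∈ U) ∧ (∀ w ∈ P n, z w = 0 → w = 0) ∧
        (∀ a : ℕ, ∀ w ∈ P n, x (D w) + (c * (a + 1)) • z w = 0 → w = 0) := by
      have fin : ∀ n, (∀ w ∈ P n, z w = 0 → w = 0) → ∀ (a : ℕ) (w : Q), w ∈ P n → D w = 0 →
          x (D w) + (c * (a + 1)) • z w = 0 → w = 0 := by
        intro n hz a w hw hD h
        rw [hD, map_zero, zero_add] at h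
        have : c * ((a : ℂ) + 1) ≠ 0 := mul_ne_zero hc (by exact_mod_cast Nat.succ_ne_zero a)
        exact hz w hw ((smul_eq_zero.1 h).resolve_left this)
      intro n
      induction n with
      | zero =>
        have fin0 := fin 0
        rw [hP0] at fin0 ⊢
        exact ⟨fun w hw _ => hw, hinj, fun a w hw h => fin0 hinj a w hw (hDU _ hw) h⟩
      | succ n ih =>
        obtain ⟨ihC, ihZ, ihE⟩ := ih
        have hC : ∀ w ∈ P (n + 1), D w = 0 → w ∈ U := by
          intro w hw hD
          obtain ⟨u, hu, w', hw', rfl⟩ := (mem _ _).1 hw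
          rw [map_add, hDU _ hu, hDx, zero_add] at hD
          have := ihE 0 w' hw' (by simpa using hD)
          rw [this]; simpa using hu
        have hZ : ∀ w ∈ P (n + 1), z w = 0 → w = 0 := by
          intro w hw h
          have h1 : D w = 0 := ihZ _ (DP n w hw) (by rw [← hDz, h, map_zero])
          exact hinj _ (hC w hw h1) h
        refine ⟨hC, hZ, ?_⟩
        intro a w hw h
        refine fin _ hZ a w hw ?_ h
        apply ihE (a + 1) _ (DP n w hw)
        have := congrArg D h
        rw [map_zero, map_add, hDx, map_smul, hDz, add_assoc, ← add_smul] at this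
        rw [← this]; push_cast; ring_nf
    exact ⟨fun n => (key n).2.1, fun n => (key n).1⟩
  · have form : ∀ n, ∀ w ∈ P n, ∃ u ∈ U, ∃ u' ∈ U, w = u + x u' := by
      intro n
      induction n with
      | zero => rw [hP0]; intro w hw; exact ⟨w, hw, 0, U.zero_mem, by simp⟩
      | succ n ih =>
        intro w hw
        obtain ⟨u, hu, w', hw', rfl⟩ := (mem _ _).1 hw
        obtain ⟨u1, hu1, u2, hu2, rfl⟩ := ih _ hw'
        exact ⟨u, hu, u1, hu1, by rw [map_add, hsq, add_zero]⟩
    have hC : ∀ n, ∀ w ∈ P n, D w = 0 → w ∈ U := by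
      intro n w hw h
      obtain ⟨u, hu, u', hu', rfl⟩ := form n w hw
      rw [map_add, hDU _ hu, hDx, hDU _ hu', map_zero, smul_zero, zero_add, zero_add] at h
      have := hinj _ hu' ((smul_eq_zero.1 h).resolve_left hc)
      rw [this]; simpa using hu
    refine ⟨fun n w hw h => ?_, hC⟩
    have h1 : w ∈ U := by
      obtain ⟨u, hu, u', hu', rfl⟩ := form n w hw
      have h2 := congrArg D h
      rw [hDz, map_add, hDU _ hu, hDx, hDU _ hu', map_zero, smul_zero, zero_add, zero_add, map_zero,
        map_smul] at h2
      have := hinj _ (hzU _ hu') ((smul_eq_zero.1 h2).resolve_left hc)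
      have := hinj _ hu' this
      rw [this]; simpa using hu
    exact hinj _ h1 h

/-- `closure1 x U n = U + x U + ... + x^n U` -/
def closure1 {Q : Type*} [AddCommGroup Q] [Module ℂ Q] (x : Q →ₗ[ℂ] Q) (U : Submodule ℂ Q) :
    ℕ → Submodule ℂ Q
  | 0 => U
  | n + 1 => U ⊔ (closure1 x U n).map x

def closureU {Q : Type*} [AddCommGroup Q] [Module ℂ Q] (x : ℕ → Q →ₗ[ℂ] Q) (U : Submodule ℂ Q) :
    ℕ → Submodule ℂ Q
  | 0 => U
  | n + 1 => ⨆ j, closure1 (x n) (closureU x U n) j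

theorem closure1_mono {Q : Type*} [AddCommGroup Q] [Module ℂ Q] (x : Q →ₗ[ℂ] Q)
    (U : Submodule ℂ Q) : Monotone (closure1 x U) := by
  refine monotone_nat_of_le_succ ?_
  intro n
  induction n with
  | zero => exact le_sup_left
  | succ n ih => exact sup_le_sup le_rfl (Submodule.map_mono ih)

theorem mem_closureU_succ {Q : Type*} [AddCommGroup Q] [Module ℂ Q] (x : ℕ → Q →ₗ[ℂ] Q)
    (U : Submodule ℂ Q) (n : ℕ) (w : Q) :
    w ∈ closureU x U (n + 1) ↔ ∃ j, w ∈ closure1 (x n) (closureU x U n) j :=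
  Submodule.mem_iSup_of_directed _ (closure1_mono _ _).directed_le

theorem closure1_stable {Q : Type*} [AddCommGroup Q] [Module ℂ Q] (x y : Q →ₗ[ℂ] Q) (a : ℂ)
    (U : Submodule ℂ Q) (hU : ∀ w ∈ U, y w ∈ U) (h : ∀ w, y (x w) = a • x (y w)) (n : ℕ) :
    ∀ w ∈ closure1 x U n, y w ∈ closure1 x U n := by
  induction n with
  | zero => exact hU
  | succ n ih =>
    intro w hw
    obtain ⟨u, hu, _, ⟨w', hw', rfl⟩, rfl⟩ := Submodule.mem_sup.1 hw
    rw [map_add, h]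
    exact Submodule.add_mem _ (Submodule.mem_sup_left (hU _ hu))
      (Submodule.smul_mem _ _ (Submodule.mem_sup_right ⟨_, ih _ hw', rfl⟩))

theorem closure1_zero {Q : Type*} [AddCommGroup Q] [Module ℂ Q] (x y : Q →ₗ[ℂ] Q) (a : ℂ)
    (U : Submodule ℂ Q) (hU : ∀ w ∈ U, y w = 0) (h : ∀ w, y (x w) = a • x (y w)) (n : ℕ) :
    ∀ w ∈ closure1 x U n, y w = 0 := by
  induction n with
  | zero => exact hU
  | succ n ih =>
    intro w hw
    obtain ⟨u, hu, _, ⟨w', hw', rfl⟩, rfl⟩ := Submodule.mem_sup.1 hw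
    rw [map_add, h, hU _ hu, ih _ hw']; simp

theorem closureU_mono {Q : Type*} [AddCommGroup Q] [Module ℂ Q] (x : ℕ → Q →ₗ[ℂ] Q)
    (U : Submodule ℂ Q) : Monotone (closureU x U) := by
  refine monotone_nat_of_le_succ ?_
  intro n w hw
  exact (mem_closureU_succ _ _ _ _).2 ⟨0, hw⟩

theorem closureU_x {Q : Type*} [AddCommGroup Q] [Module ℂ Q] (x : ℕ → Q →ₗ[ℂ] Q)
    (ε : ℕ → ℕ → ℂ) (hxx : ∀ k l, k ≠ l → ∀ w, x k (x l w) = ε k l • x l (x k w))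
    (U : Submodule ℂ Q) (n k : ℕ) (hk : k < n) (w : Q) (hw : w ∈ closureU x U n) :
    x k w ∈ closureU x U n := by
  induction n generalizing w with
  | zero => omega
  | succ n ih =>
    obtain ⟨j, hj⟩ := (mem_closureU_succ _ _ _ _).1 hw
    rw [mem_closureU_succ]
    by_cases h : k = n
    · subst h
      exact ⟨j + 1, Submodule.mem_sup_right ⟨_, hj, rfl⟩⟩
    · exact ⟨j, closure1_stable (x n) (x k) (ε k n) _ (fun w hw => ih (by omega) w hw)
        (hxx k n h) j w hj⟩

theorem all_pairs {Q : Type*} [AddCommGroup Q] [Module ℂ Q] (x D : ℕ → Q →ₗ[ℂ] Q)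
    (z : Q →ₗ[ℂ] Q) (c : ℕ → ℂ) (ε : ℕ → ℕ → ℂ)
    (hc : ∀ k, c k ≠ 0) (hε : ∀ k, ε k k = 1 ∨ (ε k k = -1 ∧ ∀ w, x k (x k w) = 0))
    (hDx : ∀ k w, D k (x k w) = ε k k • x k (D k w) + c k • z w)
    (hDx' : ∀ k l, k ≠ l → ∀ w, D k (x l w) = ε k l • x l (D k w))
    (hzx : ∀ k w, z (x k w) = x k (z w)) (hDz : ∀ k w, D k (z w) = z (D k w))
    (U : Submodule ℂ Q) (hzU : ∀ w ∈ U, z w ∈ U) (hinj : ∀ w ∈ U, z w = 0 → w = 0)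
    (hDU : ∀ k, ∀ w ∈ U, D k w = 0) (n : ℕ) (w : Q) (hw : w ∈ closureU x U n)
    (hD : ∀ k, D k w = 0) : w ∈ U := by
  have hz : ∀ n, ∀ w ∈ closureU x U n, z w ∈ closureU x U n := by
    intro n
    induction n with
    | zero => exact hzU
    | succ n ih =>
      intro w hw
      rw [mem_closureU_succ] at hw ⊢
      obtain ⟨j, hj⟩ := hw
      exact ⟨j, closure1_stable (x n) z 1 _ ih (by simpa using hzx n) j w hj⟩
  have hDn : ∀ n, ∀ k, n ≤ k → ∀ w ∈ closureU x U n, D k w = 0 := by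
    intro n
    induction n with
    | zero => intro k _; exact hDU k
    | succ n ih =>
      intro k hk w hw
      rw [mem_closureU_succ] at hw
      obtain ⟨j, hj⟩ := hw
      exact closure1_zero (x n) (D k) (ε k n) _ (ih k (by omega)) (hDx' k n (by omega)) j w hj
  have hin : ∀ n, ∀ w ∈ closureU x U n, z w = 0 → w = 0 := by
    intro n
    induction n with
    | zero => exact hinj
    | succ n ih =>
      intro w hw
      rw [mem_closureU_succ] at hw
      obtain ⟨j, hj⟩ := hw
      exact (pair_lemma (x n) (D n) z (c n) (ε n n) (hc n) (hε n) (hDx n) (hzx n) (hDz n)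
        _ (hz n) ih (hDn n n le_rfl) _ rfl (fun _ => rfl)).1 j w hj
  induction n with
  | zero => exact hw
  | succ n ih =>
    rw [mem_closureU_succ] at hw
    obtain ⟨j, hj⟩ := hw
    exact ih ((pair_lemma (x n) (D n) z (c n) (ε n n) (hc n) (hε n) (hDx n) (hzx n) (hDz n)
        _ (hz n) (hin n) (hDn n n le_rfl) _ rfl (fun _ => rfl)).2 j w hj (hD n))


inductive FWord (M : NSRep) (V : ℤ → Submodule ℂ M.carrier) (dp : ℤ → ℤ) :
    ℤ → ℤ → M.carrier → Prop
  | base (j : ℤ) (v : M.carrier) (p n : ℤ) (hv : v ∈ V j) (h : 0 < p ∨ (0 = p ∧ j ≤ n)) :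
      FWord M V dp p n v
  | step (p n : ℤ) (w : M.carrier) (k p' n' : ℤ) (hk : 1 ≤ k) (hw : FWord M V dp p n w)
      (h : p + dp (-k) < p' ∨ (p + dp (-k) = p' ∧ n + k + 1 ≤ n')) :
      FWord M V dp p' n' (M.e (-k) w)

structure FD (M : NSRep) where
  V : ℤ → Submodule ℂ M.carrier
  dp : ℤ → ℤ
  T : ℤ
  δ : ℤ
  T_nonneg : 0 ≤ T
  T_even : T % 2 = 0
  δ_nonneg : 0 ≤ δ
  two_le : 2 ≤ T + δ
  dp_add : ∀ a b, dp (a + b) = dp a + dp b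
  dp_mid : ∀ m, 0 ≤ m → m ≤ T → dp m = 0
  dp_neg : ∀ k, 1 ≤ k → 0 ≤ dp (-k)
  V_mono : Monotone V
  V_neg : ∀ j, j < 0 → V j = ⊥
  V_mid : ∀ m, 0 ≤ m → m ≤ T → ∀ j, ∀ v ∈ V j, M.e m v ∈ V (j + δ)
  V_high : ∀ m, T < m → ∀ j, ∀ v ∈ V j, M.e m v = 0
  V_C : ∀ j, ∀ v ∈ V j, M.C v ∈ V j

namespace FD

variable {M : NSRep} (A : FD M)

def s (m : ℤ) : ℤ := if m < 0 then 1 - m else if m ≤ A.T then A.δ else A.δ - 1 - (m - A.T)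

theorem s_neg {m : ℤ} (h : m < 0) : A.s m = 1 - m := if_pos h
theorem s_mid {m : ℤ} (h : 0 ≤ m) (h' : m ≤ A.T) : A.s m = A.δ := by
  unfold s; rw [if_neg (by omega), if_pos h']
theorem s_high {m : ℤ} (h' : A.T < m) : A.s m = A.δ - 1 - (m - A.T) := by
  have := A.T_nonneg
  unfold s; rw [if_neg (by omega), if_neg (by omega)]

theorem dp_zero : A.dp 0 = 0 := A.dp_mid 0 le_rfl A.T_nonneg

def F (p n : ℤ) : Submodule ℂ M.carrier := Submodule.span ℂ {w | FWord M A.V A.dp p n w}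

theorem word_mono {p n p' n' : ℤ} (h : p < p' ∨ (p = p' ∧ n ≤ n')) {w : M.carrier}
    (hw : FWord M A.V A.dp p n w) : FWord M A.V A.dp p' n' w := by
  cases hw with
  | base j _ _ _ hv h' => exact .base j _ _ _ hv (by omega)
  | step p0 n0 w0 k _ _ hk hw h' => exact .step p0 n0 w0 k _ _ hk hw (by omega)

theorem F_mono {p n p' n' : ℤ} (h : p < p' ∨ (p = p' ∧ n ≤ n')) : A.F p n ≤ A.F p' n' :=
  Submodule.span_mono fun _ hw => A.word_mono h hw

theorem V_le_F (j : ℤ) : A.V j ≤ A.F 0 j := fun v hv =>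
  Submodule.subset_span (.base j v 0 j hv (by omega))

theorem F_neg {p n : ℤ} (h : p < 0 ∨ (p = 0 ∧ n < 0)) : A.F p n = ⊥ := by
  rw [F, Submodule.span_eq_bot]
  intro w hw
  induction hw with
  | base j v p n hv h' =>
    have : j < 0 := by omega
    rw [A.V_neg j this] at hv
    exact hv
  | step p n w k p' n' hk hw h' ih =>
    have := A.dp_neg k hk
    rw [ih (by omega), map_zero]

theorem F_negn {p n : ℤ} (h : n < 0) (w : M.carrier) (hw : w ∈ A.F p n) :
    ∃ m, w ∈ A.F (p - 1) m := by
  have hd : Directed (· ≤ ·) (fun m => A.F (p - 1) m) :=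
    Monotone.directed_le (fun a b hab => A.F_mono (by omega))
  rw [← Submodule.mem_iSup_of_directed _ hd]
  revert w
  change A.F p n ≤ _
  rw [F, Submodule.span_le]
  intro w hw
  clear hd
  have key : ∃ m, FWord M A.V A.dp (p - 1) m w ∨ w = 0 := by
    induction hw with
    | base j v p n hv h' =>
      by_cases hp : 0 < p
      · exact ⟨j, .inl (.base j v _ _ hv (by omega))⟩
      · have : j < 0 := by omega
        rw [A.V_neg j this] at hv
        exact ⟨0, .inr hv⟩
    | step p n w k p' n' hk hw h' ih =>
      by_cases hp : p + A.dp (-k) < p'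
      · exact ⟨n + k + 1, .inl (.step p n w k _ _ hk hw (by omega))⟩
      · obtain ⟨m, hm | hm⟩ := ih (by omega)
        · exact ⟨m + k + 1, .inl (.step _ m w k _ _ hk hm (by omega))⟩
        · exact ⟨0, .inr (by rw [hm, map_zero])⟩
  obtain ⟨m, hm | hm⟩ := key
  · exact Submodule.mem_iSup_of_mem m (Submodule.subset_span hm)
  · rw [hm]; exact Submodule.zero_mem _

theorem F_e_neg (k : ℤ) (hk : 1 ≤ k) (p n : ℤ) (w : M.carrier) (hw : w ∈ A.F p n) :
    M.e (-k) w ∈ A.F (p + A.dp (-k)) (n + k + 1) := by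
  change w ∈ (A.F (p + A.dp (-k)) (n + k + 1)).comap (M.e (-k))
  revert w
  change A.F p n ≤ _
  rw [F, Submodule.span_le]
  intro w hw
  change M.e (-k) w ∈ A.F _ _
  exact Submodule.subset_span (FWord.step p n w k _ _ hk hw (by omega))

theorem F_word (p n : ℤ) (w : M.carrier) (hw : FWord M A.V A.dp p n w) :
    M.C w ∈ A.F p n ∧ ∀ m, M.e m w ∈ A.F (p + A.dp m) (n + A.s m) := by
  have hT := A.T_nonneg
  have hδ := A.δ_nonneg
  have h2 := A.two_le
  induction hw with
  | base j v p n hv h =>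
    refine ⟨Submodule.subset_span (.base j _ _ _ (A.V_C j v hv) h), ?_⟩
    intro m
    by_cases h0 : m < 0
    · have hv' : v ∈ A.F p n := Submodule.subset_span (.base j _ _ _ hv h)
      have := A.F_e_neg (-m) (by omega) p n v hv'
      rw [neg_neg] at this
      rw [A.s_neg h0]
      exact A.F_mono (by omega) this
    · by_cases h1 : m ≤ A.T
      · rw [A.s_mid (by omega) h1, A.dp_mid m (by omega) h1]
        exact Submodule.subset_span (.base (j + A.δ) _ _ _ (A.V_mid m (by omega) h1 j v hv) (by omega))
      · rw [A.V_high m (by omega) j v hv]; exact Submodule.zero_mem _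
  | step p n w k p' n' hk hw h ih =>
    obtain ⟨ihC, ihm⟩ := ih
    constructor
    · rw [M.e_C]
      exact A.F_mono h (by simpa [add_assoc] using A.F_e_neg k hk _ _ _ ihC)
    · intro m
      obtain ⟨a, b, hb, -, -, -, -, hrel⟩ := M.e_rel m (-k)
      rw [hrel]
      refine Submodule.add_mem _ (Submodule.add_mem _ (Submodule.smul_mem _ _ ?_)
        (Submodule.smul_mem _ _ ?_)) ?_
      · exact A.F_mono (by omega) (A.F_e_neg k hk _ _ _ (ihm m))
      · have hdp := A.dp_add m (-k)
        refine A.F_mono ?_ (ihm (m + -k))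
        have : A.s (m + -k) ≤ A.s m + k + 1 := by
          unfold s; split_ifs <;> omega
        omega
      · by_cases hmk : m + -k = 0
        · refine Submodule.smul_mem _ _ (A.F_mono ?_ ihC)
          have hdp := A.dp_add m (-k)
          rw [hmk, A.dp_zero] at hdp
          have : 0 ≤ A.s m + k + 1 := by
            unfold s; split_ifs <;> omega
          omega
        · rw [hb hmk, zero_smul]; exact Submodule.zero_mem _

theorem F_C (p n : ℤ) (w : M.carrier) (hw : w ∈ A.F p n) : M.C w ∈ A.F p n := by
  change w ∈ (A.F p n).comap M.C
  revert w
  change A.F p n ≤ _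
  conv_lhs => rw [F]
  rw [Submodule.span_le]
  intro w hw
  exact (A.F_word p n w hw).1

theorem F_e (m p n : ℤ) (w : M.carrier) (hw : w ∈ A.F p n) :
    M.e m w ∈ A.F (p + A.dp m) (n + A.s m) := by
  change w ∈ (A.F (p + A.dp m) (n + A.s m)).comap (M.e m)
  revert w
  change A.F p n ≤ _
  conv_lhs => rw [F]
  rw [Submodule.span_le]
  intro w hw
  exact (A.F_word p n w hw).2 m

/-! The associated graded space. -/

def R : Submodule ℂ (ℤ → ℤ → M.carrier) where
  carrier := {f | ∀ p n, f p n ∈ A.F p n}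
  add_mem' ha hb p n := Submodule.add_mem _ (ha p n) (hb p n)
  zero_mem' p n := Submodule.zero_mem _
  smul_mem' c _ ha p n := Submodule.smul_mem _ c (ha p n)

def I : Submodule ℂ A.R where
  carrier := {f | ∀ p n, f.1 p n ∈ A.F p (n - 1)}
  add_mem' ha hb p n := Submodule.add_mem _ (ha p n) (hb p n)
  zero_mem' p n := Submodule.zero_mem _
  smul_mem' c _ ha p n := Submodule.smul_mem _ c (ha p n)

noncomputable def op (m : ℤ) : A.R →ₗ[ℂ] A.R where
  toFun f := ⟨fun p n => M.e m (f.1 (p - A.dp m) (n - A.s m)), fun p n => by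
    simpa using A.F_e m _ _ _ (f.2 (p - A.dp m) (n - A.s m))⟩
  map_add' f g := by
    ext p n
    exact map_add _ _ _
  map_smul' c f := by
    ext p n
    exact map_smul _ _ _

theorem op_I (m : ℤ) : A.I ≤ A.I.comap (A.op m) := by
  intro f hf p n
  have := A.F_e m _ _ _ (hf (p - A.dp m) (n - A.s m))
  refine A.F_mono ?_ this
  omega

def gr : Type := A.R ⧸ A.I
noncomputable instance : AddCommGroup A.gr := inferInstanceAs (AddCommGroup (A.R ⧸ A.I))
noncomputable instance : Module ℂ A.gr := inferInstanceAs (Module ℂ (A.R ⧸ A.I))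

noncomputable def cls : A.R →ₗ[ℂ] A.gr := A.I.mkQ

theorem cls_surj (q : A.gr) : ∃ f, A.cls f = q := A.I.mkQ_surjective q

theorem cls_eq_zero (f : A.R) : A.cls f = 0 ↔ ∀ p n, f.1 p n ∈ A.F p (n - 1) :=
  Submodule.Quotient.mk_eq_zero A.I

theorem cls_eq (f g : A.R) : A.cls f = A.cls g ↔ ∀ p n, f.1 p n - g.1 p n ∈ A.F p (n - 1) := by
  rw [← sub_eq_zero, ← map_sub, cls_eq_zero]
  rfl

noncomputable def X (m : ℤ) : A.gr →ₗ[ℂ] A.gr := A.I.mapQ A.I (A.op m) (A.op_I m)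

theorem X_cls (m : ℤ) (f : A.R) : A.X m (A.cls f) = A.cls (A.op m f) := rfl

theorem X_rel (k l : ℤ) (h : A.s (k + l) < A.s k + A.s l)
    (h0 : k + l = 0 → 0 < A.s k + A.s l) (q : A.gr) :
    A.X k (A.X l q) = sgn2 k l • A.X l (A.X k q) := by
  obtain ⟨f, rfl⟩ := A.cls_surj q
  rw [X_cls, X_cls, X_cls, X_cls, ← map_smul, cls_eq]
  intro p n
  obtain ⟨a, b, hb, -, -, -, -, hrel⟩ := M.e_rel k l
  change M.e k (M.e l (f.1 (p - A.dp k - A.dp l) (n - A.s k - A.s l))) -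
    sgn2 k l • M.e l (M.e k (f.1 (p - A.dp l - A.dp k) (n - A.s l - A.s k))) ∈ _
  rw [sub_right_comm p, sub_right_comm n, hrel, add_assoc, add_sub_cancel_left]
  have hdp := A.dp_add k l
  refine Submodule.add_mem _ (Submodule.smul_mem _ _ ?_) ?_
  · refine A.F_mono ?_ (A.F_e (k + l) _ _ _ (f.2 _ _))
    omega
  · by_cases hkl : k + l = 0
    · refine Submodule.smul_mem _ _ (A.F_mono ?_ (A.F_C _ _ _ (f.2 _ _)))
      rw [hkl, A.dp_zero] at hdp
      have := h0 hkl
      omega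
    · rw [hb hkl, zero_smul]; exact Submodule.zero_mem _

theorem X_pair (k : ℤ) (hk : 1 ≤ k) : ∃ c : ℂ, c ≠ 0 ∧ ∀ q : A.gr,
    A.X (A.T + k) (A.X (-k) q) = sgn2 (A.T + k) (-k) • A.X (-k) (A.X (A.T + k) q)
      + c • A.X A.T q := by
  have hT := A.T_nonneg
  have hδ := A.δ_nonneg
  have h2 := A.two_le
  have hTe := A.T_even
  obtain ⟨a, b, hb, ha, -, -, -, hrel⟩ := M.e_rel (A.T + k) (-k)
  refine ⟨a, ha (by omega) (by omega) (by omega) (by omega), ?_⟩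
  intro q
  obtain ⟨f, rfl⟩ := A.cls_surj q
  rw [X_cls, X_cls, X_cls, X_cls, X_cls, ← map_smul A.cls, ← map_smul A.cls, ← map_add, cls_eq]
  intro p n
  have hs1 : A.s (A.T + k) = A.δ - 1 - k := by rw [A.s_high (by omega)]; omega
  have hs2 : A.s (-k) = 1 + k := by rw [A.s_neg (by omega)]; omega
  have hs3 : A.s A.T = A.δ := A.s_mid hT le_rfl
  have hdp := A.dp_add (A.T + k) (-k)
  rw [add_neg_cancel_right] at hrel hb hdp
  change M.e (A.T + k) (M.e (-k) (f.1 (p - A.dp (A.T + k) - A.dp (-k))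
      (n - A.s (A.T + k) - A.s (-k)))) -
    (sgn2 (A.T + k) (-k) • M.e (-k) (M.e (A.T + k)
      (f.1 (p - A.dp (-k) - A.dp (A.T + k)) (n - A.s (-k) - A.s (A.T + k))))
      + a • M.e A.T (f.1 (p - A.dp A.T) (n - A.s A.T))) ∈ _
  have e1 : p - A.dp (A.T + k) - A.dp (-k) = p - A.dp A.T := by omega
  have e2 : p - A.dp (-k) - A.dp (A.T + k) = p - A.dp A.T := by omega
  have e3 : n - A.s (A.T + k) - A.s (-k) = n - A.δ := by omega
  have e4 : n - A.s (-k) - A.s (A.T + k) = n - A.δ := by omega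
  rw [e1, e2, e3, e4, hs3, hrel, add_sub_cancel_left]
  by_cases hkl : A.T = 0
  · refine Submodule.smul_mem _ _ (A.F_mono ?_ (A.F_C _ _ _ (f.2 _ _)))
    rw [hkl, A.dp_zero]
    omega
  · rw [hb hkl, zero_smul]; exact Submodule.zero_mem _

/-- degree zero part -/
def U0 : Submodule ℂ A.R where
  carrier := {f | ∀ p n, (p = 0 → f.1 p n ∈ A.V n) ∧ (p ≠ 0 → f.1 p n = 0)}
  add_mem' {a b} ha hb p n := ⟨fun h => Submodule.add_mem _ ((ha p n).1 h) ((hb p n).1 h),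
    fun h => by
      change a.1 p n + b.1 p n = 0
      rw [(ha p n).2 h, (hb p n).2 h, add_zero]⟩
  zero_mem' p n := ⟨fun _ => Submodule.zero_mem _, fun _ => rfl⟩
  smul_mem' c a ha p n := ⟨fun h => Submodule.smul_mem _ _ ((ha p n).1 h), fun h => by
      change c • a.1 p n = 0
      rw [(ha p n).2 h, smul_zero]⟩

noncomputable def U : Submodule ℂ A.gr := A.U0.map A.cls

noncomputable def single (p n : ℤ) (w : M.carrier) (hw : w ∈ A.F p n) : A.R :=
  ⟨fun p' n' => if p' = p ∧ n' = n then w else 0, fun p' n' => by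
    dsimp only
    split_ifs with h
    · rw [h.1, h.2]; exact hw
    · exact Submodule.zero_mem _⟩

noncomputable def x (k : ℕ) : A.gr →ₗ[ℂ] A.gr := A.X (-((k : ℤ) + 1))
noncomputable def D (k : ℕ) : A.gr →ₗ[ℂ] A.gr := A.X (A.T + ((k : ℤ) + 1))

theorem x_rel (k l : ℕ) (q : A.gr) : A.x k (A.x l q) = sgn2 (k + 1) (l + 1) • A.x l (A.x k q) := by
  have h := A.X_rel (-((k : ℤ) + 1)) (-((l : ℤ) + 1)) (by
    unfold s; split_ifs <;> omega) (by omega) q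
  rw [x, x, h]
  congr 1
  unfold sgn2
  simp only [Int.neg_emod_two]

theorem mem_closureU (p n : ℤ) (w : M.carrier) (hw : w ∈ A.F p n) :
    ∃ N, A.cls (A.single p n w hw) ∈ closureU A.x A.U N := by
  have key : w ∈ A.F p n → ∀ hw, ∃ N, A.cls (A.single p n w hw) ∈ closureU A.x A.U N := by
    intro h
    clear hw
    rw [F] at h
    induction h using Submodule.span_induction with
    | mem w h =>
      intro _
      induction h with
      | base j v p n hv h =>
        by_cases hjn : 0 = p ∧ j = n
        · obtain ⟨rfl, rfl⟩ := hjn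
          refine ⟨0, A.single 0 j v (A.V_le_F j hv), ?_, rfl⟩
          intro p' n'
          dsimp only [single]
          split_ifs with h'
          · refine ⟨fun _ => by rw [h'.2]; exact hv, fun h => absurd h'.1 h⟩
          · exact ⟨fun _ => Submodule.zero_mem _, fun _ => rfl⟩
        · refine ⟨0, ?_⟩
          convert Submodule.zero_mem (closureU A.x A.U 0)
          rw [cls_eq_zero]
          intro p' n'
          dsimp only [single]
          split_ifs with h'
          · obtain ⟨rfl, rfl⟩ := h'
            exact Submodule.subset_span (.base j v _ _ hv (by omega))
          · exact Submodule.zero_mem _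
      | step p n w k p' n' hk hw h ih =>
        by_cases hpn : p + A.dp (-k) = p' ∧ n + k + 1 = n'
        · obtain ⟨rfl, rfl⟩ := hpn
          have hwF : w ∈ A.F p n := Submodule.subset_span hw
          obtain ⟨N, hN⟩ := ih hwF
          obtain ⟨k', rfl⟩ : ∃ k' : ℕ, k = (k' : ℤ) + 1 := ⟨(k - 1).toNat, by omega⟩
          refine ⟨max N (k' + 1), ?_⟩
          have h1 := closureU_x A.x (fun k l => sgn2 (k + 1) (l + 1)) (fun k l _ w => A.x_rel k l w)
            A.U (max N (k' + 1)) k' (by omega) _ (closureU_mono _ _ (le_max_left N (k' + 1)) hN)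
          convert h1 using 1
          rw [x, X_cls]
          congr 1
          apply Subtype.ext
          funext p' n'
          change (if _ then _ else _) = M.e _ (if _ then _ else _)
          have hs : A.s (-((k' : ℤ) + 1)) = k' + 1 + 1 := by rw [A.s_neg (by omega)]; omega
          rw [hs]
          by_cases hc : p' = p + A.dp (-((k' : ℤ) + 1)) ∧ n' = n + ((k' : ℤ) + 1) + 1
          · rw [if_pos hc, if_pos (by omega)]
          · rw [if_neg hc, if_neg (by omega), map_zero]
        · refine ⟨0, ?_⟩
          convert Submodule.zero_mem (closureU A.x A.U 0)
          rw [cls_eq_zero]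
          intro p1 n1
          dsimp only [single]
          split_ifs with h'
          · obtain ⟨rfl, rfl⟩ := h'
            exact Submodule.subset_span (FWord.step p n w k _ _ hk hw (by omega))
          · exact Submodule.zero_mem _
    | zero =>
      intro hw
      refine ⟨0, ?_⟩
      convert Submodule.zero_mem (closureU A.x A.U 0)
      rw [cls_eq_zero]
      intro p1 n1
      dsimp only [single]
      split_ifs <;> exact Submodule.zero_mem _
    | add a b ha hb iha ihb =>
      intro hw
      obtain ⟨N, hN⟩ := iha ha
      obtain ⟨N', hN'⟩ := ihb hb
      refine ⟨max N N', ?_⟩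
      convert Submodule.add_mem _ (closureU_mono _ _ (le_max_left N N') hN)
        (closureU_mono _ _ (le_max_right N N') hN')
      rw [← map_add]
      congr 1
      apply Subtype.ext
      funext p' n'
      change (A.single p n (a + b) hw).1 p' n' = (A.single p n a ha).1 p' n' + (A.single p n b hb).1 p' n'
      dsimp only [single]
      split_ifs <;> simp
    | smul c a ha iha =>
      intro hw
      obtain ⟨N, hN⟩ := iha ha
      refine ⟨N, ?_⟩
      convert Submodule.smul_mem _ c hN
      rw [← map_smul]
      congr 1
      apply Subtype.ext
      funext p' n'
      change (A.single p n (c • a) hw).1 p' n' = c • (A.single p n a ha).1 p' n'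
      dsimp only [single]
      split_ifs <;> simp
  exact key hw hw

/-- the main descent step -/
theorem descent
    (hz : ∀ n, ∀ v ∈ A.V n, M.e A.T v ∈ A.F 0 (n + A.δ - 1) → v ∈ A.F 0 (n - 1))
    (p n : ℤ) (w : M.carrier) (hw : w ∈ A.F p n) (hk : ∀ m, A.T < m → M.e m w = 0) :
    (p = 0 → ∃ v ∈ A.V n, w - v ∈ A.F p (n - 1)) ∧ (p ≠ 0 → w ∈ A.F p (n - 1)) := by
  have hT := A.T_nonneg
  have hδ := A.δ_nonneg
  have h2 := A.two_le
  have hTe := A.T_even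
  obtain ⟨N, hN⟩ := A.mem_closureU p n w hw
  have hc : ∀ k : ℕ, ∃ c : ℂ, c ≠ 0 ∧ ∀ q : A.gr,
    A.D k (A.x k q) = sgn2 (k + 1) (k + 1) • A.x k (A.D k q) + c • A.X A.T q := by
    intro k
    obtain ⟨c, hc, h⟩ := A.X_pair ((k : ℤ) + 1) (by omega)
    refine ⟨c, hc, fun q => ?_⟩
    rw [D, x, h]
    congr 2
    unfold sgn2
    simp only [Int.neg_emod_two, Int.add_emod A.T, hTe]
    simp
  choose c hc0 hc using hc
  have res := all_pairs A.x A.D (A.X A.T) c (fun k l => sgn2 (k + 1) (l + 1)) hc0 ?_ hc ?_ ?_ ?_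
    A.U ?_ ?_ ?_ N _ hN ?_
  · obtain ⟨f, hf, hfe⟩ := res
    rw [cls_eq] at hfe
    have h1 := hfe p n
    dsimp only [single] at h1
    rw [if_pos ⟨rfl, rfl⟩] at h1
    refine ⟨fun h => ⟨f.1 p n, (hf p n).1 h, ?_⟩, fun h => ?_⟩
    · rw [← neg_mem_iff, neg_sub]; exact h1
    · rw [(hf p n).2 h, zero_sub, neg_mem_iff] at h1
      exact h1
  · intro k
    by_cases hk : ((k : ℤ) + 1) % 2 = 0
    · left; simp [sgn2, hk]
    · right
      have hs : sgn2 ((k : ℤ) + 1) (k + 1) = -1 := by simp [sgn2, hk]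
      refine ⟨hs, fun q => ?_⟩
      have := A.x_rel k k q
      rw [hs, neg_one_smul] at this
      have h3 : (2 : ℂ) • A.x k (A.x k q) = 0 := by
        rw [two_smul]; nth_rewrite 1 [this]; exact neg_add_cancel _
      exact (smul_eq_zero.1 h3).resolve_left two_ne_zero
  · intro k l hkl q
    have h := A.X_rel (A.T + ((k : ℤ) + 1)) (-((l : ℤ) + 1)) (by
      unfold s; split_ifs <;> omega) (by
      intro h; unfold s; split_ifs <;> omega) q
    rw [D, x, h]
    congr 1
    unfold sgn2
    simp only [Int.neg_emod_two, Int.add_emod A.T, hTe]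
    simp
  · intro k q
    have h := A.X_rel A.T (-((k : ℤ) + 1)) (by
      unfold s; split_ifs <;> omega) (by
      intro h; unfold s; split_ifs <;> omega) q
    rw [x, h]
    simp [sgn2, hTe]
  · intro k q
    have h := A.X_rel (A.T + ((k : ℤ) + 1)) A.T (by
      unfold s; split_ifs <;> omega) (by
      intro h; omega) q
    rw [D, h]
    simp [sgn2, hTe]
  · rintro _ ⟨f, hf, rfl⟩
    rw [X_cls]
    refine ⟨_, ?_, rfl⟩
    intro p n
    change (p = 0 → M.e A.T (f.1 (p - A.dp A.T) (n - A.s A.T)) ∈ _) ∧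
      (p ≠ 0 → M.e A.T (f.1 (p - A.dp A.T) (n - A.s A.T)) = 0)
    rw [A.dp_mid A.T hT le_rfl, A.s_mid hT le_rfl, sub_zero]
    refine ⟨fun h => ?_, fun h => ?_⟩
    · simpa using A.V_mid A.T hT le_rfl _ _ ((hf p (n - A.δ)).1 h)
    · rw [(hf p _).2 h, map_zero]
  · rintro _ ⟨f, hf, rfl⟩ h0
    rw [X_cls, cls_eq_zero] at h0
    rw [cls_eq_zero]
    intro p n
    by_cases hp : p = 0
    · subst hp
      refine hz n _ ((hf 0 n).1 rfl) ?_
      have h1 : M.e A.T (f.1 (0 - A.dp A.T) ((n + A.δ) - A.s A.T)) ∈ _ := h0 0 (n + A.δ)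
      rw [A.dp_mid A.T hT le_rfl, A.s_mid hT le_rfl, sub_zero, add_sub_cancel_right] at h1
      exact h1
    · rw [(hf p n).2 hp]; exact Submodule.zero_mem _
  · rintro k _ ⟨f, hf, rfl⟩
    rw [D, X_cls, cls_eq_zero]
    intro p n
    change M.e _ (f.1 _ _) ∈ _
    by_cases hp : p - A.dp (A.T + ((k : ℤ) + 1)) = 0
    · rw [A.V_high _ (by omega) _ _ ((hf _ _).1 hp)]; exact Submodule.zero_mem _
    · rw [(hf _ _).2 hp, map_zero]; exact Submodule.zero_mem _
  · intro k
    rw [D, X_cls, cls_eq_zero]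
    intro p' n'
    change M.e _ (if _ then _ else _) ∈ _
    split_ifs
    · rw [hk _ (by omega)]; exact Submodule.zero_mem _
    · rw [map_zero]; exact Submodule.zero_mem _

theorem singular_mem
    (hz : ∀ n, ∀ v ∈ A.V n, M.e A.T v ∈ A.F 0 (n + A.δ - 1) → v ∈ A.F 0 (n - 1))
    (p n : ℤ) (w : M.carrier) (hw : w ∈ A.F p n) (hk : ∀ m, A.T < m → M.e m w = 0) :
    ∃ j, w ∈ A.V j := by
  have bot : ∀ w ∈ (⊥ : Submodule ℂ M.carrier), ∃ j, w ∈ A.V j := fun w hw => ⟨0, by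
    rw [(Submodule.mem_bot ℂ).1 hw]; exact Submodule.zero_mem _⟩
  obtain ⟨P, hP⟩ : ∃ P : ℕ, p < P := ⟨(p + 1).toNat, by omega⟩
  induction P generalizing p n w with
  | zero => rw [A.F_neg (by left; exact_mod_cast hP)] at hw; exact bot w hw
  | succ P ihP =>
    obtain ⟨N, hN⟩ : ∃ N : ℕ, n < N := ⟨(n + 1).toNat, by omega⟩
    induction N generalizing n w with
    | zero =>
      obtain ⟨m, hm⟩ := A.F_negn (by exact_mod_cast hN) w hw
      exact ihP _ _ w hm hk (by push_cast at hP; omega)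
    | succ N ihN =>
      obtain ⟨h1, h2⟩ := A.descent hz p n w hw hk
      by_cases hp : p = 0
      · obtain ⟨v, hv, hv'⟩ := h1 hp
        obtain ⟨j, hj⟩ := ihN (n - 1) (w - v) hv' (by
          intro m hm
          rw [map_sub, hk m hm, A.V_high m hm n v hv, sub_zero]) (by push_cast at hN; omega)
        refine ⟨max j n, ?_⟩
        have := Submodule.add_mem _ (A.V_mono (le_max_left j n) hj) (A.V_mono (le_max_right j n) hv)
        simpa using this
      · exact ihN (n - 1) w (h2 hp) hk (by push_cast at hN; omega)

end FD


theorem NSRep.L_eq (M : NSRep) (m : ℤ) : M.L m = M.e (2 * m) := (M.e_even m).symm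
theorem NSRep.G_eq (M : NSRep) (m : ℤ) : M.G m = M.e (2 * m - 1) := (M.e_odd m).symm

theorem NSRep.inv_of_e (M : NSRep) (p : Submodule ℂ M.carrier)
    (h : ∀ m, ∀ v ∈ p, M.e m v ∈ p) (hC : ∀ v ∈ p, M.C v ∈ p) : M.Invariant p :=
  ⟨fun m v hv => by rw [M.L_eq]; exact h _ v hv, fun m v hv => by rw [M.G_eq]; exact h _ v hv, hC⟩

theorem NSRep.Invariant.e_mem {M : NSRep} {p : Submodule ℂ M.carrier} (h : M.Invariant p)
    (m : ℤ) (v : M.carrier) (hv : v ∈ p) : M.e m v ∈ p := by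
  unfold NSRep.e
  split_ifs
  · exact h.1 _ v hv
  · exact h.2.1 _ v hv

def NSRep.K (M : NSRep) (n : ℤ) : Submodule ℂ M.carrier where
  carrier := {w | ∀ m, n < m → M.e m w = 0}
  add_mem' ha hb m hm := by rw [map_add, ha m hm, hb m hm, add_zero]
  zero_mem' m _ := map_zero _
  smul_mem' c _ ha m hm := by rw [map_smul, ha m hm, smul_zero]

theorem NSRep.mem_K (M : NSRep) (n : ℤ) (w : M.carrier) :
    w ∈ M.K n ↔ ∀ m, n < m → M.e m w = 0 := Iff.rfl

theorem NSRep.K_mono (M : NSRep) : Monotone M.K := fun _ _ h _ hw m hm => hw m (by omega)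

theorem NSRep.K_C (M : NSRep) (n : ℤ) (w : M.carrier) (hw : w ∈ M.K n) : M.C w ∈ M.K n := by
  intro m hm
  rw [← M.e_C, hw m hm, map_zero]

theorem NSRep.K_e (M : NSRep) (n : ℤ) (hn : 0 ≤ n) (j : ℤ) (hj : 0 ≤ j) (w : M.carrier)
    (hw : w ∈ M.K n) : M.e j w ∈ M.K n := by
  intro m hm
  obtain ⟨a, b, hb, -, -, -, -, h⟩ := M.e_rel m j
  rw [h, hw m hm, hw (m + j) (by omega), hb (by omega)]
  simp

namespace FD

variable {M : NSRep} (A : FD M)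

def tot : Submodule ℂ M.carrier where
  carrier := {w | ∃ p n, w ∈ A.F p n}
  add_mem' := by
    rintro a b ⟨p, n, ha⟩ ⟨p', n', hb⟩
    exact ⟨max p p' + 1, 0, Submodule.add_mem _ (A.F_mono (by omega) ha) (A.F_mono (by omega) hb)⟩
  zero_mem' := ⟨0, 0, Submodule.zero_mem _⟩
  smul_mem' := by
    rintro c a ⟨p, n, ha⟩
    exact ⟨p, n, Submodule.smul_mem _ _ ha⟩

theorem tot_inv : M.Invariant A.tot := by
  refine M.inv_of_e _ ?_ ?_
  · rintro m v ⟨p, n, h⟩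
    exact ⟨_, _, A.F_e m p n v h⟩
  · rintro v ⟨p, n, h⟩
    exact ⟨_, _, A.F_C p n v h⟩

def tot0 : Submodule ℂ M.carrier where
  carrier := {w | ∃ n, w ∈ A.F 0 n}
  add_mem' := by
    rintro a b ⟨n, ha⟩ ⟨n', hb⟩
    exact ⟨max n n', Submodule.add_mem _ (A.F_mono (by omega) ha) (A.F_mono (by omega) hb)⟩
  zero_mem' := ⟨0, Submodule.zero_mem _⟩
  smul_mem' := by
    rintro c a ⟨n, ha⟩
    exact ⟨n, Submodule.smul_mem _ _ ha⟩

theorem tot0_inv (h0 : ∀ m, A.dp m = 0) : M.Invariant A.tot0 := by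
  refine M.inv_of_e _ ?_ ?_
  · rintro m v ⟨n, h⟩
    have := A.F_e m 0 n v h
    rw [h0, add_zero] at this
    exact ⟨_, this⟩
  · rintro v ⟨n, h⟩
    exact ⟨_, A.F_C 0 n v h⟩

/-- constant filtration -/
noncomputable def const (M : NSRep) (T : ℤ) (hT : 2 ≤ T) (hTe : T % 2 = 0)
    (W : Submodule ℂ M.carrier) (hW : W ≤ M.K T)
    (he : ∀ m, 0 ≤ m → m ≤ T → ∀ v ∈ W, M.e m v ∈ W) (hC : ∀ v ∈ W, M.C v ∈ W) : FD M where
  V j := if 0 ≤ j then W else ⊥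
  dp _ := 0
  T := T
  δ := 0
  T_nonneg := by omega
  T_even := hTe
  δ_nonneg := le_rfl
  two_le := by omega
  dp_add _ _ := rfl
  dp_mid _ _ _ := rfl
  dp_neg _ _ := le_rfl
  V_mono a b h := by
    dsimp only
    split_ifs
    · exact le_rfl
    · omega
    · exact bot_le
    · exact le_rfl
  V_neg j hj := if_neg (by omega)
  V_mid m h0 hm j v hv := by
    rw [add_zero]
    split_ifs at hv ⊢
    · exact he m h0 hm v hv
    · rw [(Submodule.mem_bot ℂ).1 hv, map_zero]; exact Submodule.zero_mem _
  V_high m hm j v hv := by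
    split_ifs at hv
    · exact hW hv m hm
    · rw [(Submodule.mem_bot ℂ).1 hv, map_zero]
  V_C j v hv := by
    split_ifs at hv ⊢
    · exact hC v hv
    · rw [(Submodule.mem_bot ℂ).1 hv, map_zero]; exact Submodule.zero_mem _

end FD

theorem simple_top {S : NSRep} (hS : S.IsSimple) (p : Submodule ℂ S.carrier) (hp : S.Invariant p)
    (v : S.carrier) (hv : v ≠ 0) (hvp : v ∈ p) : p = ⊤ := by
  rcases hS.2 p hp with h | h
  · rw [h] at hvp; exact absurd hvp hv
  · exact h

theorem FD.foldr_mem {M : NSRep} (A : FD M) (h0 : ∀ m, A.dp m = 0) (hδ : A.δ = 0)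
    (ops : List (M.carrier →ₗ[ℂ] M.carrier))
    (hops : ∀ f ∈ ops, ∃ m, A.T < m ∧ f = M.e m) (n : ℤ) (v : M.carrier) (hv : v ∈ A.F 0 n) :
    ops.foldr (fun f x => f x) v ∈ A.F 0 (n - ops.length) := by
  induction ops with
  | nil => simpa using hv
  | cons f ops ih =>
    obtain ⟨m, hm, rfl⟩ := hops f (by simp)
    have := A.F_e m _ _ _ (ih (fun f hf => hops f (by simp [hf])))
    rw [List.foldr_cons]
    refine A.F_mono ?_ this
    rw [A.s_high hm, h0, hδ]
    have hl : ((M.e m :: ops).length : ℤ) = ops.length + 1 := by simp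
    rw [hl]
    omega

theorem foldr_zero' {α : Type} [AddCommGroup α] [Module ℂ α] (ops : List (α →ₗ[ℂ] α)) :
    ops.foldr (fun f x => f x) 0 = 0 := by
  induction ops with
  | nil => rfl
  | cons f ops ih => rw [List.foldr_cons, ih, map_zero]

theorem FD.foldr_finite {M : NSRep} (A : FD M) (h0 : ∀ m, A.dp m = 0) (hδ : A.δ = 0)
    (N : ℕ) (n : ℤ) (hn : n < N) (v : M.carrier) (hv : v ∈ A.F 0 n) :
    {w | ∃ ops : List (M.carrier →ₗ[ℂ] M.carrier),
      (∀ f ∈ ops, ∃ m, A.T < m ∧ f = M.e m) ∧ w = ops.foldr (fun f x => f x) v}.Finite := by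
  induction N generalizing n v with
  | zero =>
    rw [A.F_neg (Or.inr ⟨rfl, by exact_mod_cast hn⟩), Submodule.mem_bot] at hv
    refine (Set.finite_singleton (0 : M.carrier)).subset ?_
    rintro w ⟨ops, -, rfl⟩
    rw [hv, foldr_zero']; rfl
  | succ N ih =>
    have h1 : ∀ m, A.T < m → M.e m v ∈ A.F 0 (n - 1 - (m - A.T)) := by
      intro m hm
      have := A.F_e m _ _ _ hv
      rw [A.s_high hm, h0, hδ] at this
      exact A.F_mono (by omega) this
    have hf : (({v} : Set M.carrier) ∪ {0} ∪ ⋃ m ∈ Finset.Ioc A.T (A.T + n),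
      {w | ∃ ops : List (M.carrier →ₗ[ℂ] M.carrier),
      (∀ f ∈ ops, ∃ m, A.T < m ∧ f = M.e m) ∧ w = ops.foldr (fun f x => f x) (M.e m v)}).Finite := by
      refine Set.Finite.union (Set.Finite.union (Set.finite_singleton _) (Set.finite_singleton _)) ?_
      refine Set.Finite.biUnion (Finset.finite_toSet _) ?_
      intro m hm
      have hm' := Finset.mem_Ioc.1 hm
      exact ih _ (by push_cast at hn; omega) _ (h1 m hm'.1)
    refine hf.subset ?_
    rintro w ⟨ops, hops, rfl⟩
    rcases List.eq_nil_or_concat ops with rfl | ⟨ops', f, rfl⟩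
    · exact Or.inl (Or.inl rfl)
    · obtain ⟨m, hm, rfl⟩ := hops f (by simp)
      rw [List.concat_eq_append, List.foldr_append]
      change ops'.foldr _ (M.e m v) ∈ _
      by_cases hmn : m ≤ A.T + n
      · refine Or.inr ?_
        rw [Set.mem_iUnion₂]
        exact ⟨m, Finset.mem_Ioc.2 ⟨hm, hmn⟩, ops', fun f hf => hops f (by simp [hf]), rfl⟩
      · have h2 := h1 m hm
        rw [A.F_neg (Or.inr ⟨rfl, by omega⟩), Submodule.mem_bot] at h2
        rw [h2, foldr_zero']
        exact Or.inl (Or.inr rfl)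

def NSRep.HasSing (S : NSRep) : Prop := ∃ v : S.carrier, v ≠ 0 ∧ ∃ N : ℤ, ∀ m, N ≤ m → S.e m v = 0

theorem R_to_34 {S : NSRep} (hS : S.IsSimple) (h : S.HasSing) :
    ∃ t : ℕ, 0 < t ∧ S.MLocallyFinite t ∧ S.MLocallyNilpotent t := by
  obtain ⟨v, hv, N, hN⟩ := h
  obtain ⟨t, ht⟩ : ∃ t : ℕ, N ≤ t := ⟨N.toNat, by omega⟩
  refine ⟨t + 1, by omega, ?_⟩
  have hvK : v ∈ S.K (2 * ((t + 1 : ℕ) : ℤ)) := fun m hm => hN m (by push_cast at hm; omega)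
  set A := FD.const S (2 * ((t + 1 : ℕ) : ℤ)) (by omega) (by omega) (S.K _) le_rfl
    (fun m hm _ v hv => S.K_e _ (by omega) m hm v hv) (fun v hv => S.K_C _ v hv) with hA
  have hAT : A.T = 2 * ((t + 1 : ℕ) : ℤ) := rfl
  have h0 : ∀ m, A.dp m = 0 := fun m => rfl
  have hδ : A.δ = 0 := rfl
  have htop : A.tot0 = ⊤ := by
    refine simple_top hS _ (A.tot0_inv h0) v hv ⟨0, A.V_le_F 0 ?_⟩
    change v ∈ if (0 : ℤ) ≤ 0 then S.K (2 * ((t + 1 : ℕ) : ℤ)) else ⊥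
    rw [if_pos le_rfl]
    exact hvK
  have hall : ∀ w : S.carrier, ∃ n, w ∈ A.F 0 n := by
    intro w
    have : w ∈ A.tot0 := by rw [htop]; trivial
    exact this
  have hops : ∀ f ∈ S.mOps (t + 1), ∃ m, A.T < m ∧ f = S.e m := by
    rintro f ⟨m, hm, rfl | rfl⟩
    · exact ⟨2 * m, by rw [hAT]; omega, S.L_eq m⟩
    · exact ⟨2 * m - 1, by rw [hAT]; omega, S.G_eq m⟩
  constructor
  · intro w
    obtain ⟨n, hn⟩ := hall w
    have := A.foldr_finite h0 hδ (n + 1).toNat n (by omega) w hn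
    refine FiniteDimensional.span_of_finite ℂ (this.subset ?_)
    rintro x ⟨ops, -, h, rfl⟩
    exact ⟨ops, fun f hf => hops f (h f hf), rfl⟩
  · intro w
    obtain ⟨n, hn⟩ := hall w
    refine ⟨n.toNat + 1, by omega, ?_⟩
    intro ops hl ho
    have := A.foldr_mem h0 hδ ops (fun f hf => hops f (ho f hf)) n w hn
    rw [A.F_neg (Or.inr ⟨rfl, by omega⟩), Submodule.mem_bot] at this
    exact this

theorem foldr_replicate {α : Type} [AddCommGroup α] [Module ℂ α] (f : α →ₗ[ℂ] α) (n : ℕ) (v : α) :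
    (List.replicate n f).foldr (fun f x => f x) v = ((f : Module.End ℂ α) ^ n) v := by
  induction n with
  | zero => rfl
  | succ n ih =>
    rw [List.replicate_succ, List.foldr_cons, ih, pow_succ', Module.End.mul_apply]

theorem c4_to_2 (S : NSRep) (h : ∃ t : ℕ, 0 < t ∧ S.MLocallyNilpotent t) :
    ∃ t : ℕ, 0 < t ∧ ∀ i : ℤ, (t : ℤ) ≤ i →
          LocallyNilpotentEnd (S.L i) ∧ LocallyNilpotentEnd (S.G i) := by
  obtain ⟨t, ht, h⟩ := h
  refine ⟨t + 1, by omega, ?_⟩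
  intro i hi
  constructor
  all_goals
    intro v
    obtain ⟨n, hn, h'⟩ := h v
    refine ⟨n, hn, ?_⟩
    rw [← foldr_replicate]
    refine h' _ (by simp) ?_
    intro f hf
    rw [List.eq_of_mem_replicate hf]
    exact ⟨i, by push_cast at hi; omega, by simp⟩

theorem locnil_locfin {α : Type} [AddCommGroup α] [Module ℂ α] (f : α →ₗ[ℂ] α)
    (h : LocallyNilpotentEnd f) : LocallyFiniteEnd f := by
  intro v
  obtain ⟨n, hn, h⟩ := h v
  refine FiniteDimensional.span_of_finite ℂ (((Finset.range n).finite_toSet.image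
    (fun k => ((f : Module.End ℂ α) ^ k) v) |>.union (Set.finite_singleton 0)).subset ?_)
  rintro w ⟨k, -, rfl⟩
  by_cases hk : k < n
  · left; exact ⟨k, by simpa using hk, rfl⟩
  · right
    obtain ⟨j, rfl⟩ := Nat.exists_eq_add_of_le' (not_lt.1 hk)
    rw [pow_add, Module.End.mul_apply, h, map_zero]; rfl

theorem c2_to_1 (S : NSRep) (h : ∃ t : ℕ, 0 < t ∧ ∀ i : ℤ, (t : ℤ) ≤ i →
          LocallyNilpotentEnd (S.L i) ∧ LocallyNilpotentEnd (S.G i)) :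
    ∃ t : ℕ, 0 < t ∧ ∀ i : ℤ, (t : ℤ) ≤ i →
          LocallyFiniteEnd (S.L i) ∧ LocallyFiniteEnd (S.G i) := by
  obtain ⟨t, ht, h⟩ := h
  exact ⟨t, ht, fun i hi => ⟨locnil_locfin _ (h i hi).1, locnil_locfin _ (h i hi).2⟩⟩

theorem c3_to_1 (S : NSRep) (h : ∃ t : ℕ, 0 < t ∧ S.MLocallyFinite t) :
    ∃ t : ℕ, 0 < t ∧ ∀ i : ℤ, (t : ℤ) ≤ i →
          LocallyFiniteEnd (S.L i) ∧ LocallyFiniteEnd (S.G i) := by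
  obtain ⟨t, ht, h⟩ := h
  refine ⟨t + 1, by omega, ?_⟩
  intro i hi
  constructor
  all_goals
    intro v
    have := h v
    refine Submodule.finiteDimensional_of_le (Submodule.span_mono (t := {w : S.carrier | ∃ ops : List (S.carrier →ₗ[ℂ] S.carrier), ops ≠ [] ∧
      (∀ f ∈ ops, f ∈ S.mOps t) ∧ w = ops.foldr (fun f x => f x) v}) ?_)
    rintro w ⟨n, hn, rfl⟩
    rw [← foldr_replicate]
    refine ⟨_, ?_, ?_, rfl⟩
    · simp; omega
    intro f hf
    rw [List.eq_of_mem_replicate hf]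
    exact ⟨i, by push_cast at hi; omega, by simp⟩


open Polynomial in
theorem poly_eig {α : Type} [AddCommGroup α] [Module ℂ α] (f : Module.End ℂ α) (v : α) (hv : v ≠ 0)
    (p : ℂ[X]) (hp : p ≠ 0) (h : aeval f p v = 0) :
    ∃ (q : ℂ[X]) (c : ℂ), aeval f q v ≠ 0 ∧ f (aeval f q v) = c • aeval f q v := by
  obtain ⟨n, hn⟩ : ∃ n, p.natDegree = n := ⟨_, rfl⟩
  induction n using Nat.strong_induction_on generalizing p with
  | _ n ih =>
    by_cases hd : p.degree = 0
    · rw [eq_C_of_degree_eq_zero hd, aeval_C] at h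
      rw [eq_C_of_degree_eq_zero hd] at hp
      have : p.coeff 0 • v = 0 := h
      rcases smul_eq_zero.1 this with h1 | h1
      · rw [h1] at hp; simp at hp
      · exact absurd h1 hv
    · obtain ⟨c, hc⟩ := Complex.exists_root (f := p) (by
        rw [Polynomial.degree_eq_natDegree hp] at hd ⊢
        have : p.natDegree ≠ 0 := by simpa using hd
        exact_mod_cast Nat.pos_of_ne_zero this)
      obtain ⟨q, rfl⟩ := dvd_iff_isRoot.2 hc
      have hq : q ≠ 0 := right_ne_zero_of_mul hp
      by_cases hqv : aeval f q v = 0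
      · refine ih q.natDegree ?_ q hq hqv rfl
        rw [natDegree_mul (X_sub_C_ne_zero c) hq, natDegree_X_sub_C] at hn
        omega
      · refine ⟨q, c, hqv, ?_⟩
        rw [map_mul, Module.End.mul_apply, map_sub, aeval_X, aeval_C, LinearMap.sub_apply,
          sub_eq_zero] at h
        exact h

open Polynomial in
theorem locfin_poly {α : Type} [AddCommGroup α] [Module ℂ α] (f : α →ₗ[ℂ] α)
    (hf : LocallyFiniteEnd f) (v : α) :
    ∃ p : ℂ[X], p ≠ 0 ∧ aeval (f : Module.End ℂ α) p v = 0 := by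
  have := hf v
  set W := Submodule.span ℂ {w : α | ∃ n : ℕ, 0 < n ∧ w = ((f : Module.End ℂ α) ^ n) v} with hW
  have hmem : ∀ p : ℂ[X], aeval (f : Module.End ℂ α) (X * p) v ∈ W := by
    intro p
    induction p using Polynomial.induction_on' with
    | add p q hp hq => rw [mul_add, map_add]; exact Submodule.add_mem _ hp hq
    | monomial n a =>
      rw [← C_mul_X_pow_eq_monomial, mul_left_comm, ← pow_succ', map_mul, aeval_C, map_pow, aeval_X]
      exact Submodule.smul_mem _ a (Submodule.subset_span ⟨n + 1, by omega, rfl⟩)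
  let g : ℂ[X] →ₗ[ℂ] W :=
    { toFun := fun p => ⟨aeval (f : Module.End ℂ α) (X * p) v, hmem p⟩
      map_add' := fun p q => by
        apply Subtype.ext
        change aeval (f : Module.End ℂ α) (X * (p + q)) v = _ + _
        rw [mul_add, map_add]; rfl
      map_smul' := fun c p => by
        apply Subtype.ext
        change aeval (f : Module.End ℂ α) (X * (c • p)) v = c • _
        rw [mul_smul_comm, map_smul]; rfl }
  by_contra! hcon
  have hinj : Function.Injective g := by
    rw [← LinearMap.ker_eq_bot, LinearMap.ker_eq_bot']
    intro p hp
    by_contra hp0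
    refine hcon (X * p) (mul_ne_zero X_ne_zero hp0) ?_
    exact congrArg Subtype.val hp
  have := FiniteDimensional.of_injective g hinj
  exact Polynomial.not_finite (R := ℂ) this

theorem locfin_eig {α : Type} [AddCommGroup α] [Module ℂ α] (f : α →ₗ[ℂ] α)
    (hf : LocallyFiniteEnd f) (v : α) (hv : v ≠ 0) :
    ∃ (w : α) (c : ℂ), w ≠ 0 ∧ f w = c • w := by
  obtain ⟨p, hp, h⟩ := locfin_poly f hf v
  obtain ⟨q, c, h1, h2⟩ := poly_eig f v hv p hp h
  exact ⟨_, c, h1, h2⟩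

theorem NSRep.count_span {S : NSRep} (hS : S.IsSimple) : Module.rank ℂ S.carrier ≤ Cardinal.aleph0 := by
  obtain ⟨v, hv⟩ := hS.1
  let op : Option ℤ → S.carrier →ₗ[ℂ] S.carrier := fun o => o.elim S.C S.e
  let wd : List (Option ℤ) → S.carrier := fun l => l.foldr (fun o x => op o x) v
  have hst : ∀ o, ∀ w ∈ Submodule.span ℂ (Set.range wd), op o w ∈ Submodule.span ℂ (Set.range wd) := by
    intro o
    change Submodule.span ℂ (Set.range wd) ≤ (Submodule.span ℂ (Set.range wd)).comap (op o)
    rw [Submodule.span_le]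
    rintro _ ⟨l, rfl⟩
    exact Submodule.subset_span ⟨o :: l, rfl⟩
  have htop : Submodule.span ℂ (Set.range wd) = ⊤ :=
    simple_top hS _ (S.inv_of_e _ (fun m => hst (some m)) (hst none)) v hv
      (Submodule.subset_span ⟨[], rfl⟩)
  rw [← rank_top, ← htop]
  refine (rank_span_le _).trans ?_
  exact Cardinal.mk_le_aleph0_iff.2 (Set.countable_range wd).to_subtype

open Polynomial in
theorem NSRep_dixmier {S : NSRep} (hS : S.IsSimple) : ∃ c : ℂ, S.HasCentralCharge c := by
  by_contra! hcon
  obtain ⟨v, hv⟩ := hS.1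
  have noeig : ∀ c : ℂ, ∀ w, S.C w = c • w → w = 0 := by
    intro c w hw
    by_contra hw0
    refine hcon c ?_
    have htop : LinearMap.ker (S.C - c • LinearMap.id) = ⊤ := by
      refine simple_top hS _ (S.inv_of_e _ ?_ ?_) w hw0 ?_
      · intro m x hx
        simp only [LinearMap.mem_ker, LinearMap.sub_apply, LinearMap.smul_apply, LinearMap.id_apply] at hx ⊢
        rw [S.e_C, ← map_smul, ← map_sub, hx, map_zero]
      · intro x hx
        simp only [LinearMap.mem_ker, LinearMap.sub_apply, LinearMap.smul_apply, LinearMap.id_apply] at hx ⊢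
        rw [← map_smul, ← map_sub, hx, map_zero]
      · simp [hw]
    intro x
    have hx : x ∈ LinearMap.ker (S.C - c • LinearMap.id) := by rw [htop]; trivial
    simpa [sub_eq_zero] using hx
  have surj : ∀ c : ℂ, ∃ u, S.C u - c • u = v := by
    intro c
    have htop : LinearMap.range (S.C - c • LinearMap.id) = ⊤ := by
      refine simple_top hS _ (S.inv_of_e _ ?_ ?_) (S.C v - c • v) ?_ ⟨v, by simp⟩
      · rintro m _ ⟨x, rfl⟩
        exact ⟨S.e m x, by simp [S.e_C]⟩
      · rintro _ ⟨x, rfl⟩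
        exact ⟨S.C x, by simp⟩
      · intro h
        exact hv (noeig c v (sub_eq_zero.1 h))
    have : v ∈ LinearMap.range (S.C - c • LinearMap.id) := by rw [htop]; trivial
    obtain ⟨u, hu⟩ := this
    exact ⟨u, by simpa using hu⟩
  choose u hu using surj
  have nz : ∀ Q : ℂ[X], aeval (S.C : Module.End ℂ S.carrier) Q v = 0 → Q = 0 := by
    intro Q hQ
    by_contra hQ0
    obtain ⟨q, c, h1, h2⟩ := poly_eig S.C v hv Q hQ0 hQ
    exact h1 (noeig c _ h2)
  have hu' : ∀ c : ℂ, ∀ q : ℂ[X], aeval (S.C : Module.End ℂ S.carrier) ((X - C c) * q) (u c)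
      = aeval (S.C : Module.End ℂ S.carrier) q v := by
    intro c q
    rw [mul_comm, map_mul, Module.End.mul_apply, map_sub, aeval_X, aeval_C, LinearMap.sub_apply]
    congr 1
    exact hu c
  have hli : LinearIndependent ℂ u := by
    rw [linearIndependent_iff']
    intro s g hg i hi
    have h1 : aeval (S.C : Module.End ℂ S.carrier) (∑ j ∈ s, g j • ∏ k ∈ s.erase j, (X - C k)) v = 0 := by
      rw [map_sum, LinearMap.sum_apply]
      have h2 := congrArg (aeval (S.C : Module.End ℂ S.carrier) (∏ k ∈ s, (X - C k))) hg
      rw [map_zero, map_sum] at h2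
      rw [← h2]
      refine Finset.sum_congr rfl ?_
      intro j hj
      rw [map_smul, map_smul, LinearMap.smul_apply, ← Finset.mul_prod_erase s _ hj, hu']
    have h2 := congrArg (Polynomial.eval i) (nz _ h1)
    rw [eval_finset_sum, Finset.sum_eq_single i] at h2
    · rw [eval_smul, eval_prod, eval_zero, smul_eq_zero] at h2
      refine h2.resolve_right ?_
      refine Finset.prod_ne_zero_iff.2 ?_
      intro k hk
      rw [eval_sub, eval_X, eval_C, sub_ne_zero]
      exact (Finset.ne_of_mem_erase hk).symm
    · intro j _ hji
      rw [eval_smul, eval_prod, Finset.prod_eq_zero (Finset.mem_erase.2 ⟨hji.symm, hi⟩), smul_zero]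
      simp
    · intro h; exact absurd hi h
  have h3 := hli.cardinal_le_rank.trans (NSRep.count_span hS)
  rw [Cardinal.mk_complex] at h3
  exact absurd h3 (not_le.2 Cardinal.aleph0_lt_continuum)

theorem c5_to_R {S : NSRep} (hS : S.IsSimple) (h : S.IsHighestWeight ∨
          ∃ (ℓ : ℂ) (t : ℕ) (V : BRep) (ι : V.carrier →ₗ[ℂ] S.carrier), 0 < t ∧
            V.IsSimple ∧ Function.Injective (V.L t) ∧
            (∀ i : ℕ, t < i → ∀ v : V.carrier, V.L i v = 0) ∧
            IsInduced ℓ V S ι) : S.HasSing := by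
  rcases h with ⟨v, h, ℓ, hv, -, -, hL, hG, -⟩ | ⟨ℓ, t, V, ι, ht, hV, -, hL, hι, hC, hU⟩
  · refine ⟨v, hv, 1, ?_⟩
    intro m hm
    rcases Int.even_or_odd' m with ⟨k, rfl | rfl⟩
    · rw [S.e_even]; exact hL k (by omega)
    · have : 2 * k + 1 = 2 * (k + 1) - 1 := by ring
      rw [this, S.e_odd]; exact hG _ (by omega)
  · have hne : ∃ v, ι v ≠ 0 := by
      by_contra! h0
      obtain ⟨F, hF, hun⟩ := hU S hC ι hι
      obtain ⟨w, hw⟩ := hS.1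
      have e1 := hun LinearMap.id ⟨⟨fun _ _ => rfl, fun _ _ => rfl, fun _ => rfl⟩, rfl⟩
      have e2 := hun 0 ⟨⟨fun _ _ => by simp, fun _ _ => by simp, fun _ => by simp⟩, by
        ext v; simp [h0]⟩
      have : (LinearMap.id : S.carrier →ₗ[ℂ] S.carrier) w = (0 : S.carrier →ₗ[ℂ] S.carrier) w := by
        rw [e1, e2]
      exact hw this
    obtain ⟨v, hv⟩ := hne
    have hG : ∀ m : ℕ, t < m → V.G m v = 0 := by
      intro m hm
      have := V.rel_LG m 0 v
      rw [hL m hm, hL m hm, map_zero, sub_zero, add_zero] at this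
      refine (smul_eq_zero.1 this.symm).resolve_left ?_
      intro h
      have h2 : (m : ℂ) = ((1 : ℕ) : ℂ) := by
        push_cast at h ⊢
        linear_combination 2 * h
      have := Nat.cast_injective h2
      omega
    refine ⟨ι v, hv, 2 * t + 4, ?_⟩
    intro m hm
    rcases Int.even_or_odd' m with ⟨k, rfl | rfl⟩
    · obtain ⟨k', rfl⟩ : ∃ k' : ℕ, k = k' := ⟨k.toNat, by omega⟩
      rw [S.e_even, ← hι.1, hL _ (by omega), map_zero]
    · obtain ⟨k', rfl⟩ : ∃ k' : ℕ, k = k' := ⟨k.toNat, by omega⟩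
      have : 2 * (k' : ℤ) + 1 = 2 * (k' + 1) - 1 := by ring
      rw [this, S.e_odd, ← hι.2, hG _ (by omega), map_zero]


open Polynomial in
def Dsub (j : ℤ) : Submodule ℂ ℂ[X] where
  carrier := {q | ∀ i : ℕ, j < 2 * (i : ℤ) → q.coeff i = 0}
  add_mem' ha hb i hi := by rw [coeff_add, ha i hi, hb i hi, add_zero]
  zero_mem' i _ := coeff_zero i
  smul_mem' c _ ha i hi := by rw [coeff_smul, ha i hi, smul_zero]

open Polynomial in
noncomputable def PhiX (S : NSRep) (v : S.carrier) : ℂ[X] →ₗ[ℂ] S.carrier where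
  toFun q := aeval (S.L 0 : Module.End ℂ S.carrier) (X * q) v
  map_add' p q := by rw [mul_add, map_add]; rfl
  map_smul' c p := by rw [mul_smul_comm, map_smul]; rfl

open Polynomial in
theorem aeval_L0_K (S : NSRep) (v : S.carrier) (hv : v ∈ S.K 0) (q : ℂ[X]) :
    aeval (S.L 0 : Module.End ℂ S.carrier) q v ∈ S.K 0 := by
  have h0 : ∀ w ∈ S.K 0, S.L 0 w ∈ S.K 0 := by
    intro w hw
    rw [S.L_eq]
    exact S.K_e 0 le_rfl _ (by omega) w hw
  induction q using Polynomial.induction_on' with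
  | add p q hp hq => rw [map_add]; exact Submodule.add_mem _ hp hq
  | monomial n a =>
    rw [← C_mul_X_pow_eq_monomial, map_mul, aeval_C, map_pow, aeval_X]
    refine Submodule.smul_mem _ a ?_
    induction n with
    | zero => exact hv
    | succ n ih => rw [pow_succ', Module.End.mul_apply]; exact h0 _ ih

open Polynomial in
noncomputable def hwFD (S : NSRep) (v : S.carrier) (hv : v ∈ S.K 0) (c : ℂ)
    (hc : S.HasCentralCharge c) : FD S where
  V j := (Dsub j).map (PhiX S v)
  dp m := -m
  T := 0
  δ := 2
  T_nonneg := le_rfl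
  T_even := rfl
  δ_nonneg := by omega
  two_le := by omega
  dp_add a b := by ring
  dp_mid m h h' := by omega
  dp_neg k h := by omega
  V_mono a b h := by
    refine Submodule.map_mono ?_
    intro q hq i hi
    exact hq i (by omega)
  V_neg j hj := by
    rw [eq_bot_iff]
    rintro _ ⟨q, hq, rfl⟩
    have : q = 0 := by
      ext i
      exact hq i (by omega)
    rw [this, map_zero]
    exact Submodule.zero_mem _
  V_mid m h h' j w hw := by
    obtain ⟨q, hq, rfl⟩ := hw
    refine ⟨X * q, ?_, ?_⟩
    · intro i hi
      cases i with
      | zero => simp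
      | succ i => rw [coeff_X_mul]; exact hq i (by push_cast at hi; omega)
    · have : m = 2 * 0 := by omega
      rw [this, S.e_even]
      change aeval (S.L 0 : Module.End ℂ S.carrier) (X * (X * q)) v = S.L 0 (aeval (S.L 0 : Module.End ℂ S.carrier) (X * q) v)
      rw [map_mul _ X, aeval_X]; rfl
  V_high m hm j w hw := by
    obtain ⟨q, hq, rfl⟩ := hw
    exact aeval_L0_K S v hv (X * q) m hm
  V_C j w hw := by
    rw [hc]
    exact Submodule.smul_mem _ _ hw

open Polynomial in
theorem hw_exists {S : NSRep} (hS : S.IsSimple) (v : S.carrier) (hv0 : v ≠ 0) (hv : v ∈ S.K 0) :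
    ∃ (w : S.carrier) (h : ℂ), w ≠ 0 ∧ w ∈ S.K 0 ∧ S.L 0 w = h • w := by
  obtain ⟨c, hc⟩ := NSRep_dixmier hS
  by_contra! hcon
  have nz : ∀ Q : ℂ[X], aeval (S.L 0 : Module.End ℂ S.carrier) Q v = 0 → Q = 0 := by
    intro Q hQ
    by_contra hQ0
    obtain ⟨q, c, h1, h2⟩ := poly_eig (S.L 0) v hv0 Q hQ0 hQ
    exact hcon _ c h1 (aeval_L0_K S v hv q) h2
  have inj : ∀ P Q : ℂ[X], aeval (S.L 0 : Module.End ℂ S.carrier) P v = aeval (S.L 0 : Module.End ℂ S.carrier) Q v → P = Q := by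
    intro P Q h
    rw [← sub_eq_zero]
    apply nz
    rw [map_sub, LinearMap.sub_apply, h, sub_self]
  set A := hwFD S v hv c hc with hA
  have hV : ∀ j, A.V j = (Dsub j).map (PhiX S v) := fun j => rfl
  have hF : ∀ n, A.F 0 n ≤ A.V n := by
    intro n
    rw [FD.F, Submodule.span_le]
    intro w hw
    cases hw with
    | base j _ _ _ hv h' => exact A.V_mono (by omega) hv
    | step p0 n0 w0 k _ _ hk hw h' =>
      have h1 : w0 ∈ A.F p0 n0 := Submodule.subset_span hw
      have h2 : A.dp (-k) = k := neg_neg k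
      rw [A.F_neg (by omega), Submodule.mem_bot] at h1
      rw [h1, map_zero]
      exact Submodule.zero_mem _
  have htop : A.tot = ⊤ := by
    refine simple_top hS _ A.tot_inv (PhiX S v 1) ?_ ⟨0, 0, A.V_le_F 0 ⟨1, ?_, rfl⟩⟩
    · intro h
      have := nz (X * 1) h
      simp at this
    · intro i hi
      rw [coeff_one, if_neg (by omega)]
  have hvt : v ∈ A.tot := by rw [htop]; trivial
  obtain ⟨p, n, hpn⟩ := hvt
  have hz : ∀ n, ∀ v ∈ A.V n, S.e A.T v ∈ A.F 0 (n + A.δ - 1) → v ∈ A.F 0 (n - 1) := by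
    rintro n _ ⟨q, hq, rfl⟩ h
    obtain ⟨r, hr, hr'⟩ := hF _ h
    refine A.V_le_F _ ⟨q, ?_, rfl⟩
    have h1 : X * r = X * (X * q) := by
      apply inj
      refine Eq.trans hr' ?_
      change S.e (2 * 0) (aeval (S.L 0 : Module.End ℂ S.carrier) (X * q) v) = _
      rw [S.e_even, map_mul _ X (X * q), aeval_X]; rfl
    have h2 := mul_left_cancel₀ X_ne_zero h1
    intro i hi
    have h3 := hr (i + 1) (by push_cast; change n + 2 - 1 < _; omega)
    rw [h2, coeff_X_mul] at h3
    exact h3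
  obtain ⟨j, hj⟩ := A.singular_mem hz p n v hpn hv
  obtain ⟨q, -, hq⟩ := hj
  have h1 : X * q = 1 := by
    apply inj
    rw [map_one]
    exact hq
  have := congrArg (fun p => coeff p 0) h1
  simp at this

theorem R5_hw {S : NSRep} (hS : S.IsSimple) (v : S.carrier) (hv0 : v ≠ 0) (hv : v ∈ S.K 0) :
    S.IsHighestWeight := by
  obtain ⟨c, hc⟩ := NSRep_dixmier hS
  obtain ⟨w, h, hw, hwK, hwh⟩ := hw_exists hS v hv0 hv
  refine ⟨w, h, c, hw, hwh, hc w, ?_, ?_, fun p hp hwp => simple_top hS p hp w hw hwp⟩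
  · intro n hn
    rw [S.L_eq]; exact hwK _ (by omega)
  · intro n hn
    rw [S.G_eq]; exact hwK _ (by omega)

theorem FD.const_singular (M : NSRep) (T : ℤ) (hT : 2 ≤ T) (hTe : T % 2 = 0)
    (W : Submodule ℂ M.carrier) (hW : W ≤ M.K T)
    (he : ∀ m, 0 ≤ m → m ≤ T → ∀ v ∈ W, M.e m v ∈ W) (hC : ∀ v ∈ W, M.C v ∈ W)
    (hinj : ∀ v ∈ W, M.e T v = 0 → v = 0) (n : ℤ) (w : M.carrier)
    (hw : w ∈ (FD.const M T hT hTe W hW he hC).F 0 n) (hwK : w ∈ M.K T) : w ∈ W := by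
  set A := FD.const M T hT hTe W hW he hC with hA
  have hV : ∀ j, A.V j = if 0 ≤ j then W else ⊥ := fun j => rfl
  have hz : ∀ n, ∀ v ∈ A.V n, M.e A.T v ∈ A.F 0 (n + A.δ - 1) → v ∈ A.F 0 (n - 1) := by
    intro n v hv h
    rw [hV] at hv
    by_cases h1 : 1 ≤ n
    · apply A.V_le_F
      rw [hV, if_pos (by omega)]
      rwa [if_pos (by omega)] at hv
    · have hδ : A.δ = 0 := rfl
      rw [A.F_neg (by omega), Submodule.mem_bot] at h
      split_ifs at hv
      · rw [hinj v hv h]; exact Submodule.zero_mem _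
      · rw [(Submodule.mem_bot ℂ).1 hv]; exact Submodule.zero_mem _
  obtain ⟨j, hj⟩ := A.singular_mem hz 0 n w hw hwK
  rw [hV] at hj
  split_ifs at hj
  · exact hj
  · rw [(Submodule.mem_bot ℂ).1 hj]; exact Submodule.zero_mem _

theorem FD.const_W_mem (M : NSRep) (T : ℤ) (hT : 2 ≤ T) (hTe : T % 2 = 0)
    (W : Submodule ℂ M.carrier) (hW : W ≤ M.K T)
    (he : ∀ m, 0 ≤ m → m ≤ T → ∀ v ∈ W, M.e m v ∈ W) (hC : ∀ v ∈ W, M.C v ∈ W)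
    (v : M.carrier) (hv : v ∈ W) : v ∈ (FD.const M T hT hTe W hW he hC).tot0 := by
  refine ⟨0, FD.V_le_F _ 0 ?_⟩
  change v ∈ if (0 : ℤ) ≤ 0 then W else ⊥
  rw [if_pos le_rfl]
  exact hv

theorem K_simple {S : NSRep} (hS : S.IsSimple) (T : ℤ) (hT : 2 ≤ T) (hTe : T % 2 = 0)
    (hinj : ∀ v ∈ S.K T, S.e T v = 0 → v = 0)
    (W : Submodule ℂ S.carrier) (hW : W ≤ S.K T)
    (he : ∀ m, 0 ≤ m → m ≤ T → ∀ v ∈ W, S.e m v ∈ W) (v : S.carrier) (hv : v ∈ W) (hv0 : v ≠ 0) :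
    S.K T ≤ W := by
  obtain ⟨c, hc⟩ := NSRep_dixmier hS
  intro w hw
  have hC : ∀ v ∈ W, S.C v ∈ W := fun v hv => by rw [hc]; exact Submodule.smul_mem _ _ hv
  have htop := simple_top hS _ (FD.tot0_inv (FD.const S T hT hTe W hW he hC) (fun m => rfl)) v hv0
    (FD.const_W_mem S T hT hTe W hW he hC v hv)
  have hwt : w ∈ (FD.const S T hT hTe W hW he hC).tot0 := by rw [htop]; trivial
  obtain ⟨n, hn⟩ := hwt
  exact FD.const_singular S T hT hTe W hW he hC (fun v hv => hinj v (hW hv)) n w hn hw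


def NSRep.prod (S W : NSRep) : NSRep where
  carrier := S.carrier × W.carrier
  L m := (S.L m).prodMap (W.L m)
  G m := (S.G m).prodMap (W.G m)
  C := S.C.prodMap W.C
  commC_L m v := Prod.ext (S.commC_L m v.1) (W.commC_L m v.2)
  commC_G m v := Prod.ext (S.commC_G m v.1) (W.commC_G m v.2)
  rel_LL m n v := Prod.ext (S.rel_LL m n v.1) (W.rel_LL m n v.2)
  rel_LG m n v := Prod.ext (S.rel_LG m n v.1) (W.rel_LG m n v.2)
  rel_GG m n v := Prod.ext (S.rel_GG m n v.1) (W.rel_GG m n v.2)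

theorem NSRep.prod_e (S W : NSRep) (m : ℤ) (a : S.carrier) (b : W.carrier) :
    (S.prod W).e m (a, b) = (S.e m a, W.e m b) := by
  unfold NSRep.e
  split_ifs <;> rfl

noncomputable def NSRep.KB (S : NSRep) (T : ℤ) (hT : 0 ≤ T) : BRep where
  carrier := S.K T
  L i := (S.L i).restrict (fun v hv => by rw [S.L_eq]; exact S.K_e T hT _ (by omega) v hv)
  G j := (S.G (j + 1)).restrict (fun v hv => by rw [S.G_eq]; exact S.K_e T hT _ (by omega) v hv)
  rel_LL m n v := by
    apply Subtype.ext
    have := S.rel_LL m n v.1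
    refine Eq.trans this ?_
    have h : (if (m : ℤ) + n = 0 then ((((m : ℤ) : ℂ)) ^ 3 - ((m : ℤ) : ℂ)) / 12 else 0) = 0 := by
      split_ifs with h
      · have : m = 0 := by omega
        subst this; simp
      · rfl
    rw [h, zero_smul, add_zero]
    rfl
  rel_LG m j v := by
    apply Subtype.ext
    have := S.rel_LG m (j + 1) v.1
    refine Eq.trans this ?_
    have h : (((m : ℤ) : ℂ) - 2 * (((j : ℤ) + 1 : ℤ) : ℂ) + 1) / 2 = ((m : ℂ) - 2 * j - 1) / 2 := by
      push_cast; ring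
    rw [h, ← add_assoc]
    rfl
  rel_GG j k v := by
    apply Subtype.ext
    have := S.rel_GG (j + 1) (k + 1) v.1
    refine Eq.trans this ?_
    rw [if_neg (by omega), zero_smul, add_zero]
    have h : (j : ℤ) + 1 + (k + 1) - 1 = ((j + k + 1 : ℕ) : ℤ) := by push_cast; ring
    rw [h]
    rfl

theorem KB_e (S : NSRep) (T : ℤ) (hT : 0 ≤ T) (W : NSRep)
    (f : S.K T →ₗ[ℂ] W.carrier) (hf : IsBLinear (S.KB T hT) W f) (m : ℤ) (hm : 0 ≤ m) (x : S.K T) :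
    f ⟨S.e m x.1, S.K_e T hT m hm x.1 x.2⟩ = W.e m (f x) := by
  rcases Int.even_or_odd' m with ⟨k, rfl | rfl⟩
  · obtain ⟨k', rfl⟩ : ∃ k' : ℕ, k = k' := ⟨k.toNat, by omega⟩
    have := hf.1 k' x
    rw [W.L_eq] at this
    refine Eq.trans (congrArg f (Subtype.ext ?_)) this
    change S.e _ x.1 = S.L _ x.1
    rw [S.e_even]
  · obtain ⟨k', rfl⟩ : ∃ k' : ℕ, k = k' := ⟨k.toNat, by omega⟩
    have := hf.2 k' x
    rw [W.G_eq] at this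
    have h : 2 * ((k' : ℤ) + 1) - 1 = 2 * k' + 1 := by ring
    rw [h] at this
    refine Eq.trans (congrArg f (Subtype.ext ?_)) this
    change S.e _ x.1 = S.G _ x.1
    rw [S.G_eq, h]

theorem KB_univ {S : NSRep} (hS : S.IsSimple) (T : ℤ) (hT : 2 ≤ T) (hTe : T % 2 = 0)
    (hinj : ∀ v ∈ S.K T, S.e T v = 0 → v = 0) (c : ℂ) (hc : S.HasCentralCharge c)
    (v0 : S.carrier) (hv0 : v0 ∈ S.K T) (hv0' : v0 ≠ 0) (W : NSRep) (hW : W.HasCentralCharge c)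
    (f : S.K T →ₗ[ℂ] W.carrier) (hfe : ∀ (m : ℤ) (hm : 0 ≤ m) (x : S.K T),
      f ⟨S.e m x.1, S.K_e T (by omega) m hm x.1 x.2⟩ = W.e m (f x)) :
    ∃! F : S.carrier →ₗ[ℂ] W.carrier, IsNSHom S W F ∧ F.comp (S.K T).subtype = f := by
  let P : Submodule ℂ (S.prod W).carrier := LinearMap.range ((S.K T).subtype.prod f)
  have hPm : ∀ x : S.K T, ((x.1, f x) : (S.prod W).carrier) ∈ P := fun x => ⟨x, rfl⟩
  have hPK : P ≤ (S.prod W).K T := by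
    rintro _ ⟨x, rfl⟩ m hm
    change (S.prod W).e m (x.1, f x) = 0
    rw [NSRep.prod_e, x.2 m hm, ← hfe m (by omega) x]
    have : (⟨S.e m x.1, S.K_e T (by omega) m (by omega) x.1 x.2⟩ : S.K T) = 0 :=
      Subtype.ext (x.2 m hm)
    rw [this, map_zero]; rfl
  have hPe : ∀ m, 0 ≤ m → m ≤ T → ∀ v ∈ P, (S.prod W).e m v ∈ P := by
    rintro m hm - _ ⟨x, rfl⟩
    change (S.prod W).e m (x.1, f x) ∈ P
    rw [NSRep.prod_e, ← hfe m hm x]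
    exact hPm ⟨S.e m x.1, S.K_e T (by omega) m hm x.1 x.2⟩
  have hPC : ∀ v ∈ P, (S.prod W).C v ∈ P := by
    rintro v hv
    have : (S.prod W).C v = c • v := Prod.ext (hc v.1) (hW v.2)
    rw [this]; exact Submodule.smul_mem _ _ hv
  have hPi : ∀ v ∈ P, (S.prod W).e T v = 0 → v = 0 := by
    rintro _ ⟨x, rfl⟩ h
    change (S.prod W).e T (x.1, f x) = 0 at h
    rw [NSRep.prod_e] at h
    have h1 : S.e T x.1 = 0 := congrArg Prod.fst h
    have h2 : x = 0 := Subtype.ext (hinj x.1 x.2 h1)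
    rw [h2]
    exact map_zero ((S.K T).subtype.prod f)
  set A := FD.const (S.prod W) T hT hTe P hPK hPe hPC with hA
  have hsing := FD.const_singular (S.prod W) T hT hTe P hPK hPe hPC hPi
  have hinv := A.tot0_inv (fun m => rfl)
  have hker : ∀ (N : ℕ) (n : ℤ) (z : (S.prod W).carrier), n < N → z ∈ A.F 0 n → z.1 = 0 → z = 0 := by
    intro N
    induction N with
    | zero =>
      intro n z hn hz _
      rw [A.F_neg (Or.inr ⟨rfl, by exact_mod_cast hn⟩)] at hz
      exact hz
    | succ N ih =>
      intro n z hn hz h0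
      obtain ⟨z1, z2⟩ := z
      change z1 = 0 at h0
      subst h0
      have hzK : ((0, z2) : (S.prod W).carrier) ∈ (S.prod W).K T := by
        intro m hm
        refine ih (n - 1 - (m - T)) _ (by push_cast at hn; omega) ?_ ?_
        · have := A.F_e m _ _ _ hz
          rw [A.s_high hm] at this
          refine A.F_mono ?_ this
          right
          refine ⟨rfl, ?_⟩
          change n + (0 - 1 - (m - T)) ≤ _
          omega
        · rw [NSRep.prod_e, map_zero]
      obtain ⟨x, hx⟩ := hsing n _ hz hzK
      have h1 : x.1 = 0 := congrArg Prod.fst hx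
      have h2 : x = 0 := Subtype.ext h1
      rw [← hx, h2]
      exact map_zero ((S.K T).subtype.prod f)
  have hinjG : ∀ z ∈ A.tot0, z.1 = 0 → z = 0 := by
    rintro z ⟨n, hn⟩ h
    exact hker (n + 1).toNat n z (by omega) hn h
  have hWtot : ∀ v ∈ P, v ∈ A.tot0 := FD.const_W_mem (S.prod W) T hT hTe P hPK hPe hPC
  have hsurj : ∀ s : S.carrier, ∃ w : W.carrier, ((s, w) : (S.prod W).carrier) ∈ A.tot0 := by
    have htop : A.tot0.map (LinearMap.fst ℂ S.carrier W.carrier) = ⊤ := by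
      refine simple_top hS _ (S.inv_of_e _ ?_ ?_) v0 hv0' ⟨(v0, f ⟨v0, hv0⟩), hWtot _ (hPm ⟨v0, hv0⟩), rfl⟩
      · rintro m _ ⟨z, hz, rfl⟩
        refine ⟨(S.prod W).e m z, hinv.e_mem m z hz, ?_⟩
        obtain ⟨z1, z2⟩ := z
        rw [NSRep.prod_e]; rfl
      · rintro _ ⟨z, hz, rfl⟩
        exact ⟨(S.prod W).C z, hinv.2.2 z hz, rfl⟩
    intro s
    have : s ∈ A.tot0.map (LinearMap.fst ℂ S.carrier W.carrier) := by rw [htop]; trivial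
    obtain ⟨⟨z1, z2⟩, hz, rfl⟩ := this
    exact ⟨z2, hz⟩
  have huniq : ∀ (s : S.carrier) (w w' : W.carrier), ((s, w) : (S.prod W).carrier) ∈ A.tot0 →
      ((s, w') : (S.prod W).carrier) ∈ A.tot0 → w = w' := by
    intro s w w' h h'
    have := hinjG _ (Submodule.sub_mem _ h h') (sub_self s)
    have h2 : w - w' = 0 := congrArg Prod.snd this
    exact sub_eq_zero.1 h2
  choose F hF using hsurj
  let F' : S.carrier →ₗ[ℂ] W.carrier :=
    { toFun := F
      map_add' := fun a b => huniq (a + b) _ _ (hF _) (Submodule.add_mem _ (hF a) (hF b))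
      map_smul' := fun r a => huniq (r • a) _ _ (hF _) (Submodule.smul_mem _ r (hF a)) }
  have hF' : IsNSHom S W F' := ⟨fun m v => huniq _ _ _ (hF _) (hinv.1 m _ (hF v)),
    fun m v => huniq _ _ _ (hF _) (hinv.2.1 m _ (hF v)),
    fun v => huniq _ _ _ (hF _) (hinv.2.2 _ (hF v))⟩
  have hF'f : F'.comp (S.K T).subtype = f := by
    ext x
    exact huniq _ _ _ (hF _) (hWtot _ (hPm x))
  refine ⟨F', ⟨hF', hF'f⟩, ?_⟩
  rintro H ⟨hH, hHf⟩
  have htop : LinearMap.ker (H - F') = ⊤ := by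
    refine simple_top hS _ ⟨?_, ?_, ?_⟩ v0 hv0' ?_
    · intro m v hv
      rw [LinearMap.mem_ker, LinearMap.sub_apply, sub_eq_zero] at hv ⊢
      rw [hH.1, hF'.1, hv]
    · intro m v hv
      rw [LinearMap.mem_ker, LinearMap.sub_apply, sub_eq_zero] at hv ⊢
      rw [hH.2.1, hF'.2.1, hv]
    · intro v hv
      rw [LinearMap.mem_ker, LinearMap.sub_apply, sub_eq_zero] at hv ⊢
      rw [hH.2.2, hF'.2.2, hv]
    · rw [LinearMap.mem_ker, LinearMap.sub_apply, sub_eq_zero]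
      have h1 : (H.comp (S.K T).subtype) ⟨v0, hv0⟩ = (F'.comp (S.K T).subtype) ⟨v0, hv0⟩ := by
        rw [hF'f]
        exact congrArg (fun g : S.K T →ₗ[ℂ] W.carrier => g ⟨v0, hv0⟩) hHf
      exact h1
  rw [LinearMap.ker_eq_top, sub_eq_zero] at htop
  exact htop

theorem KB_induced {S : NSRep} (hS : S.IsSimple) (T : ℤ) (hT : 2 ≤ T) (hTe : T % 2 = 0)
    (hinj : ∀ v ∈ S.K T, S.e T v = 0 → v = 0) (c : ℂ) (hc : S.HasCentralCharge c)
    (v0 : S.carrier) (hv0 : v0 ∈ S.K T) (hv0' : v0 ≠ 0) :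
    IsInduced c (S.KB T (by omega)) S (S.K T).subtype := by
  refine ⟨⟨fun i v => rfl, fun j v => rfl⟩, hc, ?_⟩
  intro W hW f hf
  exact KB_univ hS T hT hTe hinj c hc v0 hv0 hv0' W hW f (KB_e S T (by omega) W f hf)

theorem KB_isSimple {S : NSRep} (hS : S.IsSimple) (T : ℤ) (hT : 2 ≤ T) (hTe : T % 2 = 0)
    (hinj : ∀ v ∈ S.K T, S.e T v = 0 → v = 0)
    (v0 : S.carrier) (hv0 : v0 ∈ S.K T) (hv0' : v0 ≠ 0) : (S.KB T (by omega)).IsSimple := by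
  refine ⟨⟨(⟨v0, hv0⟩ : S.K T), fun h => hv0' (congrArg Subtype.val h)⟩, ?_⟩
  intro p hp
  by_cases hpb : p = ⊥
  · exact Or.inl hpb
  right
  obtain ⟨x, hxp, hx0⟩ := Submodule.exists_mem_ne_zero_of_ne_bot hpb
  let p' : Submodule ℂ (S.K T) := p
  have hle : S.K T ≤ p'.map (S.K T).subtype := by
    refine K_simple hS T hT hTe hinj _ ?_ ?_ (x : S.K T).1 ⟨x, hxp, rfl⟩ (fun h => hx0 (Subtype.ext h))
    · rintro _ ⟨y, hy, rfl⟩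
      exact y.2
    · rintro m hm - _ ⟨y, hy, rfl⟩
      rcases Int.even_or_odd' m with ⟨k, rfl | rfl⟩
      · obtain ⟨k', rfl⟩ : ∃ k' : ℕ, k = k' := ⟨k.toNat, by omega⟩
        refine ⟨_, hp.1 k' y hy, ?_⟩
        rw [S.e_even]; rfl
      · obtain ⟨k', rfl⟩ : ∃ k' : ℕ, k = k' := ⟨k.toNat, by omega⟩
        refine ⟨_, hp.2 k' y hy, ?_⟩
        have h : 2 * (k' : ℤ) + 1 = 2 * ((k' : ℤ) + 1) - 1 := by ring
        rw [h, S.e_odd]; rfl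
  rw [eq_top_iff]
  intro y _
  obtain ⟨z, hz, hzy⟩ := hle (y : S.K T).2
  have : z = y := Subtype.ext hzy
  rw [← this]; exact hz

theorem R_to_5 {S : NSRep} (hS : S.IsSimple) (h : S.HasSing) : S.IsHighestWeight ∨
          ∃ (ℓ : ℂ) (t : ℕ) (V : BRep) (ι : V.carrier →ₗ[ℂ] S.carrier), 0 < t ∧
            V.IsSimple ∧ Function.Injective (V.L t) ∧
            (∀ i : ℕ, t < i → ∀ v : V.carrier, V.L i v = 0) ∧
            IsInduced ℓ V S ι := by
  classical
  have hex : ∃ n : ℕ, S.K n ≠ ⊥ := by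
    obtain ⟨v, hv, N, hN⟩ := h
    refine ⟨N.toNat, fun h => hv ?_⟩
    have : v ∈ S.K N.toNat := fun m hm => hN m (by omega)
    rwa [h] at this
  obtain ⟨n, hn, hmin⟩ : ∃ n : ℕ, S.K n ≠ ⊥ ∧ ∀ m < n, S.K m = ⊥ :=
    ⟨Nat.find hex, Nat.find_spec hex, fun m hm => not_not.1 (Nat.find_min hex hm)⟩
  obtain ⟨v, hv, hv0⟩ := Submodule.exists_mem_ne_zero_of_ne_bot hn
  by_cases hn0 : n = 0
  · subst hn0
    exact Or.inl (R5_hw hS v hv0 hv)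
  have hlow : S.K ((n : ℤ) - 1) = ⊥ := by
    have := hmin (n - 1) (by omega)
    rwa [Nat.cast_sub (by omega)] at this
  have hinj : ∀ v ∈ S.K n, S.e n v = 0 → v = 0 := by
    intro v hv h0
    have : v ∈ S.K ((n : ℤ) - 1) := by
      intro m hm
      by_cases hmn : m = n
      · rw [hmn]; exact h0
      · exact hv m (by omega)
    rwa [hlow] at this
  have heven : (n : ℤ) % 2 = 0 := by
    by_contra hodd
    refine hv0 (hinj v hv (hinj _ (S.K_e n (by omega) n (by omega) v hv) ?_))
    obtain ⟨a, b, hb, -, -, -, -, hrel⟩ := S.e_rel n n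
    have h1 := hrel v
    rw [hv (n + n) (by omega), hb (by omega), smul_zero, zero_smul, add_zero, add_zero] at h1
    have hs : sgn2 n n = -1 := by
      unfold sgn2
      rw [if_neg (by simpa using hodd)]
    rw [hs, neg_one_smul] at h1
    have h3 : (2 : ℂ) • S.e n (S.e n v) = 0 := by
      rw [two_smul]; nth_rewrite 1 [h1]; exact neg_add_cancel _
    exact (smul_eq_zero.1 h3).resolve_left two_ne_zero
  obtain ⟨t, rfl⟩ : ∃ t : ℕ, n = 2 * t := ⟨n / 2, by omega⟩
  obtain ⟨c, hc⟩ := NSRep_dixmier hS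
  right
  refine ⟨c, t, S.KB ((2 * t : ℕ) : ℤ) (by omega), (S.K _).subtype, by omega,
    KB_isSimple hS _ (by omega) heven hinj v hv hv0, ?_, ?_,
    KB_induced hS _ (by omega) heven hinj c hc v hv hv0⟩
  · refine (injective_iff_map_eq_zero ((S.KB ((2 * t : ℕ) : ℤ) (by omega)).L t)).2 ?_
    intro x hx
    apply Subtype.ext
    refine hinj x.1 x.2 ?_
    have : S.L t x.1 = 0 := congrArg Subtype.val hx
    rw [S.L_eq] at this
    exact_mod_cast this
  · intro i hi x
    apply Subtype.ext
    change S.L i x.1 = 0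
    rw [S.L_eq]
    exact x.2 _ (by push_cast; omega)


theorem fd_stable {α : Type} [AddCommGroup α] [Module ℂ α] (f : α →ₗ[ℂ] α)
    (hf : LocallyFiniteEnd f) (X : Submodule ℂ α) (hX : X.FG) :
    ∃ X' : Submodule ℂ α, X'.FG ∧ X ≤ X' ∧ ∀ x ∈ X', f x ∈ X' := by
  induction X, hX using Submodule.fg_induction with
  | singleton v =>
    have h := hf v
    set Z := Submodule.span ℂ {w : α | ∃ n : ℕ, 0 < n ∧ w = ((f : Module.End ℂ α) ^ n) v} with hZ
    have hZfg : Z.FG := (Submodule.fg_iff_finiteDimensional Z).2 h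
    refine ⟨Submodule.span ℂ {v} ⊔ Z, (Submodule.fg_span_singleton v).sup hZfg, le_sup_left, ?_⟩
    change _ ≤ (Submodule.span ℂ {v} ⊔ Z).comap f
    refine sup_le ?_ ?_
    · rw [Submodule.span_singleton_le_iff_mem]
      refine Submodule.mem_sup_right (Submodule.subset_span ⟨1, one_pos, ?_⟩)
      rw [pow_one]
    · conv_lhs => rw [hZ]
      rw [Submodule.span_le]
      rintro _ ⟨n, hn, rfl⟩
      refine Submodule.mem_sup_right (Submodule.subset_span ⟨n + 1, by omega, ?_⟩)
      rw [pow_succ', Module.End.mul_apply]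
  | sup N₁ N₂ _ _ h₁ h₂ =>
    obtain ⟨X₁, a1, a2, a3⟩ := h₁
    obtain ⟨X₂, b1, b2, b3⟩ := h₂
    refine ⟨X₁ ⊔ X₂, a1.sup b1, sup_le_sup a2 b2, ?_⟩
    change _ ≤ (X₁ ⊔ X₂).comap f
    exact sup_le (fun x hx => Submodule.mem_sup_left (a3 x hx))
      (fun x hx => Submodule.mem_sup_right (b3 x hx))

section words
variable {α : Type} [AddCommGroup α] [Module ℂ α] (y : ℕ → α →ₗ[ℂ] α) (v : α)

def wd (l : List ℕ) : α := l.foldr (fun n x => y n x) v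

theorem wd_cons (m : ℕ) (l : List ℕ) : wd y v (m :: l) = y m (wd y v l) := rfl

def FL (n : ℕ) : Submodule ℂ α := Submodule.span ℂ {w | ∃ l : List ℕ, l.length < n ∧ w = wd y v l}

theorem FL_mono : Monotone (FL y v) := by
  intro a b h
  refine Submodule.span_mono ?_
  rintro _ ⟨l, hl, rfl⟩
  exact ⟨l, by omega, rfl⟩

theorem FL_y (m n : ℕ) (w : α) (hw : w ∈ FL y v n) : y m w ∈ FL y v (n + 1) := by
  revert w
  change FL y v n ≤ (FL y v (n + 1)).comap (y m)
  conv_lhs => rw [FL]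
  rw [Submodule.span_le]
  rintro _ ⟨l, hl, rfl⟩
  exact Submodule.subset_span ⟨m :: l, by simpa using hl, rfl⟩

theorem wd_perm
    (hy : ∀ m n, ∃ (a : ℂ) (k : ℕ), ∀ w, y m (y n w) = y n (y m w) + a • y k w)
    (l₁ l₂ : List ℕ) (h : l₁.Perm l₂) : wd y v l₁ - wd y v l₂ ∈ FL y v l₁.length := by
  induction h with
  | nil => rw [sub_self]; exact Submodule.zero_mem _
  | cons x h ih => rw [wd_cons, wd_cons, ← map_sub]; exact FL_y y v _ _ _ ih
  | swap a b l =>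
    obtain ⟨c, k, h⟩ := hy b a
    rw [wd_cons, wd_cons, wd_cons, wd_cons, h, add_sub_cancel_left]
    refine Submodule.smul_mem _ _ (Submodule.subset_span ⟨k :: l, ?_, rfl⟩)
    simp
  | trans h1 h2 ih1 ih2 =>
    rw [← h1.length_eq] at ih2
    simpa using Submodule.add_mem _ ih1 ih2

def GW (L n : ℕ) : Submodule ℂ α :=
  Submodule.span ℂ {w | ∃ l : List ℕ, l.length = n ∧ (∀ i ∈ l, i < L) ∧ w = wd y v l}

def wdLin (l : List ℕ) : α →ₗ[ℂ] α where
  toFun u := wd y u l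
  map_add' a b := by
    induction l with
    | nil => rfl
    | cons m l ih => rw [wd_cons, ih, map_add]; rfl
  map_smul' c a := by
    induction l with
    | nil => rfl
    | cons m l ih => rw [wd_cons, ih, map_smul]; rfl

theorem wd_good
    (hy : ∀ m n, ∃ (a : ℂ) (k : ℕ), ∀ w, y m (y n w) = y n (y m w) + a • y k w)
    (L : ℕ) (hv : ∀ m, y m v ∈ Submodule.span ℂ {w | ∃ j < L, w = y j v})
    (l : List ℕ) : wd y v l ∈ GW y v L l.length ⊔ FL y v l.length := by
  induction l with
  | nil =>
    exact Submodule.mem_sup_left (Submodule.subset_span ⟨[], rfl, by simp, rfl⟩)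
  | cons m l ih =>
    rw [wd_cons]
    obtain ⟨g, hg, u, hu, hgu⟩ := Submodule.mem_sup.1 ih
    rw [← hgu, map_add]
    refine Submodule.add_mem _ ?_ (Submodule.mem_sup_right (FL_y y v m _ u hu))
    revert g
    suffices h : GW y v L l.length ≤
        (GW y v L (m :: l).length ⊔ FL y v (m :: l).length).comap (y m) by
      intro g hg _; exact h hg
    conv_lhs => rw [GW]
    rw [Submodule.span_le]
    rintro _ ⟨l', hl', hlL, rfl⟩
    change wd y v (m :: l') ∈ GW y v L (m :: l).length ⊔ FL y v (m :: l).length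
    have h1 := wd_perm y v hy (m :: l') (l' ++ [m]) (List.perm_append_singleton m l').symm
    have h2 : wd y v (l' ++ [m]) ∈ GW y v L (m :: l).length := by
      have h3 : Submodule.span ℂ {w | ∃ j < L, w = y j v} ≤
          (GW y v L (m :: l).length).comap (wdLin y l') := by
        rw [Submodule.span_le]
        rintro _ ⟨j, hj, rfl⟩
        refine Submodule.subset_span ⟨l' ++ [j], by simp [hl'], ?_, ?_⟩
        · intro i hi
          rcases List.mem_append.1 hi with h | h
          · exact hlL i h
          · rw [List.mem_singleton.1 h]; exact hj
        · change wd y (y j v) l' = _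
          unfold wd
          rw [List.foldr_append]; rfl
      have h4 : wd y (y m v) l' ∈ GW y v L (m :: l).length := h3 (hv m)
      unfold wd at h4 ⊢
      rw [List.foldr_append]; exact h4
    have h5 : (m :: l').length = (m :: l).length := by simp [hl']
    rw [h5] at h1
    have := Submodule.add_mem _ (Submodule.mem_sup_right (S := GW y v L (m :: l).length) h1)
      (Submodule.mem_sup_left h2)
    simpa using this

theorem wd_Q
    (hy : ∀ m n, ∃ (a : ℂ) (k : ℕ), ∀ w, y m (y n w) = y n (y m w) + a • y k w)
    (L : ℕ) (hlf : ∀ m, LocallyFiniteEnd (y m)) (d j : ℕ) (hd : j + d = L) :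
    ∃ Q : Submodule ℂ α, Q.FG ∧ ∀ l : List ℕ, (∀ i ∈ l, j ≤ i ∧ i < L) →
      wd y v l ∈ Q ⊔ FL y v l.length := by
  induction d generalizing j with
  | zero =>
    refine ⟨Submodule.span ℂ {v}, Submodule.fg_span_singleton v, ?_⟩
    intro l hl
    cases l with
    | nil => exact Submodule.mem_sup_left (Submodule.mem_span_singleton_self v)
    | cons m l => have := hl m (by simp); omega
  | succ d ih =>
    obtain ⟨Q1, hfg1, hQ1⟩ := ih (j + 1) (by omega)
    obtain ⟨Q, hfg, hle, hst⟩ := fd_stable (y j) (hlf j) Q1 hfg1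
    refine ⟨Q, hfg, ?_⟩
    intro l
    obtain ⟨n, hn⟩ : ∃ n, l.length = n := ⟨_, rfl⟩
    induction n generalizing l with
    | zero =>
      intro _
      rw [List.length_eq_zero_iff] at hn
      subst hn
      exact (sup_le_sup_right hle _) (hQ1 [] (by simp))
    | succ n ihn =>
      intro hl
      by_cases hjl : j ∈ l
      · have hp := List.perm_cons_erase hjl
        have h1 := wd_perm y v hy _ _ hp
        have hlen : (l.erase j).length = n := by
          rw [List.length_erase_of_mem hjl]; omega
        have h2 := ihn (l.erase j) hlen (fun i hi => hl i (List.mem_of_mem_erase hi))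
        obtain ⟨g, hg, u, hu, hgu⟩ := Submodule.mem_sup.1 h2
        have h3 : wd y v (j :: l.erase j) ∈ Q ⊔ FL y v l.length := by
          rw [wd_cons, ← hgu, map_add]
          refine Submodule.add_mem _ (Submodule.mem_sup_left (hst g hg)) (Submodule.mem_sup_right ?_)
          have := FL_y y v j _ u hu
          rwa [hlen, ← hn] at this
        have := Submodule.add_mem _ (Submodule.mem_sup_right (S := Q) h1) h3
        simpa using this
      · refine (sup_le_sup_right hle _) (hQ1 l ?_)
        intro i hi
        have := hl i hi
        have : i ≠ j := fun h => hjl (h ▸ hi)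
        omega

theorem wd_fd
    (hy : ∀ m n, ∃ (a : ℂ) (k : ℕ), ∀ w, y m (y n w) = y n (y m w) + a • y k w)
    (L : ℕ) (hv : ∀ m, y m v ∈ Submodule.span ℂ {w | ∃ j < L, w = y j v})
    (hlf : ∀ m, LocallyFiniteEnd (y m)) :
    ∃ Y : Submodule ℂ α, FiniteDimensional ℂ Y ∧ v ∈ Y ∧ ∀ m, ∀ x ∈ Y, y m x ∈ Y := by
  obtain ⟨Q, hfg, hQ⟩ := wd_Q y v hy L hlf L 0 (by omega)
  have hle : ∀ n, FL y v n ≤ Q := by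
    intro n
    induction n with
    | zero =>
      rw [FL, Submodule.span_le]
      rintro _ ⟨l, hl, rfl⟩
      omega
    | succ n ih =>
      conv_lhs => rw [FL]
      rw [Submodule.span_le]
      rintro _ ⟨l, hl, rfl⟩
      have hF : FL y v l.length ≤ Q := (FL_mono y v (by omega)).trans ih
      refine (sup_le ?_ hF) (wd_good y v hy L hv l)
      rw [GW, Submodule.span_le]
      rintro _ ⟨l', hl', hL, rfl⟩
      have := hQ l' (fun i hi => ⟨by omega, hL i hi⟩)
      rw [hl'] at this
      exact (sup_le le_rfl hF) this
  have := (Submodule.fg_iff_finiteDimensional Q).1 hfg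
  refine ⟨Submodule.span ℂ (Set.range (wd y v)), ?_, Submodule.subset_span ⟨[], rfl⟩, ?_⟩
  · refine Submodule.finiteDimensional_of_le (S₂ := Q) ?_
    rw [Submodule.span_le]
    rintro _ ⟨l, rfl⟩
    exact hle (l.length + 1) (Submodule.subset_span ⟨l, by omega, rfl⟩)
  · intro m
    change Submodule.span ℂ (Set.range (wd y v)) ≤ (Submodule.span ℂ (Set.range (wd y v))).comap (y m)
    rw [Submodule.span_le]
    rintro _ ⟨l, rfl⟩
    exact Submodule.subset_span ⟨m :: l, rfl⟩

end words

theorem ideal_step (S : NSRep) (X : Submodule ℂ S.carrier) (q : ℤ) (hq : 1 ≤ q)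
    (hst : ∀ i, q ≤ i → ∀ x ∈ X, S.L i x ∈ X) (n : ℕ) (s : Finset ℤ) (hs : s.card = n + 1)
    (a : ℤ → ℂ) (hsa : ∀ i ∈ s, q ≤ i ∧ a i ≠ 0) (h0 : ∀ x ∈ X, ∑ i ∈ s, a i • S.L i x = 0) :
    ∃ p, q ≤ p ∧ ∀ x ∈ X, S.L p x = 0 := by
  induction n generalizing s a with
  | zero =>
    obtain ⟨p, rfl⟩ := Finset.card_eq_one.1 hs
    obtain ⟨h1, h2⟩ := hsa p (by simp)
    refine ⟨p, h1, fun x hx => ?_⟩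
    have := h0 x hx
    rw [Finset.sum_singleton] at this
    exact (smul_eq_zero.1 this).resolve_left h2
  | succ n ih =>
    obtain ⟨p, hp⟩ : s.Nonempty := Finset.card_pos.1 (by omega)
    have hpq := (hsa p hp).1
    refine ih ((s.erase p).map (addLeftEmbedding p)) ?_ (fun i => ((p : ℂ) - ((i - p : ℤ) : ℂ)) * a (i - p)) ?_ ?_
    · rw [Finset.card_map, Finset.card_erase_of_mem hp, hs]; rfl
    · intro i hi
      obtain ⟨k, hk, rfl⟩ := Finset.mem_map.1 hi
      obtain ⟨hkp, hks⟩ := Finset.mem_erase.1 hk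
      obtain ⟨h1, h2⟩ := hsa k hks
      change q ≤ p + k ∧ ((p : ℂ) - ((p + k - p : ℤ) : ℂ)) * a (p + k - p) ≠ 0
      rw [add_sub_cancel_left]
      refine ⟨by omega, mul_ne_zero ?_ h2⟩
      rw [sub_ne_zero]
      exact_mod_cast hkp.symm
    · intro x hx
      rw [Finset.sum_map]
      have h1 := congrArg (S.L p) (h0 x hx)
      have h2 := h0 (S.L p x) (hst p hpq x hx)
      rw [map_zero, map_sum] at h1
      have h3 : ∑ i ∈ s, (S.L p (a i • S.L i x) - a i • S.L i (S.L p x)) = 0 := by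
        rw [Finset.sum_sub_distrib, h1, h2, sub_zero]
      rw [← Finset.add_sum_erase s _ hp] at h3
      rw [map_smul, sub_self, zero_add] at h3
      rw [← h3]
      refine Finset.sum_congr rfl ?_
      intro i hi
      have hiq := (hsa i (Finset.mem_of_mem_erase hi)).1
      change (((p : ℂ) - ((p + i - p : ℤ) : ℂ)) * a (p + i - p)) • S.L (p + i) x = _
      rw [add_sub_cancel_left, map_smul, ← smul_sub, S.rel_LL, if_neg (by omega), zero_smul, add_zero,
        smul_smul, mul_comm]

theorem ideal_lemma (S : NSRep) (X : Submodule ℂ S.carrier) [FiniteDimensional ℂ X] (q : ℤ) (hq : 1 ≤ q)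
    (hst : ∀ i, q ≤ i → ∀ x ∈ X, S.L i x ∈ X) :
    ∃ N, q ≤ N ∧ ∀ i, N ≤ i → ∀ x ∈ X, S.L i x = 0 := by
  have h1 : ∃ p, q ≤ p ∧ ∀ x ∈ X, S.L p x = 0 := by
    let ρ : ℕ → (X →ₗ[ℂ] X) := fun n => (S.L (q + n)).restrict (hst (q + n) (by omega))
    have hdep : ¬ LinearIndependent ℂ ρ := by
      intro h
      have := h.finite
      exact not_finite ℕ
    rw [not_linearIndependent_iff] at hdep
    classical
    obtain ⟨s, g, hg, i, his, hi⟩ := hdep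
    have hpos : 0 < (s.filter (fun i => g i ≠ 0)).card := Finset.card_pos.2 ⟨i, by simp [his, hi]⟩
    refine ideal_step S X q hq hst ((s.filter (fun i => g i ≠ 0)).card - 1)
      ((s.filter (fun i => g i ≠ 0)).map ⟨fun n : ℕ => q + n, fun a b h => by
        simpa using h⟩) ?_ (fun i => g (i - q).toNat) ?_ ?_
    · rw [Finset.card_map]; omega
    · intro i hi
      obtain ⟨k, hk, rfl⟩ := Finset.mem_map.1 hi
      change q ≤ q + k ∧ g (q + k - q).toNat ≠ 0
      rw [add_sub_cancel_left, Int.toNat_natCast]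
      exact ⟨by omega, (Finset.mem_filter.1 hk).2⟩
    · intro x hx
      rw [Finset.sum_map]
      have h2 := congrArg (fun T : X →ₗ[ℂ] X => (T ⟨x, hx⟩).1) hg
      simp only [LinearMap.sum_apply, LinearMap.zero_apply] at h2
      rw [AddSubmonoidClass.coe_finsetSum] at h2
      rw [Finset.sum_filter]
      refine Eq.trans (Finset.sum_congr rfl ?_) h2
      intro k _
      change (if _ then g (q + k - q).toNat • S.L (q + k) x else 0) = g k • S.L (q + k) x
      rw [add_sub_cancel_left, Int.toNat_natCast]
      split_ifs with h
      · rfl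
      · rw [not_not.1 h, zero_smul]
  obtain ⟨p, hp, h⟩ := h1
  refine ⟨2 * p + 1, by omega, ?_⟩
  intro i hi x hx
  have h2 := S.rel_LL (i - p) p x
  rw [h x hx, h _ (hst _ (by omega) x hx), map_zero, sub_zero, if_neg (by omega), zero_smul, add_zero,
    sub_add_cancel] at h2
  refine (smul_eq_zero.1 h2.symm).resolve_left ?_
  refine sub_ne_zero.2 ?_
  have : i - p ≠ p := by omega
  exact_mod_cast this

theorem fin_cover {α : Type} [AddCommGroup α] [Module ℂ α] (f : α →ₗ[ℂ] α)
    (hf : LocallyFiniteEnd f) (u : ℤ → α) (a b d : ℤ) (hd : 1 ≤ d) (hab : a + d ≤ b)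
    (h : ∀ j, a ≤ j → ∀ X : Submodule ℂ α, (∀ x ∈ X, f x ∈ X) → u j ∈ X → b ≤ j + d → u (j + d) ∈ X) :
    ∃ X : Submodule ℂ α, FiniteDimensional ℂ X ∧ ∀ j, a ≤ j → u j ∈ X := by
  obtain ⟨X, hfg, hle, hst⟩ := fd_stable f hf (Submodule.span ℂ (u '' (Finset.Icc a b))) 
    (Submodule.fg_span ((Finset.finite_toSet _).image u))
  refine ⟨X, (Submodule.fg_iff_finiteDimensional X).1 hfg, ?_⟩
  have key : ∀ n : ℕ, ∀ j, a ≤ j → j < a + n → u j ∈ X := by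
    intro n
    induction n with
    | zero => intro j h1 h2; omega
    | succ n ih =>
      intro j h1 h2
      by_cases hj : j ≤ b
      · exact hle (Submodule.subset_span ⟨j, by simp [h1, hj], rfl⟩)
      · have := h (j - d) (by omega) X hst (ih (j - d) (by omega) (by push_cast at h2; omega)) (by omega)
        rwa [sub_add_cancel] at this
  intro j hj
  exact key (j - a + 1).toNat j hj (by omega)

theorem fd_index {α : Type} [AddCommGroup α] [Module ℂ α] (w : ℕ → α) (X : Submodule ℂ α)
    [FiniteDimensional ℂ X] (h : ∀ n, w n ∈ X) :
    ∃ L, ∀ m, w m ∈ Submodule.span ℂ {x | ∃ j < L, x = w j} := by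
  have hfd : FiniteDimensional ℂ (Submodule.span ℂ (Set.range w)) := by
    refine Submodule.finiteDimensional_of_le (S₂ := X) ?_
    rw [Submodule.span_le]
    rintro _ ⟨n, rfl⟩
    exact h n
  have hfg := (Submodule.fg_iff_finiteDimensional _).2 hfd
  obtain ⟨s, hs, hspan⟩ := (Submodule.fg_span_iff_fg_span_finset_subset _).1 hfg
  classical
  obtain ⟨t, rfl⟩ : ∃ t : Finset ℕ, t.image w = s := by
    rw [← Set.image_univ] at hs
    obtain ⟨t, -, ht⟩ := Finset.subset_set_image_iff.1 hs
    exact ⟨t, ht⟩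
  refine ⟨t.sup id + 1, fun m => ?_⟩
  have h1 : w m ∈ Submodule.span ℂ (Set.range w) := Submodule.subset_span ⟨m, rfl⟩
  rw [hspan] at h1
  refine Submodule.span_mono ?_ h1
  intro x hx
  obtain ⟨j, hj, rfl⟩ := Finset.mem_image.1 (Finset.mem_coe.1 hx)
  exact ⟨j, Nat.lt_succ_of_le (Finset.le_sup (f := id) hj), rfl⟩

theorem c1_to_R {S : NSRep} (hS : S.IsSimple) (h : ∃ t : ℕ, 0 < t ∧ ∀ i : ℤ, (t : ℤ) ≤ i →
          LocallyFiniteEnd (S.L i) ∧ LocallyFiniteEnd (S.G i)) : S.HasSing := by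
  obtain ⟨t, ht, hlf⟩ := h
  obtain ⟨v0, hv0⟩ := hS.1
  obtain ⟨v, c, hv, hvc⟩ := locfin_eig (S.L t) (hlf t le_rfl).1 v0 hv0
  -- finite dimensionality of the span of the `L_i v`
  obtain ⟨X, hXfd, hX⟩ := fin_cover (S.L t) (hlf t le_rfl).1 (fun i => S.L i v) t (2 * t + 1) t
    (by omega) (by omega) (by
      intro j hj X hst hu hb
      have h1 := S.rel_LL t j v
      rw [if_neg (by omega), zero_smul, add_zero, hvc, map_smul] at h1
      have hne : ((t : ℤ) : ℂ) - (j : ℂ) ≠ 0 := by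
        rw [sub_ne_zero]
        have : (t : ℤ) ≠ j := by omega
        exact_mod_cast this
      rw [add_comm]
      rw [← Submodule.smul_mem_iff X hne, ← h1]
      exact Submodule.sub_mem _ (hst _ hu) (Submodule.smul_mem _ _ hu))
  obtain ⟨L, hL⟩ := fd_index (fun n : ℕ => S.L (t + n) v) X (fun n => hX _ (by omega))
  obtain ⟨Y, hYfd, hvY, hYst⟩ := wd_fd (fun n : ℕ => S.L (t + n)) v (by
      intro m n
      refine ⟨((m : ℂ) - n), t + m + n, fun w => ?_⟩
      have h1 := S.rel_LL (t + m) (t + n) w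
      rw [if_neg (by omega), zero_smul, add_zero] at h1
      rw [sub_eq_iff_eq_add'] at h1
      rw [h1]
      congr 2
      · push_cast; ring
      · congr 2; push_cast; ring) L hL (fun m => (hlf _ (by omega)).1)
  obtain ⟨q, hq, hqY⟩ := ideal_lemma S Y t (by omega) (by
    intro i hi x hx
    have := hYst (i - t).toNat x hx
    rwa [Int.toNat_of_nonneg (by omega), add_sub_cancel] at this)
  have hLv : ∀ i, q ≤ i → S.L i v = 0 := fun i hi => hqY i hi v hvY
  -- the odd part
  have hG : ∀ i j, q ≤ i → S.L i (S.G j v) = (((i : ℂ) - 2 * j + 1) / 2) • S.G (i + j) v := by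
    intro i j hi
    rw [← S.rel_LG, hLv i hi, map_zero, sub_zero]
  obtain ⟨Z, hZfd, hZ⟩ := fin_cover (S.L q) (hlf q (by omega)).1 (fun i => S.G i v) (q + 1) (2 * q + 1) q
    (by omega) (by omega) (by
      intro j hj X hst hu hb
      have hne : (((q : ℂ) - 2 * j + 1) / 2) ≠ 0 := by
        have : q - 2 * j + 1 ≠ 0 := by omega
        refine div_ne_zero ?_ two_ne_zero
        exact_mod_cast this
      rw [add_comm, ← Submodule.smul_mem_iff X hne, ← hG q j le_rfl]
      exact hst _ hu)
  let XG : Submodule ℂ S.carrier := Submodule.span ℂ {w | ∃ j, q + 1 ≤ j ∧ w = S.G j v}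
  have hXG : FiniteDimensional ℂ XG := by
    refine Submodule.finiteDimensional_of_le (S₂ := Z) ?_
    rw [Submodule.span_le]
    rintro _ ⟨j, hj, rfl⟩
    exact hZ j hj
  obtain ⟨N, hN, hNX⟩ := ideal_lemma S XG q (by omega) (by
    intro i hi
    change XG ≤ XG.comap (S.L i)
    conv_lhs => rw [show XG = Submodule.span ℂ {w | ∃ j, q + 1 ≤ j ∧ w = S.G j v} from rfl]
    rw [Submodule.span_le]
    rintro _ ⟨j, hj, rfl⟩
    change S.L i (S.G j v) ∈ XG
    rw [hG i j hi]
    exact Submodule.smul_mem _ _ (Submodule.subset_span ⟨i + j, by omega, rfl⟩))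
  have hGv : ∀ n, N + 3 * q + 10 ≤ n → S.G n v = 0 := by
    intro n hn
    have h1 := hG (n - (q + 1)) (q + 1) (by omega)
    rw [hNX _ (by omega) _ (Submodule.subset_span ⟨q + 1, le_rfl, rfl⟩), sub_add_cancel] at h1
    refine (smul_eq_zero.1 h1.symm).resolve_left ?_
    have : (n - (q + 1)) - 2 * (q + 1) + 1 ≠ 0 := by omega
    refine div_ne_zero ?_ two_ne_zero
    exact_mod_cast this
  refine ⟨v, hv, 2 * (N + 3 * q + 10), ?_⟩
  intro m hm
  rcases Int.even_or_odd' m with ⟨k, rfl | rfl⟩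
  · rw [S.e_even]; exact hLv k (by omega)
  · have : 2 * k + 1 = 2 * (k + 1) - 1 := by ring
    rw [this, S.e_odd]; exact hGv _ (by omega)

/-- For a simple Neveu–Schwarz module `S` the following are equivalent:
(1) for some `t ∈ ℤ_+` the actions of `L_i` and `G_{i-1/2}`, `i ≥ t`, are locally finite;
(2) for some `t ∈ ℤ_+` these actions are locally nilpotent;
(3) for some `t ∈ ℤ_+`, `S` is a locally finite `m^{(t)}`-module;
(4) for some `t ∈ ℤ_+`, `S` is a locally nilpotent `m^{(t)}`-module;
(5) `S` is a highest weight module, or `S ≅ Ind_ℓ(V)` for some `ℓ ∈ ℂ`, `t ∈ ℤ_+` and some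
simple `b`-module `V` with `L_t` acting injectively and `L_i V = 0` for `i > t`. -/
theorem simple_module_locally_finite_tfae (S : NSRep) (hS : S.IsSimple) :
    List.TFAE
      [ ∃ t : ℕ, 0 < t ∧ ∀ i : ℤ, (t : ℤ) ≤ i →
          LocallyFiniteEnd (S.L i) ∧ LocallyFiniteEnd (S.G i),
        ∃ t : ℕ, 0 < t ∧ ∀ i : ℤ, (t : ℤ) ≤ i →
          LocallyNilpotentEnd (S.L i) ∧ LocallyNilpotentEnd (S.G i),
        ∃ t : ℕ, 0 < t ∧ S.MLocallyFinite t,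
        ∃ t : ℕ, 0 < t ∧ S.MLocallyNilpotent t,
        S.IsHighestWeight ∨
          ∃ (ℓ : ℂ) (t : ℕ) (V : BRep) (ι : V.carrier →ₗ[ℂ] S.carrier), 0 < t ∧
            V.IsSimple ∧ Function.Injective (V.L t) ∧
            (∀ i : ℕ, t < i → ∀ v : V.carrier, V.L i v = 0) ∧
            IsInduced ℓ V S ι ] := by
  tfae_have 1 → 5 := fun h => R_to_5 hS (c1_to_R hS h)
  tfae_have 5 → 3 := fun h => by
    obtain ⟨t, ht, h3, h4⟩ := R_to_34 hS (c5_to_R hS h)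
    exact ⟨t, ht, h3⟩
  tfae_have 5 → 4 := fun h => by
    obtain ⟨t, ht, h3, h4⟩ := R_to_34 hS (c5_to_R hS h)
    exact ⟨t, ht, h4⟩
  tfae_have 3 → 1 := c3_to_1 S
  tfae_have 4 → 2 := c4_to_2 S
  tfae_have 2 → 1 := c2_to_1 S
  tfae_finish
end

section
/- Let ℓ ∈ ℂ. Every simple restricted N-module of central charge ℓ is isomorphic either to a simple highest weight module, or to a module of the form Ind_ℓ(V), where, for some t ∈ ℤ_+, V is a simple b-module annihilated by m^(t) (equivalently, a simple module over the quotient Lie superalgebra b^(t) = b/m^(t)) on which the action of L_t is injective. -/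
namespace NSProof

open Submodule

def eps (j k : ℤ) : ℂ := if Odd j ∧ Odd k then -1 else 1

noncomputable def cc (j k : ℤ) : ℂ :=
  if Even j then (if Even k then ((j : ℂ) - k) / 2 else ((j : ℂ) - 2 * k) / 4)
  else (if Even k then (2 * (j : ℂ) - k) / 4 else 2)

section generic

variable {A : Type*} [AddCommGroup A] [Module ℂ A]

def NSys (z : ℤ → ℂ) (e : ℤ → A →ₗ[ℂ] A) : Prop :=
  ∀ (j k : ℤ) (v : A), e j (e k v) = eps j k • e k (e j v) + cc j k • e (j + k) v
    + (if j + k = 0 then z j else 0) • v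

def act (e : ℤ → A →ₗ[ℂ] A) : List ℕ → A →ₗ[ℂ] A
  | [] => LinearMap.id
  | a :: u => (e (-(a : ℤ))).comp (act e u)

def Pos (w : List ℕ) : Prop := ∀ a ∈ w, 0 < a

def RR (a b : ℕ) : Prop := a < b ∨ (a = b ∧ Even a)

def Good (w : List ℕ) : Prop := Pos w ∧ w.Pairwise RR

def BStab (e : ℤ → A →ₗ[ℂ] A) (V : Submodule ℂ A) : Prop :=
  ∀ k : ℤ, 0 ≤ k → ∀ v ∈ V, e k v ∈ V

def HH (e : ℤ → A →ₗ[ℂ] A) (V X : Submodule ℂ A) (d : ℤ) : Submodule ℂ A :=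
  span ℂ {x | ∃ w v, Pos w ∧ v ∈ V ∧ ((w.sum : ℤ) < d ∨ ((w.sum : ℤ) = d ∧ v ∈ X)) ∧
    x = act e w v}

variable {z : ℤ → ℂ} {e : ℤ → A →ₗ[ℂ] A} {V X X' : Submodule ℂ A}

lemma act_nil (v : A) : act e [] v = v := rfl

lemma act_cons (a : ℕ) (u : List ℕ) (v : A) : act e (a :: u) v = e (-(a : ℤ)) (act e u v) := rfl

lemma pos_cons {a : ℕ} {u : List ℕ} : Pos (a :: u) ↔ 0 < a ∧ Pos u := by
  simp [Pos]

lemma sum_cons' (a : ℕ) (u : List ℕ) : (((a :: u).sum : ℕ) : ℤ) = a + (u.sum : ℤ) := by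
  simp

lemma mem_HH {w : List ℕ} {v : A} {d : ℤ} (hw : Pos w) (hv : v ∈ V)
    (h : (w.sum : ℤ) < d ∨ ((w.sum : ℤ) = d ∧ v ∈ X)) : act e w v ∈ HH e V X d :=
  subset_span ⟨w, v, hw, hv, h, rfl⟩

lemma neg_HH {w : List ℕ} {v : A} {d k : ℤ} (hk : k < 0) (hw : Pos w) (hv : v ∈ V)
    (h : (w.sum : ℤ) - k < d ∨ ((w.sum : ℤ) - k = d ∧ v ∈ X)) :
    e k (act e w v) ∈ HH e V X d := by
  obtain ⟨n, rfl⟩ : ∃ n : ℕ, k = -(n : ℤ) := ⟨k.natAbs, by omega⟩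
  rw [← act_cons]
  refine mem_HH (pos_cons.2 ⟨by omega, hw⟩) hv ?_
  rw [sum_cons']
  rcases h with h | ⟨h, h'⟩
  · left; omega
  · right; exact ⟨by omega, h'⟩

lemma shift_HH {a : ℕ} (ha : 0 < a) {d : ℤ} {x : A} (hx : x ∈ HH e V X (d - a)) :
    e (-(a : ℤ)) x ∈ HH e V X d := by
  have : HH e V X (d - a) ≤ (HH e V X d).comap (e (-(a : ℤ))) := by
    refine span_le.2 ?_
    rintro _ ⟨w, v, hw, hv, h, rfl⟩
    refine neg_HH (by omega) hw hv ?_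
    rcases h with h | ⟨h, h'⟩
    · left; omega
    · right; exact ⟨by omega, h'⟩
  exact this hx

lemma lem0 (hN : NSys z e) (hV : BStab e V) (w : List ℕ) :
    ∀ (v : A) (k d : ℤ), Pos w → v ∈ V → 0 ≤ k → (w.sum : ℤ) < d →
      e k (act e w v) ∈ HH e V X d := by
  induction w with
  | nil =>
    intro v k d hw hv hk hd
    exact mem_HH (w := []) hw (hV k hk v hv) (Or.inl hd)
  | cons a w ih =>
    intro v k d hw hv hk hd
    rw [sum_cons'] at hd
    obtain ⟨ha, hw'⟩ := pos_cons.1 hw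
    rw [act_cons, hN]
    refine add_mem (add_mem (smul_mem _ _ ?_) (smul_mem _ _ ?_)) (smul_mem _ _ ?_)
    · exact shift_HH ha (ih v k _ hw' hv hk (by omega))
    · rcases lt_or_ge (k + -(a : ℤ)) 0 with h | h
      · exact neg_HH h hw' hv (Or.inl (by omega))
      · exact ih v _ _ hw' hv h (by omega)
    · exact mem_HH hw' hv (Or.inl (by omega))

lemma lemQ (hN : NSys z e) (hV : BStab e V) {T s : ℤ} {a : ℕ} (hT : 0 ≤ T)
    (hsa : s < a) {w : List ℕ} {v : A} {d : ℤ} (hw : Pos w) (hv : v ∈ V)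
    (h : (w.sum : ℤ) + a - s < d ∨ ((w.sum : ℤ) + a - s = d ∧ (T = 0 → v ∈ X))) :
    e (s + T + -(a : ℤ)) (act e w v) ∈ HH e V X d := by
  rcases lt_or_ge (s + T + -(a : ℤ)) 0 with h1 | h1
  · refine neg_HH h1 hw hv ?_
    rcases h with h | ⟨h, h'⟩
    · left; omega
    · rcases hT.eq_or_lt with h0 | h0
      · right; exact ⟨by omega, h' h0.symm⟩
      · left; omega
  · exact lem0 hN hV w v _ _ hw hv h1 (by omega)

lemma lemZ {T s : ℤ} {a : ℕ} (hT : 0 ≤ T)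
    {w : List ℕ} {v : A} {d : ℤ} (hw : Pos w) (hv : v ∈ V)
    (h : (w.sum : ℤ) + a - s < d ∨ ((w.sum : ℤ) + a - s = d ∧ (T = 0 → v ∈ X))) :
    (if s + T + -(a : ℤ) = 0 then z (s + T) else 0) • act e w v ∈ HH e V X d := by
  split_ifs with h1
  · refine smul_mem _ _ (mem_HH hw hv ?_)
    rcases h with h | ⟨h, h'⟩
    · left; omega
    · rcases hT.eq_or_lt with h0 | h0
      · right; exact ⟨by omega, h' h0.symm⟩
      · left; omega
  · simp

/-- raising -/
lemma lem2 (hN : NSys z e) (hV : BStab e V) {T : ℤ} (hT : 0 ≤ T)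
    (hkill : ∀ k : ℤ, T < k → ∀ v ∈ V, e k v = 0)
    (hXX : ∀ v ∈ X, e T v ∈ X') (h0 : T = 0 → X ≤ X') (w : List ℕ) :
    ∀ (v : A) (s d : ℤ), Pos w → v ∈ V → 0 ≤ s →
      ((w.sum : ℤ) < d ∨ ((w.sum : ℤ) = d ∧ v ∈ X)) →
      e (s + T) (act e w v) ∈ HH e V X' (d - s) := by
  induction w with
  | nil =>
    intro v s d hw hv hs hd
    rw [act_nil]
    rcases hs.eq_or_lt with h | h
    · subst h
      rw [zero_add]
      refine mem_HH (w := []) hw (hV T hT v hv) ?_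
      rcases hd with h | ⟨h, h'⟩
      · left; simpa using h
      · right; exact ⟨by simpa using h, hXX v h'⟩
    · rw [hkill _ (by omega) v hv]; exact zero_mem _
  | cons a w ih =>
    intro v s d hw hv hs hd
    rw [sum_cons'] at hd
    obtain ⟨ha, hw'⟩ := pos_cons.1 hw
    rw [act_cons, hN]
    have hd' : ((w.sum : ℤ) + a - s < d - s ∨ ((w.sum : ℤ) + a - s = d - s ∧ (T = 0 → v ∈ X'))) := by
      rcases hd with h | ⟨h, h'⟩
      · left; omega
      · right; exact ⟨by omega, fun h1 => h0 h1 h'⟩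
    have hd2 : ((w.sum : ℤ) < d - a ∨ ((w.sum : ℤ) = d - a ∧ v ∈ X)) := by
      rcases hd with h | ⟨h, h'⟩
      · left; omega
      · right; exact ⟨by omega, h'⟩
    refine add_mem (add_mem (smul_mem _ _ ?_) (smul_mem _ _ ?_)) ?_
    · refine shift_HH ha ?_
      have := ih v s (d - a) hw' hv hs hd2
      rwa [show d - (a : ℤ) - s = d - s - a by ring] at this
    · rcases lt_or_ge s (a : ℤ) with h | h
      · exact lemQ hN hV hT h hw' hv hd'
      · have := ih v (s - a) (d - a) hw' hv (by omega) hd2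
        rwa [show d - (a : ℤ) - (s - a) = d - s by ring,
          show s - (a : ℤ) + T = s + T + -(a : ℤ) by ring] at this
    · exact lemZ hT hw' hv hd'

lemma raise_HH (hN : NSys z e) (hV : BStab e V) {T : ℤ} (hT : 0 ≤ T)
    (hkill : ∀ k : ℤ, T < k → ∀ v ∈ V, e k v = 0)
    (hXX : ∀ v ∈ X, e T v ∈ X') (h0 : T = 0 → X ≤ X') {s d : ℤ} (hs : 0 ≤ s) {x : A}
    (hx : x ∈ HH e V X d) : e (s + T) x ∈ HH e V X' (d - s) := by
  have : HH e V X d ≤ (HH e V X' (d - s)).comap (e (s + T)) := by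
    refine span_le.2 ?_
    rintro _ ⟨w, v, hw, hv, h, rfl⟩
    exact lem2 hN hV hT hkill hXX h0 w v s d hw hv hs h
  exact this hx

lemma lem3 (hN : NSys z e) (hV : BStab e V) {T : ℤ} (hT : 0 ≤ T)
    (hkill : ∀ k : ℤ, T < k → ∀ v ∈ V, e k v = 0) {v : A} (hv : v ∈ V)
    (h0 : T = 0 → v ∈ X) {p : ℕ} (hp : 0 < p) (u : List ℕ) :
    Pos u → (∀ a ∈ u, p < a) → e (p + T) (act e u v) ∈ HH e V X (u.sum - p) := by
  induction u with
  | nil =>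
    intro _ _
    rw [act_nil, hkill _ (by omega) v hv]; exact zero_mem _
  | cons a u ih =>
    intro hu hpa
    obtain ⟨ha, hu'⟩ := pos_cons.1 hu
    have hpa' : p < a := hpa a (by simp)
    rw [act_cons, hN, sum_cons']
    refine add_mem (add_mem (smul_mem _ _ ?_) (smul_mem _ _ ?_)) ?_
    · refine shift_HH ha ?_
      have := ih hu' (fun b hb => hpa b (by simp [hb]))
      rwa [show (a : ℤ) + u.sum - p - a = u.sum - p by ring]
    · exact lemQ hN hV hT (by omega) hu' hv (Or.inr ⟨by omega, h0⟩)
    · exact lemZ hT hu' hv (Or.inr ⟨by omega, h0⟩)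

lemma lem4 (hN : NSys z e) (hV : BStab e V) {T : ℤ} (hT : 0 ≤ T) (hTe : Even T)
    {v : A} (hv : v ∈ V) (h0 : T = 0 → v ∈ X) (u : List ℕ) :
    Pos u → e T (act e u v) - act e u (e T v) ∈ HH e V X u.sum := by
  induction u with
  | nil => intro _; simp [act_nil]
  | cons a u ih =>
    intro hu
    obtain ⟨ha, hu'⟩ := pos_cons.1 hu
    have hE : eps T (-(a : ℤ)) = 1 := by
      unfold eps; rw [if_neg]; rintro ⟨h, _⟩; exact (Int.not_odd_iff_even.2 hTe) h
    rw [act_cons, act_cons, hN, hE, one_smul, sum_cons', add_assoc, add_sub_right_comm, ← map_sub]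
    refine add_mem ?_ (add_mem (smul_mem _ _ ?_) ?_)
    · refine shift_HH ha ?_
      rw [show (a : ℤ) + u.sum - a = u.sum by ring]
      exact ih hu'
    · have := lemQ (s := 0) (X := X) (d := a + u.sum) hN hV hT (by omega : (0 : ℤ) < a) hu' hv
        (Or.inr ⟨by omega, h0⟩)
      rwa [zero_add] at this
    · have := lemZ (z := z) (e := e) (s := 0) (a := a) (X := X) (d := a + u.sum) hT hu' hv
        (Or.inr ⟨by omega, h0⟩)
      rwa [zero_add] at this

lemma cc_ne {T : ℤ} (hT : 0 ≤ T) (hTe : Even T) {p : ℕ} (hp : 0 < p) :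
    cc (p + T) (-(p : ℤ)) ≠ 0 := by
  unfold cc
  by_cases h : Even (p : ℤ)
  · have h1 : Even ((p : ℤ) + T) := h.add hTe
    have h2 : Even (-(p : ℤ)) := h.neg
    rw [if_pos h1, if_pos h2]
    have : (((p : ℤ) + T : ℤ) : ℂ) - ((-(p : ℤ) : ℤ) : ℂ) ≠ 0 := by
      rw [← Int.cast_sub]
      exact Int.cast_ne_zero.2 (by omega)
    exact div_ne_zero this (by norm_num)
  · have h1 : ¬ Even ((p : ℤ) + T) := by
      rw [Int.even_add]; tauto
    have h2 : ¬ Even (-(p : ℤ)) := by rwa [even_neg]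
    rw [if_neg h1, if_neg h2]; norm_num

lemma good_cons {a : ℕ} {u : List ℕ} :
    Good (a :: u) ↔ 0 < a ∧ (∀ b ∈ u, RR a b) ∧ Good u := by
  unfold Good; rw [pos_cons, List.pairwise_cons]; tauto

/-- the congruence -/
lemma cong (hN : NSys z e) (hV : BStab e V) {T : ℤ} (hT : 0 ≤ T) (hTe : Even T)
    (hkill : ∀ k : ℤ, T < k → ∀ v ∈ V, e k v = 0) {v : A} (hv : v ∈ V)
    (h0 : T = 0 → v ∈ X) {p : ℕ} (hp : 0 < p) (u : List ℕ) :
    Good u → (∀ a ∈ u, p ≤ a) → ∃ m : ℕ, (m = 0 ∨ u = p :: u.tail) ∧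
      (u = p :: u.tail → m ≠ 0) ∧
      e (p + T) (act e u v) - ((m : ℂ) * cc (p + T) (-(p : ℤ))) • act e u.tail (e T v)
        ∈ HH e V X (u.sum - p) := by
  induction u with
  | nil =>
    intro hu hpa
    refine ⟨0, Or.inl rfl, by simp, ?_⟩
    have := lem3 hN hV hT hkill hv h0 hp [] hu.1 (by simp)
    simpa using this
  | cons a u ih =>
    intro hu hpa
    obtain ⟨ha, hau, hu'⟩ := good_cons.1 hu
    rcases (hpa a (by simp)).eq_or_lt with h | h
    · subst h
      have hcent : (if (p : ℤ) + T + -(p : ℤ) = 0 then z (p + T) else 0) • act e u v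
          ∈ HH e V X u.sum := lemZ hT hu'.1 hv (Or.inr ⟨by omega, h0⟩)
      have hL4 := lem4 hN hV hT hTe hv h0 u hu'.1
      have hcast : ((p :: u).sum : ℤ) - p = u.sum := by rw [sum_cons']; ring
      rw [hcast]
      simp only [List.tail_cons]
      by_cases hpe : Even p
      · obtain ⟨m, hm1, hm2, hm3⟩ := ih hu' (fun b hb => hpa b (by simp [hb]))
        refine ⟨m + 1, Or.inr (by simp), by simp, ?_⟩
        have hE : eps (p + T) (-(p : ℤ)) = 1 := by
          unfold eps; rw [if_neg]; rintro ⟨_, h⟩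
          rw [odd_neg, ← Int.not_even_iff_odd] at h
          exact h (by exact_mod_cast hpe)
        have h5 : e (-(p : ℤ)) (e (p + T) (act e u v)
            - ((m : ℂ) * cc (p + T) (-(p : ℤ))) • act e u.tail (e T v)) ∈ HH e V X u.sum :=
          shift_HH ha hm3
        rw [map_sub, map_smul, ← act_cons] at h5
        have h6 : ((m : ℂ) * cc (p + T) (-(p : ℤ))) • act e (p :: u.tail) (e T v)
            = ((m : ℂ) * cc (p + T) (-(p : ℤ))) • act e u (e T v) := by
          rcases hm1 with h | h
          · simp [h]
          · rw [← h]
        rw [h6] at h5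
        have h7 := add_mem (add_mem h5 (smul_mem _ (cc (p + T) (-(p : ℤ))) hL4)) hcent
        convert h7 using 1
        rw [act_cons, hN, hE, show (p : ℤ) + T + -(p : ℤ) = T by ring]
        push_cast
        module
      · have hgt : ∀ b ∈ u, p < b := by
          intro b hb
          rcases hau b hb with h | ⟨_, h⟩
          · exact h
          · exact absurd h hpe
        refine ⟨1, Or.inr (by simp), by simp, ?_⟩
        have h5 := shift_HH ha (lem3 hN hV hT hkill hv h0 hp u hu'.1 hgt)
        have h7 := add_mem (add_mem (smul_mem _ (eps (p + T) (-(p : ℤ))) h5)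
          (smul_mem _ (cc (p + T) (-(p : ℤ))) hL4)) hcent
        convert h7 using 1
        rw [act_cons, hN, show (p : ℤ) + T + -(p : ℤ) = T by ring]
        push_cast
        module
    · have hgt : ∀ b ∈ a :: u, p < b := by
        intro b hb
        rcases List.mem_cons.1 hb with rfl | hb
        · exact h
        · rcases hau b hb with h' | ⟨h', _⟩ <;> omega
      refine ⟨0, Or.inl rfl, ?_, ?_⟩
      · intro h'; simp only [List.tail_cons, List.cons.injEq] at h'; omega
      · have := lem3 hN hV hT hkill hv h0 hp (a :: u) hu.1 hgt
        simpa using this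

lemma good_nil_of_sum {u : List ℕ} (hu : Pos u) (h : u.sum = 0) : u = [] := by
  cases u with
  | nil => rfl
  | cons a u => have := (pos_cons.1 hu).1; simp at h; omega

lemma HH_zero (hXV : X ≤ V) : HH e V X 0 ≤ X := by
  refine span_le.2 ?_
  rintro _ ⟨w, v, hw, hv, h, rfl⟩
  rcases h with h | ⟨h, h'⟩
  · omega
  · rw [good_nil_of_sum hw (by exact_mod_cast h)]; exact h'

theorem main_indep (hN : NSys z e) (hV : BStab e V) {T : ℤ} (hT : 0 ≤ T) (hTe : Even T)
    (hkill : ∀ k : ℤ, T < k → ∀ v ∈ V, e k v = 0) (X Y : ℕ → Submodule ℂ A)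
    (hXV : ∀ n, X n ≤ V) (hYV : ∀ n, Y n ≤ V)
    (hX : ∀ n, ∀ v ∈ X n, e T v ∈ X (n + 1)) (hY : ∀ n, ∀ v ∈ Y n, e T v ∈ Y (n + 1))
    (h0 : T = 0 → ∀ n, Y n ≤ X (n + 1)) (h0' : T = 0 → ∀ n, X n ≤ X (n + 1))
    (hinj : ∀ n, ∀ v ∈ Y n, e T v ∈ X (n + 1) → v ∈ X n) (d : ℕ) :
    ∀ (n : ℕ) (B : Finset (List ℕ)) (v : List ℕ → A),
      (∀ u ∈ B, Good u ∧ u.sum = d ∧ v u ∈ Y n) →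
      ∑ u ∈ B, act e u (v u) ∈ HH e V (X n) d → ∀ u ∈ B, v u ∈ X n := by
  classical
  induction d using Nat.strong_induction_on with
  | _ d ih =>
  intro n B₀ v hB₀ hsum₀
  rcases Nat.eq_zero_or_pos d with rfl | hd
  · intro u hu
    have hnil : ∀ u ∈ B₀, u = [] := fun u hu => good_nil_of_sum (hB₀ u hu).1.1 (hB₀ u hu).2.1
    have hB : B₀ = {[]} := by
      ext x; simp only [Finset.mem_singleton]
      refine ⟨hnil x, ?_⟩
      rintro rfl
      rw [← hnil u hu]; exact hu
    rw [hB, Finset.sum_singleton] at hsum₀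
    rw [hnil u hu]
    exact HH_zero (hXV n) hsum₀
  by_contra! hcon
  obtain ⟨u₁, hu₁, hvu₁⟩ := hcon
  set B := B₀.filter (fun u => v u ∉ X n) with hBdef
  have hB : ∀ u ∈ B, Good u ∧ u.sum = d ∧ v u ∈ Y n :=
    fun u hu => hB₀ u (Finset.mem_filter.1 hu).1
  have hsum : ∑ u ∈ B, act e u (v u) ∈ HH e V (X n) d := by
    have h1 := Finset.sum_filter_add_sum_filter_not B₀ (fun u => v u ∉ X n)
      (fun u => act e u (v u))
    rw [← hBdef] at h1
    rw [← h1] at hsum₀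
    refine (Submodule.add_mem_iff_left _ (sum_mem ?_)).1 hsum₀
    intro u hu
    rw [Finset.mem_filter, not_not] at hu
    obtain ⟨hg, hs, hy⟩ := hB₀ u hu.1
    exact mem_HH hg.1 (hYV n hy) (Or.inr ⟨by rw [hs], hu.2⟩)
  have hne : B.Nonempty := ⟨u₁, Finset.mem_filter.2 ⟨hu₁, hvu₁⟩⟩
  obtain ⟨u₀, hu₀, hmin⟩ := Finset.exists_min_image B (fun u => u.headI) hne
  have hform : ∀ u ∈ B, u = u.headI :: u.tail := by
    intro u hu
    cases u with
    | nil => have := (hB _ hu).2.1; simp at this; omega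
    | cons a u => rfl
  set p := u₀.headI with hpdef
  have hp : 0 < p := by
    have h1 := (hB u₀ hu₀).1.1
    rw [hform u₀ hu₀] at h1
    exact (pos_cons.1 h1).1
  have hge : ∀ u ∈ B, ∀ a ∈ u, p ≤ a := by
    intro u hu a ha
    have h1 := hmin u hu
    have h2 := (hB u hu).1
    rw [hform u hu] at h2 ha
    rcases List.mem_cons.1 ha with h | h
    · omega
    · rcases (good_cons.1 h2).2.1 a h with h' | ⟨h', _⟩ <;> omega
  have hc : ∀ u ∈ B, ∃ m : ℕ, (m = 0 ∨ u = p :: u.tail) ∧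
      (u = p :: u.tail → m ≠ 0) ∧
      e (p + T) (act e u (v u)) - ((m : ℂ) * cc (p + T) (-(p : ℤ))) • act e u.tail (e T (v u))
        ∈ HH e V (X (n + 1)) (u.sum - p) := fun u hu =>
    cong hN hV hT hTe hkill (hYV n (hB u hu).2.2) (fun h => h0 h n (hB u hu).2.2) hp u
      (hB u hu).1 (hge u hu)
  choose! m hm1 hm2 hm3 using hc
  have hr := raise_HH (s := p) (X' := X (n + 1)) hN hV hT hkill (hX n) (fun h => h0' h n)
    (by omega) hsum
  have hd3 : ∑ u ∈ B, ((m u : ℂ) * cc (p + T) (-(p : ℤ))) • act e u.tail (e T (v u))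
      ∈ HH e V (X (n + 1)) ((d : ℤ) - p) := by
    rw [map_sum] at hr
    have h4 : ∑ u ∈ B, (e (p + T) (act e u (v u))
        - ((m u : ℂ) * cc (p + T) (-(p : ℤ))) • act e u.tail (e T (v u)))
        ∈ HH e V (X (n + 1)) ((d : ℤ) - p) := by
      refine sum_mem fun u hu => ?_
      have := hm3 u hu
      rwa [(hB u hu).2.1] at this
    rw [Finset.sum_sub_distrib] at h4
    have := sub_mem hr h4
    rwa [sub_sub_cancel] at this
  set B1 := B.filter (fun u => u = p :: u.tail) with hB1
  have hd4 : ∑ u ∈ B1, ((m u : ℂ) * cc (p + T) (-(p : ℤ))) • act e u.tail (e T (v u))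
      ∈ HH e V (X (n + 1)) ((d : ℤ) - p) := by
    rw [hB1, Finset.sum_filter_of_ne]
    · exact hd3
    · intro u hu hne
      rcases hm1 u hu with h | h
      · exact absurd (by simp [h]) hne
      · exact h
  have hinjOn : Set.InjOn List.tail (B1 : Set (List ℕ)) := by
    intro x hx y hy hxy
    rw [(Finset.mem_filter.1 (Finset.mem_coe.1 hx)).2,
      (Finset.mem_filter.1 (Finset.mem_coe.1 hy)).2, hxy]
  have hmem1 : ∀ u ∈ B1, u ∈ B ∧ u = p :: u.tail := fun u hu => Finset.mem_filter.1 hu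
  have hu₀d : p ≤ d := by
    have h1 := (hB u₀ hu₀).2.1
    rw [hform u₀ hu₀, List.sum_cons] at h1
    omega
  have key := ih (d - p) (by omega) (n + 1) (B1.image List.tail)
    (fun u' => ((m (p :: u') : ℂ) * cc (p + T) (-(p : ℤ))) • e T (v (p :: u'))) ?_ ?_
  · have hu₀' : u₀ = p :: u₀.tail := hform u₀ hu₀
    have h8 := key u₀.tail (Finset.mem_image_of_mem _ (Finset.mem_filter.2 ⟨hu₀, hu₀'⟩))
    simp only [← hu₀'] at h8
    have hne : ((m u₀ : ℂ) * cc (p + T) (-(p : ℤ))) ≠ 0 :=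
      mul_ne_zero (Nat.cast_ne_zero.2 (hm2 u₀ hu₀ hu₀')) (cc_ne hT hTe hp)
    rw [Submodule.smul_mem_iff _ hne] at h8
    exact (Finset.mem_filter.1 hu₀).2 (hinj n _ (hB u₀ hu₀).2.2 h8)
  · intro u' hu'
    obtain ⟨u, hu, rfl⟩ := Finset.mem_image.1 hu'
    obtain ⟨huB, hup⟩ := hmem1 u hu
    obtain ⟨hg, hs, hy⟩ := hB u huB
    refine ⟨?_, ?_, ?_⟩
    · rw [hup] at hg; exact (good_cons.1 hg).2.2
    · rw [hup, List.sum_cons] at hs; omega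
    · simp only [← hup]; exact smul_mem _ _ (hY n _ hy)
  · rw [Finset.sum_image hinjOn, Nat.cast_sub hu₀d]
    convert hd4 using 1
    refine Finset.sum_congr rfl fun u hu => ?_
    obtain ⟨huB, hup⟩ := hmem1 u hu
    simp only [← hup, map_smul]

def Indep (e : ℤ → A →ₗ[ℂ] A) (V : Submodule ℂ A) : Prop :=
  ∀ f : List ℕ →₀ A, (∀ u, f u ∈ V) → (∀ u, f u ≠ 0 → Good u) →
    (f.sum fun u y => act e u y) = 0 → f = 0

theorem indep_of (hN : NSys z e) (hV : BStab e V) {T : ℤ} (hT : 0 ≤ T) (hTe : Even T)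
    (hkill : ∀ k : ℤ, T < k → ∀ v ∈ V, e k v = 0) (X Y : ℕ → Submodule ℂ A)
    (hXV : ∀ n, X n ≤ V) (hYV : ∀ n, Y n ≤ V)
    (hX : ∀ n, ∀ v ∈ X n, e T v ∈ X (n + 1)) (hY : ∀ n, ∀ v ∈ Y n, e T v ∈ Y (n + 1))
    (h0 : T = 0 → ∀ n, Y n ≤ X (n + 1)) (h0' : T = 0 → ∀ n, X n ≤ X (n + 1))
    (hinj : ∀ n, ∀ v ∈ Y n, e T v ∈ X (n + 1) → v ∈ X n)
    (hIn : ∀ (B : Finset (List ℕ)) (v : List ℕ → A), (∀ u ∈ B, v u ∈ V) →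
      (∃ u ∈ B, v u ≠ 0) → ∃ n, (∀ u ∈ B, v u ∈ Y n) ∧ ∃ u ∈ B, v u ∉ X n) :
    Indep e V := by
  classical
  intro f hfV hfG hsum
  by_contra hne
  have hsup : f.support.Nonempty := Finsupp.support_nonempty_iff.2 hne
  obtain ⟨u₀, hu₀, hmax⟩ := Finset.exists_max_image f.support List.sum hsup
  set B := f.support.filter (fun u => u.sum = u₀.sum) with hB
  have hu₀B : u₀ ∈ B := Finset.mem_filter.2 ⟨hu₀, rfl⟩
  obtain ⟨n, hn1, u₁, hu₁, hn2⟩ := hIn B f (fun u _ => hfV u) ⟨u₀, hu₀B, Finsupp.mem_support_iff.1 hu₀⟩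
  refine hn2 (main_indep hN hV hT hTe hkill X Y hXV hYV hX hY h0 h0' hinj u₀.sum n B f ?_ ?_ u₁ hu₁)
  · intro u hu
    have := Finset.mem_filter.1 hu
    exact ⟨hfG u (Finsupp.mem_support_iff.1 this.1), this.2, hn1 u hu⟩
  · rw [Finsupp.sum, ← Finset.sum_filter_add_sum_filter_not _ (fun u => u.sum = u₀.sum),
      ← hB] at hsum
    rw [eq_neg_of_add_eq_zero_left hsum]
    refine neg_mem (sum_mem fun u hu => ?_)
    rw [Finset.mem_filter] at hu
    refine mem_HH (hfG u (Finsupp.mem_support_iff.1 hu.1)).1 (hfV u) (Or.inl ?_)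
    have := hmax u hu.1
    have h2 := hu.2
    omega

def SG (e : ℤ → A →ₗ[ℂ] A) (v : A) (n : ℕ) (l : List ℕ) : Submodule ℂ A :=
  span ℂ {x | ∃ g, Good g ∧ (g.length ≤ n ∨ (g.length = n + 1 ∧ g ⊆ l)) ∧ x = act e g v}

lemma mem_SG {v : A} {n : ℕ} {l g : List ℕ} (hg : Good g)
    (h : g.length ≤ n ∨ (g.length = n + 1 ∧ g ⊆ l)) : act e g v ∈ SG e v n l :=
  subset_span ⟨g, hg, h, rfl⟩

lemma SG_mono {v : A} {n m : ℕ} {l l' : List ℕ} (h : n < m) : SG e v n l ≤ SG e v m l' := by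
  refine span_le.2 ?_
  rintro _ ⟨g, hg, h, rfl⟩
  exact mem_SG hg (Or.inl (by omega))

lemma RR_trans {a b c : ℕ} (h : RR a b) (h' : RR b c) : RR a c := by
  rcases h with h | ⟨rfl, h⟩
  · left; rcases h' with h' | ⟨rfl, _⟩ <;> omega
  · exact h'

lemma straight (hN : NSys z e) (v : A) (n : ℕ) :
    ∀ (u : List ℕ) (a : ℕ), u.length = n → Good u → 0 < a →
      e (-(a : ℤ)) (act e u v) ∈ SG e v n (a :: u) := by
  induction n using Nat.strong_induction_on with
  | _ n ih =>
  intro u a hlen hu ha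
  cases u with
  | nil =>
    rw [← act_cons]
    exact mem_SG (good_cons.2 ⟨ha, by simp, hu⟩) (Or.inr ⟨by simpa using hlen.symm, by simp⟩)
  | cons b u =>
    obtain ⟨hb, hbu, hu'⟩ := good_cons.1 hu
    by_cases hab : RR a b
    · rw [← act_cons]
      refine mem_SG (good_cons.2 ⟨ha, ?_, hu⟩) (Or.inr ⟨by simpa using hlen, by simp⟩)
      intro c hc
      rcases List.mem_cons.1 hc with rfl | hc
      · exact hab
      · exact RR_trans hab (hbu c hc)
    · have hlt : u.length < n := by simp at hlen; omega
      rw [act_cons, hN, if_neg (by omega), zero_smul, add_zero]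
      have hsec : e (-(a : ℤ) + -(b : ℤ)) (act e u v) ∈ SG e v n (a :: b :: u) := by
        have := ih u.length hlt u (a + b) rfl hu' (by omega)
        rw [show (-((a + b : ℕ) : ℤ)) = -(a : ℤ) + -(b : ℤ) by push_cast; ring] at this
        exact SG_mono hlt this
      rcases Nat.lt_trichotomy a b with h | h | h
      · exact absurd (Or.inl h) hab
      · subst h
        have hodd : ¬ Even a := fun h => hab (Or.inr ⟨rfl, h⟩)
        have hodd' : Odd (-(a : ℤ)) := by
          rw [odd_neg]; exact_mod_cast Nat.not_even_iff_odd.1 hodd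
        have hE : eps (-(a : ℤ)) (-(a : ℤ)) = -1 := by
          unfold eps; rw [if_pos ⟨hodd', hodd'⟩]
        have h1 := hN (-(a : ℤ)) (-(a : ℤ)) (act e u v)
        rw [if_neg (by omega), zero_smul, add_zero, hE] at h1
        have h2 : e (-(a : ℤ)) (e (-(a : ℤ)) (act e u v))
            = (cc (-(a : ℤ)) (-(a : ℤ)) / 2) • e (-(a : ℤ) + -(a : ℤ)) (act e u v) := by
          have h3 : (2 : ℂ) • e (-(a : ℤ)) (e (-(a : ℤ)) (act e u v))
            = cc (-(a : ℤ)) (-(a : ℤ)) • e (-(a : ℤ) + -(a : ℤ)) (act e u v) := by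
            rw [two_smul]; nth_rewrite 1 [h1]; module
          rw [div_eq_inv_mul, mul_smul, ← h3, smul_smul]; norm_num
        exact add_mem (smul_mem _ _ (by rw [h2]; exact smul_mem _ _ hsec)) (smul_mem _ _ hsec)
      · refine add_mem (smul_mem _ _ ?_) (smul_mem _ _ hsec)
        have h1 := ih u.length hlt u a rfl hu' ha
        have h2 : SG e v u.length (a :: u) ≤ (SG e v n (a :: b :: u)).comap (e (-(b : ℤ))) := by
          refine span_le.2 ?_
          rintro _ ⟨g, hg, h3, rfl⟩
          rw [SetLike.mem_coe, mem_comap]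
          rcases h3 with h3 | ⟨h3, h4⟩
          · exact SG_mono (by omega) (ih g.length (by omega) g b rfl hg hb)
          · rw [← act_cons]
            refine mem_SG (good_cons.2 ⟨hb, ?_, hg⟩) (Or.inr ⟨?_, ?_⟩)
            · intro c hc
              rcases List.mem_cons.1 (h4 hc) with rfl | hc
              · exact Or.inl h
              · exact hbu c hc
            · simp at hlen ⊢; omega
            · intro c hc
              rcases List.mem_cons.1 hc with rfl | hc
              · simp
              · rcases List.mem_cons.1 (h4 hc) with rfl | hc <;> simp [*]
        exact h2 h1

def OS (e : ℤ → A →ₗ[ℂ] A) (U : Submodule ℂ A) : Submodule ℂ A :=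
  span ℂ {x | ∃ g v, Good g ∧ v ∈ U ∧ x = act e g v}

lemma le_OS {U : Submodule ℂ A} : U ≤ OS e U := fun v hv =>
  subset_span ⟨[], v, ⟨by simp [Pos], by simp⟩, hv, rfl⟩

lemma OS_neg (hN : NSys z e) {U : Submodule ℂ A} {a : ℕ} (ha : 0 < a) {x : A}
    (hx : x ∈ OS e U) : e (-(a : ℤ)) x ∈ OS e U := by
  have : OS e U ≤ (OS e U).comap (e (-(a : ℤ))) := by
    refine span_le.2 ?_
    rintro _ ⟨g, v, hg, hv, rfl⟩
    have h1 := straight hN v g.length g a rfl hg ha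
    have h2 : SG e v g.length (a :: g) ≤ OS e U := by
      refine span_le.2 ?_
      rintro _ ⟨g, hg, _, rfl⟩
      exact subset_span ⟨g, v, hg, hv, rfl⟩
    exact h2 h1
  exact this hx

lemma act_mem_OS (hN : NSys z e) {U : Submodule ℂ A} (w : List ℕ) :
    ∀ v ∈ U, Pos w → act e w v ∈ OS e U := by
  induction w with
  | nil => intro v hv _; exact le_OS hv
  | cons a w ih =>
    intro v hv hw
    obtain ⟨ha, hw'⟩ := pos_cons.1 hw
    exact OS_neg hN ha (ih v hv hw')

lemma OS_inv (hN : NSys z e) {U : Submodule ℂ A} (hU : BStab e U) (k : ℤ) {x : A}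
    (hx : x ∈ OS e U) : e k x ∈ OS e U := by
  rcases lt_or_ge k 0 with hk | hk
  · obtain ⟨n, rfl⟩ : ∃ n : ℕ, k = -(n : ℤ) := ⟨k.natAbs, by omega⟩
    exact OS_neg hN (by omega) hx
  · have : OS e U ≤ (OS e U).comap (e k) := by
      refine span_le.2 ?_
      rintro _ ⟨g, v, hg, hv, rfl⟩
      have h1 := lem0 (X := ⊥) hN hU g v k (g.sum + 1) hg.1 hv hk (by omega)
      have h2 : HH e U ⊥ (g.sum + 1) ≤ OS e U := by
        refine span_le.2 ?_
        rintro _ ⟨w, v, hw, hv, _, rfl⟩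
        exact act_mem_OS hN w v hv hw
      exact h2 h1
    exact this hx

lemma OS_repr {U : Submodule ℂ A} {x : A} (hx : x ∈ OS e U) :
    ∃ f : List ℕ →₀ A, (∀ u, f u ∈ U) ∧ (∀ u, f u ≠ 0 → Good u) ∧
      x = f.sum fun u y => act e u y := by
  classical
  induction hx using span_induction with
  | mem x hx =>
    obtain ⟨g, v, hg, hv, rfl⟩ := hx
    refine ⟨Finsupp.single g v, ?_, ?_, ?_⟩
    · intro u; rw [Finsupp.single_apply]; split_ifs
      · exact hv
      · exact zero_mem _
    · intro u; rw [Finsupp.single_apply]; split_ifs with h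
      · intro _; rw [← h]; exact hg
      · intro h; exact absurd rfl h
    · rw [Finsupp.sum_single_index (by simp)]
  | zero => exact ⟨0, fun _ => zero_mem _, by simp, by simp⟩
  | add x y _ _ hx hy =>
    obtain ⟨f, h1, h2, rfl⟩ := hx
    obtain ⟨g, h3, h4, rfl⟩ := hy
    refine ⟨f + g, fun u => add_mem (h1 u) (h3 u), ?_, ?_⟩
    · intro u hu
      by_cases h : f u = 0
      · exact h4 u (by simpa [h] using hu)
      · exact h2 u h
    · rw [Finsupp.sum_add_index' (by simp) (by simp)]
  | smul c x _ hx =>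
    obtain ⟨f, h1, h2, rfl⟩ := hx
    refine ⟨c • f, fun u => smul_mem _ _ (h1 u), ?_, ?_⟩
    · intro u hu
      refine h2 u fun h => hu (by simp [h])
    · rw [Finsupp.sum_smul_index' (by simp), Finsupp.smul_sum]
      simp

lemma uniq (hI : Indep e V) {U : Submodule ℂ A} (hUV : U ≤ V) {x : A} (hx : x ∈ V)
    (hxU : x ∈ OS e U) : x ∈ U := by
  classical
  obtain ⟨f, h1, h2, h3⟩ := OS_repr hxU
  have h4 := hI (f - Finsupp.single [] x) ?_ ?_ ?_
  · rw [sub_eq_zero] at h4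
    have := h1 []
    rwa [h4, Finsupp.single_eq_same] at this
  · intro u
    rw [Finsupp.sub_apply, Finsupp.single_apply]
    refine sub_mem (hUV (h1 u)) ?_
    split_ifs
    · exact hx
    · exact zero_mem _
  · intro u hu
    by_cases h : u = []
    · subst h; exact ⟨by simp [Pos], by simp⟩
    · refine h2 u ?_
      rwa [Finsupp.sub_apply, Finsupp.single_apply, if_neg (Ne.symm h), sub_zero] at hu
  · rw [Finsupp.sum_sub_index (by simp), ← h3, Finsupp.sum_single_index (by simp), act_nil,
      sub_self]

def VT (e : ℤ → A →ₗ[ℂ] A) (T : ℤ) : Submodule ℂ A where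
  carrier := {v | ∀ k : ℤ, T < k → e k v = 0}
  add_mem' := by intro a b ha hb k hk; simp [ha k hk, hb k hk]
  zero_mem' := by intro k _; simp
  smul_mem' := by intro c a ha k hk; simp [ha k hk]

lemma VT_stab (hN : NSys z e) {T : ℤ} (hT : 0 ≤ T) : BStab e (VT e T) := by
  intro j hj v hv k hk
  rw [hN, hv k hk, hv (k + j) (by omega), if_neg (by omega)]
  simp

/-- the case `t > 0` -/
lemma inj_VT (hN : NSys z e) {T : ℤ} (hT : 0 < T) (hTe : Even T) (hmin : VT e (T - 2) = ⊥)
    {v : A} (hv : v ∈ VT e T) (h : e T v = 0) : v = 0 := by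
  have hT2 : 2 ≤ T := by obtain ⟨r, hr⟩ := hTe; omega
  have hk0 : ∀ k : ℤ, T ≤ k → e k v = 0 := by
    intro k hk
    rcases hk.eq_or_lt with rfl | hk
    · exact h
    · exact hv k hk
  have hodd : Odd (T - 1) := hTe.sub_odd odd_one
  have hE : eps (T - 1) (T - 1) = -1 := by unfold eps; rw [if_pos ⟨hodd, hodd⟩]
  have h1 : e (T - 1) v ∈ VT e (T - 2) := by
    intro k hk
    rcases eq_or_ne k (T - 1) with rfl | hk'
    · have h1 := hN (T - 1) (T - 1) v
      rw [if_neg (by omega), hE, hk0 (T - 1 + (T - 1)) (by omega)] at h1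
      have h2 : (2 : ℂ) • e (T - 1) (e (T - 1) v) = 0 := by
        rw [two_smul]; nth_rewrite 1 [h1]; simp
      exact (smul_eq_zero.1 h2).resolve_left (by norm_num)
    · rw [hN, hk0 k (by omega), hk0 (k + (T - 1)) (by omega), if_neg (by omega)]
      simp
  rw [hmin, mem_bot] at h1
  have h2 : v ∈ VT e (T - 2) := by
    intro k hk
    rcases eq_or_ne k (T - 1) with rfl | hk'
    · exact h1
    · exact hk0 k (by omega)
  rwa [hmin, mem_bot] at h2

lemma indep_VT (hN : NSys z e) {T : ℤ} (hT : 0 < T) (hTe : Even T) (hmin : VT e (T - 2) = ⊥) :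
    Indep e (VT e T) := by
  refine indep_of hN (VT_stab hN hT.le) hT.le hTe (fun k hk v hv => hv k hk) (fun _ => ⊥)
    (fun _ => VT e T) (by simp) (by simp) (by simp) ?_ (by omega) (by omega) ?_ ?_
  · intro n v hv; exact VT_stab hN hT.le T hT.le v hv
  · intro n v hv h; rw [mem_bot] at h ⊢; exact inj_VT hN hT hTe hmin hv h
  · intro B v hv hne
    exact ⟨0, hv, by simpa using hne⟩

/-- the case `t = 0` -/
lemma case_zero (hN : NSys z e) (hsimple : ∀ p : Submodule ℂ A, (∀ k, ∀ x ∈ p, e k x ∈ p) →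
    p = ⊥ ∨ p = ⊤) (hne : VT e 0 ≠ ⊥) : ∃ v ∈ VT e 0, v ≠ 0 ∧ ∃ h : ℂ, e 0 v = h • v := by
  by_contra! hcon
  obtain ⟨v0, hv0, hv0ne⟩ := Submodule.exists_mem_ne_zero_of_ne_bot hne
  have hpow : ∀ i : ℕ, (e 0 ^ i) v0 ∈ VT e 0 := by
    intro i
    induction i with
    | zero => simpa using hv0
    | succ i ih => rw [pow_succ']; exact VT_stab hN le_rfl 0 le_rfl _ ih
  set Z : ℕ → Submodule ℂ A := fun n => span ℂ ((fun i : ℕ => (e 0 ^ i) v0) '' Set.Iio n) with hZ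
  have hZV : ∀ n, Z n ≤ VT e 0 := by
    intro n; refine span_le.2 ?_
    rintro _ ⟨i, _, rfl⟩; exact hpow i
  have hZmono : Monotone Z := fun n m h => span_mono (Set.image_mono (Set.Iio_subset_Iio h))
  have hZmem : ∀ i n, i < n → (e 0 ^ i) v0 ∈ Z n := fun i n h => subset_span ⟨i, h, rfl⟩
  have hZe : ∀ n, ∀ v ∈ Z n, e 0 v ∈ Z (n + 1) := by
    intro n v hv
    have : Z n ≤ (Z (n + 1)).comap (e 0) := by
      refine span_le.2 ?_
      rintro _ ⟨i, hi, rfl⟩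
      have := hZmem (i + 1) (n + 1) (by simpa using hi)
      rwa [pow_succ'] at this
    exact this hv
  have hZsucc : ∀ n, ∀ v ∈ Z (n + 1), ∃ c : ℂ, ∃ y ∈ Z n, v = c • (e 0 ^ n) v0 + y := by
    intro n v hv
    have h1 : Set.Iio (n + 1) = insert n (Set.Iio n) := by ext x; simp only [Set.mem_Iio, Set.mem_insert_iff]; omega
    simp only [hZ] at hv
    rw [h1, Set.image_insert_eq, mem_span_insert] at hv
    exact hv
  have hZ0 : Z 0 = ⊥ := by simp [hZ]
  have hnot : ∀ n, (e 0 ^ n) v0 ∉ Z n := by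
    intro n hn
    have hst : ∀ v ∈ Z n, e 0 v ∈ Z n := by
      intro v hv
      obtain ⟨c, y, hy, h⟩ := hZsucc n _ (hZe n v hv)
      rw [h]; exact add_mem (smul_mem _ _ hn) hy
    have hnpos : 0 < n := by
      rcases Nat.eq_zero_or_pos n with rfl | h
      · rw [hZ0, mem_bot] at hn; exact absurd (by simpa using hn) hv0ne
      · exact h
    have hv0Z : v0 ∈ Z n := by simpa using hZmem 0 n hnpos
    have : FiniteDimensional ℂ (Z n) :=
      FiniteDimensional.span_of_finite ℂ ((Set.finite_Iio n).image _)
    have : Nontrivial (Z n) := ⟨⟨⟨v0, hv0Z⟩, 0, fun h => hv0ne (congrArg Subtype.val h)⟩⟩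
    obtain ⟨μ, hμ⟩ := Module.End.exists_eigenvalue ((e 0).restrict hst)
    obtain ⟨w, hw⟩ := hμ.exists_hasEigenvector
    have h1 := hw.apply_eq_smul
    refine hcon w (hZV n w.2) (fun h => hw.2 (Subtype.ext h)) μ ?_
    exact congrArg Subtype.val h1
  have hdesc : ∀ n, ∀ v ∈ Z (n + 1), e 0 v ∈ Z (n + 1) → v ∈ Z n := by
    intro n v hv hev
    obtain ⟨c, y, hy, rfl⟩ := hZsucc n v hv
    rw [map_add, map_smul] at hev
    have h1 := (Submodule.add_mem_iff_left _ (hZe n y hy)).1 hev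
    by_cases hc : c = 0
    · simpa [hc] using hy
    · rw [Submodule.smul_mem_iff _ hc] at h1
      refine absurd ?_ (hnot (n + 1))
      rw [pow_succ']; exact h1
  -- the big space
  set V : Submodule ℂ A := ⨆ n, Z n with hVdef
  have hVmem : ∀ v, v ∈ V ↔ ∃ n, v ∈ Z n := fun v =>
    Submodule.mem_iSup_of_directed _ hZmono.directed_le
  have hVV : V ≤ VT e 0 := iSup_le hZV
  have hVe : ∀ v ∈ V, e 0 v ∈ V := by
    intro v hv
    obtain ⟨n, hn⟩ := (hVmem v).1 hv
    exact (hVmem _).2 ⟨n + 1, hZe n v hn⟩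
  have hsub : ∀ U : Submodule ℂ A, U ≤ VT e 0 → (∀ v ∈ U, e 0 v ∈ U) → BStab e U := by
    intro U hU hU0 k hk v hv
    rcases hk.eq_or_lt with rfl | hk
    · exact hU0 v hv
    · rw [hU hv k hk]; exact zero_mem _
  have hI : Indep e V := by
    refine indep_of hN (hsub V hVV hVe) le_rfl Even.zero (fun k hk v hv => hVV hv k hk) Z
      (fun n => Z (n + 1)) (fun n => le_iSup Z n) (fun n => le_iSup Z (n + 1)) hZe
      (fun n => hZe (n + 1)) (fun _ n => le_rfl) (fun _ n => hZmono (Nat.le_succ n)) hdesc ?_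
    classical
    intro B v hv hne
    have hex : ∃ n, ∀ u ∈ B, v u ∈ Z n := by
      have h1 : ∀ u ∈ B, ∃ n, v u ∈ Z n := fun u hu => (hVmem _).1 (hv u hu)
      choose! N hN' using h1
      exact ⟨B.sup N, fun u hu => hZmono (Finset.le_sup hu) (hN' u hu)⟩
    have hmin := fun m => @Nat.find_min _ _ hex m
    have hspec := Nat.find_spec hex
    cases hf : Nat.find hex with
    | zero =>
      obtain ⟨u, hu, hne⟩ := hne
      rw [hf] at hspec
      have := hspec u hu
      rw [hZ0, mem_bot] at this
      exact absurd this hne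
    | succ n =>
      rw [hf] at hspec
      refine ⟨n, hspec, ?_⟩
      have := hmin n (by omega)
      push Not at this
      exact this
  have hv0V : v0 ∈ V := (hVmem _).2 ⟨1, by simpa using hZmem 0 1 one_pos⟩
  set U := V.map (e 0) with hU
  have hUV : U ≤ V := by rintro _ ⟨y, hy, rfl⟩; exact hVe y hy
  have hUs : BStab e U := by
    refine hsub U (hUV.trans hVV) ?_
    rintro _ ⟨y, hy, rfl⟩
    exact ⟨e 0 y, hVe y hy, rfl⟩
  have he0 : e 0 v0 ≠ 0 := by
    intro h
    refine hnot 1 ?_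
    rw [pow_one, h]; exact zero_mem _
  have htop : OS e U = ⊤ := by
    refine (hsimple (OS e U) (fun k x hx => OS_inv hN hUs k hx)).resolve_left ?_
    intro h
    have h1 : e 0 v0 ∈ OS e U := le_OS ⟨v0, hv0V, rfl⟩
    rw [h, mem_bot] at h1
    exact he0 h1
  obtain ⟨y, hy, hyv⟩ := uniq hI hUV hv0V (by rw [htop]; trivial)
  obtain ⟨n, hn⟩ := (hVmem y).1 hy
  have : ∀ n, y ∉ Z n := by
    intro n
    induction n with
    | zero =>
      intro h
      rw [hZ0, mem_bot] at h
      rw [h, map_zero] at hyv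
      exact hv0ne hyv.symm
    | succ n ih =>
      intro h
      refine ih (hdesc n y h ?_)
      rw [hyv]
      simpa using hZmem 0 (n + 1) (by omega)
  exact this n hn

end generic

noncomputable def ee (M : NSRep) (k : ℤ) : M.carrier →ₗ[ℂ] M.carrier :=
  if Even k then M.L (k / 2) else M.G ((k + 1) / 2)

noncomputable def zz (ℓ : ℂ) (j : ℤ) : ℂ :=
  if Even j then (((j : ℂ) / 2) ^ 3 - (j : ℂ) / 2) / 12 * ℓ
  else ((((j : ℂ) + 1) / 2) ^ 2 - ((j : ℂ) + 1) / 2) / 3 * ℓ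

lemma even_two (a : ℤ) : Even (2 * a) := even_two_mul a

lemma not_even_two (a : ℤ) : ¬ Even (2 * a - 1) := by
  rw [Int.not_even_iff_odd]; exact ⟨a - 1, by ring⟩

lemma ee_even (M : NSRep) (a : ℤ) : ee M (2 * a) = M.L a := by
  unfold ee; rw [if_pos (even_two a)]; congr 1; omega

lemma ee_odd (M : NSRep) (a : ℤ) : ee M (2 * a - 1) = M.G a := by
  unfold ee; rw [if_neg (not_even_two a)]; congr 1; omega

lemma parity (j : ℤ) : (∃ a, j = 2 * a) ∨ ∃ a, j = 2 * a - 1 := by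
  rcases Int.even_or_odd' j with ⟨a, h | h⟩
  · exact Or.inl ⟨a, h⟩
  · exact Or.inr ⟨a + 1, by omega⟩

lemma nsys (M : NSRep) {ℓ : ℂ} (hM : M.HasCentralCharge ℓ) : NSys (zz ℓ) (ee M) := by
  intro j k v
  rcases parity j with ⟨a, rfl⟩ | ⟨a, rfl⟩ <;> rcases parity k with ⟨b, rfl⟩ | ⟨b, rfl⟩
  · have hE : eps (2 * a) (2 * b) = 1 := by
      unfold eps; rw [if_neg]; rintro ⟨h, _⟩; exact (Int.not_odd_iff_even.2 (even_two a)) h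
    have hC : cc (2 * a) (2 * b) = (a : ℂ) - b := by
      unfold cc; rw [if_pos (even_two a), if_pos (even_two b)]; push_cast; ring
    have hZ : zz ℓ (2 * a) = ((a : ℂ) ^ 3 - a) / 12 * ℓ := by
      unfold zz; rw [if_pos (even_two a)]; push_cast; ring
    have h := M.rel_LL a b v
    rw [hM, smul_smul, sub_eq_iff_eq_add] at h
    rw [hE, hC, hZ, ← mul_add, ee_even, ee_even, ee_even, h]
    by_cases h0 : a + b = 0
    · rw [if_pos h0, if_pos (by omega)]; module
    · rw [if_neg h0, if_neg (by omega)]; module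
  · have hE : eps (2 * a) (2 * b - 1) = 1 := by
      unfold eps; rw [if_neg]; rintro ⟨h, _⟩; exact (Int.not_odd_iff_even.2 (even_two a)) h
    have hC : cc (2 * a) (2 * b - 1) = ((a : ℂ) - 2 * b + 1) / 2 := by
      unfold cc; rw [if_pos (even_two a), if_neg (not_even_two b)]; push_cast; ring
    have h := M.rel_LG a b v
    rw [sub_eq_iff_eq_add] at h
    rw [hE, hC, show 2 * a + (2 * b - 1) = 2 * (a + b) - 1 by ring, ee_even, ee_odd, ee_odd, h,
      if_neg (by omega)]
    module
  · have hE : eps (2 * a - 1) (2 * b) = 1 := by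
      unfold eps; rw [if_neg]; rintro ⟨_, h⟩; exact (Int.not_odd_iff_even.2 (even_two b)) h
    have hC : cc (2 * a - 1) (2 * b) = -(((b : ℂ) - 2 * a + 1) / 2) := by
      unfold cc; rw [if_neg (not_even_two a), if_pos (even_two b)]; push_cast; ring
    have h := M.rel_LG b a v
    rw [sub_eq_iff_eq_add] at h
    rw [hE, hC, show 2 * a - 1 + 2 * b = 2 * (b + a) - 1 by ring, ee_even, ee_odd, ee_odd, h,
      if_neg (by omega)]
    module
  · have hE : eps (2 * a - 1) (2 * b - 1) = -1 := by
      unfold eps; rw [if_pos]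
      exact ⟨Int.not_even_iff_odd.1 (not_even_two a), Int.not_even_iff_odd.1 (not_even_two b)⟩
    have hC : cc (2 * a - 1) (2 * b - 1) = 2 := by
      unfold cc; rw [if_neg (not_even_two a), if_neg (not_even_two b)]
    have hZ : zz ℓ (2 * a - 1) = ((a : ℂ) ^ 2 - a) / 3 * ℓ := by
      unfold zz; rw [if_neg (not_even_two a)]; push_cast; ring
    have h := M.rel_GG a b v
    rw [hM, smul_smul, ← eq_sub_iff_add_eq] at h
    rw [hE, hC, hZ, show 2 * a - 1 + (2 * b - 1) = 2 * (a + b - 1) by ring, ee_even, ee_odd,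
      ee_odd, h]
    by_cases h0 : a + b = 1
    · rw [if_pos h0, if_pos (by omega)]; module
    · rw [if_neg h0, if_neg (by omega)]; module

lemma inv_of {M : NSRep} {ℓ : ℂ} (hM : M.HasCentralCharge ℓ) {p : Submodule ℂ M.carrier}
    (h : ∀ k, ∀ x ∈ p, ee M k x ∈ p) : M.Invariant p := by
  refine ⟨fun m v hv => ?_, fun j v hv => ?_, fun v hv => ?_⟩
  · rw [← ee_even]; exact h _ v hv
  · rw [← ee_odd]; exact h _ v hv
  · rw [hM]; exact smul_mem _ _ hv

lemma L_mem {S : NSRep} {V : Submodule ℂ S.carrier} (hV : BStab (ee S) V) (i : ℕ) :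
    ∀ v ∈ V, S.L (i : ℤ) v ∈ V := by
  intro v hv; rw [← ee_even]; exact hV _ (by omega) v hv

lemma G_mem {S : NSRep} {V : Submodule ℂ S.carrier} (hV : BStab (ee S) V) (j : ℕ) :
    ∀ v ∈ V, S.G ((j : ℤ) + 1) v ∈ V := by
  intro v hv; rw [← ee_odd]; exact hV _ (by omega) v hv

noncomputable def subB (S : NSRep) (V : Submodule ℂ S.carrier) (hV : BStab (ee S) V) : BRep where
  carrier := V
  L i := (S.L (i : ℤ)).restrict (L_mem hV i)
  G j := (S.G ((j : ℤ) + 1)).restrict (G_mem hV j)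
  rel_LL m n v := by
    apply Subtype.ext
    have h := S.rel_LL m n v
    have h0 : (if (m : ℤ) + n = 0 then (((m : ℤ) : ℂ) ^ 3 - ((m : ℤ) : ℂ)) / 12 else 0) = 0 := by
      split_ifs with h
      · have : m = 0 := by omega
        simp [this]
      · rfl
    rw [h0, zero_smul, add_zero] at h
    simpa using h
  rel_LG m j v := by
    apply Subtype.ext
    have h := S.rel_LG m (j + 1) v
    have h0 : (((m : ℤ) : ℂ) - 2 * (((j : ℤ) + 1 : ℤ) : ℂ) + 1) / 2
        = ((m : ℂ) - 2 * j - 1) / 2 := by push_cast; ring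
    rw [h0, ← add_assoc] at h
    simpa using h
  rel_GG j k v := by
    apply Subtype.ext
    have h := S.rel_GG (j + 1) (k + 1) v
    rw [if_neg (by omega), zero_smul, add_zero,
      show (j : ℤ) + 1 + (k + 1) - 1 = ((j + k + 1 : ℕ) : ℤ) by push_cast; ring] at h
    simpa using h

lemma nsys_prod {A B : Type*} [AddCommGroup A] [Module ℂ A] [AddCommGroup B] [Module ℂ B]
    {z : ℤ → ℂ} {e : ℤ → A →ₗ[ℂ] A} {e' : ℤ → B →ₗ[ℂ] B} (h : NSys z e) (h' : NSys z e') :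
    NSys z (fun k => (e k).prodMap (e' k)) := by
  intro j k v
  ext
  · exact h j k v.1
  · exact h' j k v.2

lemma act_prod {A B : Type*} [AddCommGroup A] [Module ℂ A] [AddCommGroup B] [Module ℂ B]
    {e : ℤ → A →ₗ[ℂ] A} {e' : ℤ → B →ₗ[ℂ] B} (w : List ℕ) (v : A × B) :
    act (fun k => (e k).prodMap (e' k)) w v = (act e w v.1, act e' w v.2) := by
  induction w with
  | nil => rfl
  | cons a w ih => rw [act_cons, ih]; rfl

lemma induced {S : NSRep} {ℓ : ℂ} (hcc : S.HasCentralCharge ℓ)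
    (hsimple : ∀ p : Submodule ℂ S.carrier, (∀ k, ∀ x ∈ p, ee S k x ∈ p) → p = ⊥ ∨ p = ⊤)
    (V : Submodule ℂ S.carrier) (hV : BStab (ee S) V) (hI : Indep (ee S) V) (hne : V ≠ ⊥) :
    IsInduced ℓ (subB S V hV) S V.subtype := by
  classical
  refine ⟨⟨fun _ _ => rfl, fun _ _ => rfl⟩, hcc, ?_⟩
  intro W hW f hf
  obtain ⟨v0, hv0, hv0ne⟩ := Submodule.exists_mem_ne_zero_of_ne_bot hne
  let f' : V →ₗ[ℂ] W.carrier := f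
  set E : ℤ → (S.carrier × W.carrier) →ₗ[ℂ] (S.carrier × W.carrier) :=
    fun k => (ee S k).prodMap (ee W k) with hE
  have hN : NSys (zz ℓ) E := nsys_prod (nsys S hcc) (nsys W hW)
  set Gr : Submodule ℂ (S.carrier × W.carrier) := LinearMap.range (V.subtype.prod f') with hGr
  have hGrmem : ∀ x ∈ Gr, x.1 ∈ V ∧ (x.1 = 0 → x = 0) := by
    rintro _ ⟨v, rfl⟩
    refine ⟨v.2, fun h => ?_⟩
    have : v = 0 := Subtype.ext h
    rw [this, map_zero]
  have hGrS : BStab E Gr := by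
    rintro k hk _ ⟨v, rfl⟩
    refine ⟨⟨ee S k v, hV k hk v v.2⟩, ?_⟩
    refine Prod.ext rfl ?_
    rcases parity k with ⟨a, rfl⟩ | ⟨a, rfl⟩
    · obtain ⟨n, rfl⟩ := Int.eq_ofNat_of_zero_le (show 0 ≤ a by omega)
      have h1 := hf.1 n v
      simp only [hE, LinearMap.prodMap_apply, LinearMap.prod_apply, ee_even]
      exact h1
    · obtain ⟨n, hn⟩ := Int.eq_ofNat_of_zero_le (show 0 ≤ a - 1 by omega)
      obtain rfl : a = (n : ℤ) + 1 := by omega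
      have h1 := hf.2 n v
      simp only [hE, LinearMap.prodMap_apply, LinearMap.prod_apply, ee_odd]
      exact h1
  set Γ := OS E Gr with hΓ
  have hΓinv : ∀ k, ∀ x ∈ Γ, E k x ∈ Γ := fun k x hx => OS_inv hN hGrS k hx
  have hinj : ∀ x ∈ Γ, x.1 = 0 → x = 0 := by
    intro x hx hx1
    obtain ⟨g, h1, h2, h3⟩ := OS_repr hx
    have hg : g.mapRange Prod.fst rfl = 0 := by
      refine hI _ (fun u => (hGrmem _ (h1 u)).1) ?_ ?_
      · intro u hu
        refine h2 u fun h => hu ?_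
        simp [h]
      · rw [Finsupp.sum_mapRange_index (by simp), ← hx1, h3, Finsupp.sum, Finsupp.sum,
          Prod.fst_sum]
        refine Finset.sum_congr rfl fun u _ => ?_
        rw [act_prod]
    have hg0 : g = 0 := by
      ext1 u
      refine (hGrmem _ (h1 u)).2 ?_
      have := DFunLike.congr_fun hg u
      simpa using this
    rw [h3, hg0]; simp
  have hsurj : Γ.map (LinearMap.fst ℂ S.carrier W.carrier) = ⊤ := by
    refine (hsimple _ ?_).resolve_left ?_
    · rintro k _ ⟨x, hx, rfl⟩
      exact ⟨E k x, hΓinv k x hx, rfl⟩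
    · intro h
      have h1 : v0 ∈ Γ.map (LinearMap.fst ℂ S.carrier W.carrier) :=
        ⟨_, le_OS ⟨⟨v0, hv0⟩, rfl⟩, rfl⟩
      rw [h, mem_bot] at h1
      exact hv0ne h1
  let π : Γ →ₗ[ℂ] S.carrier := (LinearMap.fst ℂ S.carrier W.carrier).comp Γ.subtype
  have hπ : Function.Bijective π := by
    constructor
    · rw [← LinearMap.ker_eq_bot, eq_bot_iff]
      intro x hx
      exact Subtype.ext (hinj x x.2 hx)
    · intro s
      obtain ⟨x, hx, hxs⟩ : s ∈ Γ.map (LinearMap.fst ℂ S.carrier W.carrier) := by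
        rw [hsurj]; trivial
      exact ⟨⟨x, hx⟩, hxs⟩
  let Φ := LinearEquiv.ofBijective π hπ
  let F : S.carrier →ₗ[ℂ] W.carrier :=
    ((LinearMap.snd ℂ S.carrier W.carrier).comp Γ.subtype).comp Φ.symm.toLinearMap
  have hF : ∀ x ∈ Γ, F x.1 = x.2 := by
    intro x hx
    have h1 : Φ.symm x.1 = ⟨x, hx⟩ := by
      rw [LinearEquiv.symm_apply_eq]; rfl
    change ((Φ.symm x.1 : Γ) : S.carrier × W.carrier).2 = x.2
    rw [h1]
  have hrep : ∀ s, ∃ x ∈ Γ, x.1 = s := fun s => by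
    obtain ⟨x, hx⟩ := hπ.2 s
    exact ⟨x, x.2, hx⟩
  have hFe : ∀ k s, F (ee S k s) = ee W k (F s) := by
    intro k s
    obtain ⟨x, hx, rfl⟩ := hrep s
    rw [hF x hx]
    exact hF _ (hΓinv k x hx)
  refine ⟨F, ⟨⟨?_, ?_, ?_⟩, ?_⟩, ?_⟩
  · intro m v; rw [← ee_even, ← ee_even]; exact hFe _ v
  · intro m v; rw [← ee_odd, ← ee_odd]; exact hFe _ v
  · intro v; rw [hcc, hW, map_smul]
  · refine LinearMap.ext fun v => ?_
    exact hF _ (le_OS ⟨v, rfl⟩)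
  · rintro F' ⟨⟨hL, hG, _⟩, hF'⟩
    have hFι : F.comp V.subtype = f := LinearMap.ext fun v => hF _ (le_OS ⟨v, rfl⟩)
    have h1 := hsimple (LinearMap.eqLocus F' F) ?_
    · rcases h1 with h1 | h1
      · have : v0 ∈ LinearMap.eqLocus F' F := by
          have h2 := LinearMap.congr_fun (hF'.trans hFι.symm) ⟨v0, hv0⟩
          exact h2
        rw [h1, mem_bot] at this
        exact absurd this hv0ne
      · refine LinearMap.ext fun v => ?_
        have : v ∈ LinearMap.eqLocus F' F := by rw [h1]; trivial
        exact this
    · intro k x hx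
      rw [LinearMap.mem_eqLocus] at hx ⊢
      rw [hFe, ← hx]
      rcases parity k with ⟨a, rfl⟩ | ⟨a, rfl⟩
      · rw [ee_even, ee_even]; exact hL a x
      · rw [ee_odd, ee_odd]; exact hG a x

lemma simple_subB {S : NSRep} {ℓ : ℂ} (hcc : S.HasCentralCharge ℓ)
    (hsimple : ∀ p : Submodule ℂ S.carrier, (∀ k, ∀ x ∈ p, ee S k x ∈ p) → p = ⊥ ∨ p = ⊤)
    (V : Submodule ℂ S.carrier) (hV : BStab (ee S) V) (hI : Indep (ee S) V) (hne : V ≠ ⊥) :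
    (subB S V hV).IsSimple := by
  constructor
  · obtain ⟨v0, hv0, hv0ne⟩ := Submodule.exists_mem_ne_zero_of_ne_bot hne
    exact ⟨(⟨v0, hv0⟩ : V), fun h => hv0ne (congrArg Subtype.val h)⟩
  · intro p hp
    let q : Submodule ℂ V := p
    have hU : BStab (ee S) (q.map V.subtype) := by
      rintro k hk _ ⟨v, hv, rfl⟩
      refine ⟨⟨ee S k v, hV k hk v v.2⟩, ?_, rfl⟩
      rcases parity k with ⟨a, rfl⟩ | ⟨a, rfl⟩
      · obtain ⟨n, rfl⟩ := Int.eq_ofNat_of_zero_le (show 0 ≤ a by omega)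
        have h1 := hp.1 n v hv
        simp only [ee_even]
        exact h1
      · obtain ⟨n, hn⟩ := Int.eq_ofNat_of_zero_le (show 0 ≤ a - 1 by omega)
        obtain rfl : a = (n : ℤ) + 1 := by omega
        have h1 := hp.2 n v hv
        simp only [ee_odd]
        exact h1
    have hUV : q.map V.subtype ≤ V := Submodule.map_subtype_le V q
    rcases hsimple (OS (ee S) (q.map V.subtype))
      (fun k x hx => OS_inv (nsys S hcc) hU k hx) with h | h
    · left
      refine (Submodule.eq_bot_iff _).2 fun v hv => ?_
      have h1 : (V.subtype v) ∈ OS (ee S) (q.map V.subtype) := le_OS ⟨v, hv, rfl⟩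
      rw [h, mem_bot] at h1
      exact Subtype.ext h1
    · right
      refine Submodule.eq_top_iff'.2 fun v => ?_
      obtain ⟨w, hw, hwv⟩ := uniq hI hUV (x := V.subtype v) (Subtype.property v) (by rw [h]; trivial)
      have : w = v := Subtype.ext hwv
      rw [← this]; exact hw

end NSProof

/-- Every simple restricted Neveu–Schwarz module of central charge `ℓ` is
isomorphic either to a simple highest weight module, or to an induced module `Ind_ℓ(V)`
where, for some `t ∈ ℤ_+`, `V` is a simple `b`-module annihilated by `m^{(t)}`
(i.e. `L_i V = 0` for `i > t` and `G_{j-1/2} V = 0` for `j > t`, so `V` is a module over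
`b^{(t)} = b / m^{(t)}`) on which the action of `L_t` is injective.  (Since `IsInduced`
characterizes `Ind_ℓ(V)` up to isomorphism, `S ≅ Ind_ℓ(V)` is expressed by saying that `S`
itself, with a suitable `b`-module map `ι : V → S`, satisfies the universal property.) -/
theorem simple_restricted_classification
    (ℓ : ℂ) (S : NSRep) (hsimple : S.IsSimple) (hres : S.IsRestricted)
    (hcc : S.HasCentralCharge ℓ) :
    S.IsHighestWeight ∨
      ∃ (t : ℕ) (V : BRep) (ι : V.carrier →ₗ[ℂ] S.carrier), 0 < t ∧ V.IsSimple ∧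
        Function.Injective (V.L t) ∧
        (∀ i : ℕ, t < i → ∀ v : V.carrier, V.L i v = 0) ∧
        (∀ j : ℕ, t ≤ j → ∀ v : V.carrier, V.G j v = 0) ∧
        IsInduced ℓ V S ι := by
  classical
  have hN := NSProof.nsys S hcc
  have hs : ∀ p : Submodule ℂ S.carrier, (∀ k, ∀ x ∈ p, NSProof.ee S k x ∈ p) → p = ⊥ ∨ p = ⊤ :=
    fun p hp => hsimple.2 p (NSProof.inv_of hcc hp)
  have hex : ∃ t : ℕ, NSProof.VT (NSProof.ee S) (2 * (t : ℤ)) ≠ ⊥ := by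
    obtain ⟨v, hv⟩ := hsimple.1
    obtain ⟨N, hNv⟩ := hres v
    refine ⟨N.toNat, (Submodule.ne_bot_iff _).2 ⟨v, ?_, hv⟩⟩
    intro k hk
    rcases NSProof.parity k with ⟨a, rfl⟩ | ⟨a, rfl⟩
    · rw [NSProof.ee_even]; exact (hNv a (by omega)).1
    · rw [NSProof.ee_odd]; exact (hNv a (by omega)).2
  have hspec := Nat.find_spec hex
  have hmin := fun m => @Nat.find_min _ _ hex m
  generalize Nat.find hex = t at hspec hmin
  rcases Nat.eq_zero_or_pos t with rfl | ht
  · left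
    rw [Nat.cast_zero, mul_zero] at hspec
    obtain ⟨v, hv, hne, h, hh⟩ := NSProof.case_zero hN hs hspec
    refine ⟨v, h, ℓ, hne, ?_, hcc v, ?_, ?_, ?_⟩
    · rw [← NSProof.ee_even, mul_zero]; exact hh
    · intro n hn; rw [← NSProof.ee_even]; exact hv _ (by omega)
    · intro n hn; rw [← NSProof.ee_odd]; exact hv _ (by omega)
    · intro p hp hvp
      refine (hsimple.2 p hp).resolve_left ?_
      rintro rfl
      exact hne ((Submodule.mem_bot ℂ).1 hvp)
  · right
    have hT : (0 : ℤ) < 2 * t := by omega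
    have hTe : Even (2 * (t : ℤ)) := even_two_mul _
    have hbot : NSProof.VT (NSProof.ee S) (2 * (t : ℤ) - 2) = ⊥ := by
      have := hmin (t - 1) (by omega)
      rw [not_not] at this
      rwa [show 2 * (t : ℤ) - 2 = 2 * ((t - 1 : ℕ) : ℤ) by omega]
    have hV := NSProof.VT_stab hN hT.le
    have hI := NSProof.indep_VT hN hT hTe hbot
    refine ⟨t, NSProof.subB S _ hV, (NSProof.VT (NSProof.ee S) (2 * (t : ℤ))).subtype, ht,
      NSProof.simple_subB hcc hs _ hV hI hspec, ?_, ?_, ?_, NSProof.induced hcc hs _ hV hI hspec⟩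
    · refine (injective_iff_map_eq_zero _).2 fun v hv => ?_
      refine Subtype.ext (NSProof.inj_VT hN hT hTe hbot (Subtype.property v) ?_)
      rw [NSProof.ee_even]
      exact congrArg Subtype.val hv
    · intro i hi v
      refine Subtype.ext ?_
      have h1 := Subtype.property v (2 * (i : ℤ)) (by omega)
      rw [NSProof.ee_even] at h1
      exact h1
    · intro j hj v
      refine Subtype.ext ?_
      have h1 := Subtype.property v (2 * ((j : ℤ) + 1) - 1) (by omega)
      rw [NSProof.ee_odd] at h1
      exact h1
end
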